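/- Assume Δ>0, hypotheses (H2)–(H3), and let P_0 be a discrete distribution with finite support as described. Let λ∈(0,1/9), let ρ_n=Θ(n^{-λ}), and let α_n := γρ_n|ln ρ_n| with γ>0 fixed. Then lim_{n→∞} I(X*;Y|Φ)/m_n = min_{1≤k≤K+1} { I_{P_out}(E[X²·1{|X|≥v_k}], E[X²]) + ℙ(|X|≥v_k)/γ }, where X∼P_0 and the term k=K+1 reads I_{P_out}(0,E[X²]). -/

import Mathlib

open MeasureTheory ProbabilityTheory Real

noncomputable section

namespace GLM

/-- Standard Gaussian measure on ℝ. -/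
def stdG : Measure ℝ := gaussianReal 0 1

/-- `n` i.i.d. copies of a measure on ℝ. -/
def iid (n : ℕ) (μ : Measure ℝ) : Measure (Fin n → ℝ) := Measure.pi fun _ => μ

/-- The sparse prior `(1-ρ)δ₀ + ρ P₀`. -/
def sparsePrior (ρ : ℝ) (P0 : Measure ℝ) : Measure ℝ :=
  ENNReal.ofReal (1 - ρ) • Measure.dirac 0 + ENNReal.ofReal ρ • P0

/-- Second moment of a real measure. -/
def secondMoment (P : Measure ℝ) : ℝ := ∫ x, x ^ 2 ∂P

/-- The transition density `P_out(y|x)`. -/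
def Pout (Δ : ℝ) {kA : ℕ} (PA : Measure (Fin kA → ℝ)) (φ : ℝ → (Fin kA → ℝ) → ℝ)
    (y x : ℝ) : ℝ :=
  (Real.sqrt (2 * π * Δ))⁻¹ * ∫ a, Real.exp (-(y - φ x a) ^ 2 / (2 * Δ)) ∂PA

/-- Scalar channel mutual information `I_{P_out}(q, ρ')`. -/
def IPout (Δ : ℝ) {kA : ℕ} (PA : Measure (Fin kA → ℝ)) (φ : ℝ → (Fin kA → ℝ) → ℝ)
    (q ρ' : ℝ) : ℝ :=
  (∫ v, ∫ a, ∫ z,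
      Real.log (Pout Δ PA φ (φ (Real.sqrt ρ' * v) a + Real.sqrt Δ * z) (Real.sqrt ρ' * v))
      ∂stdG ∂PA ∂stdG)
  - ∫ v, ∫ w, ∫ a, ∫ z,
      Real.log (∫ w', Pout Δ PA φ
        (φ (Real.sqrt q * v + Real.sqrt (ρ' - q) * w) a + Real.sqrt Δ * z)
        (Real.sqrt q * v + Real.sqrt (ρ' - q) * w') ∂stdG) ∂stdG ∂PA ∂stdG ∂stdG

/-- `ψ_P(r)` for the scalar additive Gaussian channel with prior `P`. -/
def psiP (P : Measure ℝ) (r : ℝ) : ℝ :=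
  ∫ xs, ∫ z, Real.log (∫ x, Real.exp (r * xs * x + Real.sqrt r * z * x - r * x ^ 2 / 2) ∂P)
    ∂stdG ∂P

/-- `I_{P_{0,n}}(r)`. -/
def IP0 (ρ : ℝ) (P0 : Measure ℝ) (r : ℝ) : ℝ :=
  r * ρ * secondMoment P0 / 2 - psiP (sparsePrior ρ P0) r

/-- Replica symmetric potential. -/
def iRS (Δ : ℝ) {kA : ℕ} (PA : Measure (Fin kA → ℝ)) (φ : ℝ → (Fin kA → ℝ) → ℝ)
    (P0 : Measure ℝ) (α ρ q r : ℝ) : ℝ :=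
  (1 / α) * IP0 ρ P0 (α / ρ * r) + IPout Δ PA φ q (secondMoment P0)
    - r * (secondMoment P0 - q) / 2

/-- density of the observations given signal and matrix. -/
def pCond (Δ : ℝ) {kA : ℕ} (PA : Measure (Fin kA → ℝ)) (φ : ℝ → (Fin kA → ℝ) → ℝ)
    (n m : ℕ) (kn : ℝ) (Φ : Fin m → Fin n → ℝ) (x : Fin n → ℝ) (y : Fin m → ℝ) : ℝ :=
  ∏ μ, Pout Δ PA φ (y μ) ((∑ i, Φ μ i * x i) / Real.sqrt kn)

/-- marginal density of the observations given the matrix. -/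
def pMarg (Δ : ℝ) {kA : ℕ} (PA : Measure (Fin kA → ℝ)) (φ : ℝ → (Fin kA → ℝ) → ℝ)
    (n m : ℕ) (P : Measure ℝ) (kn : ℝ) (Φ : Fin m → Fin n → ℝ) (y : Fin m → ℝ) : ℝ :=
  ∫ x, pCond Δ PA φ n m kn Φ x y ∂(iid n P)

/-- The observations `Y`. -/
def Yobs (Δ : ℝ) {kA : ℕ} (φ : ℝ → (Fin kA → ℝ) → ℝ) (n m : ℕ) (kn : ℝ)
    (Φ : Fin m → Fin n → ℝ) (x : Fin n → ℝ) (a : Fin m → Fin kA → ℝ) (z : Fin m → ℝ) :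
    Fin m → ℝ :=
  fun μ => φ ((∑ i, Φ μ i * x i) / Real.sqrt kn) (a μ) + Real.sqrt Δ * z μ

/-- The conditional mutual information `I(X*;Y|Φ)`. -/
def MI (Δ : ℝ) {kA : ℕ} (PA : Measure (Fin kA → ℝ)) (φ : ℝ → (Fin kA → ℝ) → ℝ)
    (P0 : Measure ℝ) (ρ : ℝ) (n m : ℕ) : ℝ :=
  ∫ x, ∫ Φ, ∫ a, ∫ z,
    Real.log (pCond Δ PA φ n m (n * ρ) Φ x (Yobs Δ φ n m (n * ρ) Φ x a z)
      / pMarg Δ PA φ n m (sparsePrior ρ P0) (n * ρ) Φ (Yobs Δ φ n m (n * ρ) Φ x a z))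
    ∂(iid m stdG) ∂(Measure.pi fun _ : Fin m => PA) ∂(Measure.pi fun _ : Fin m => iid n stdG)
    ∂(iid n (sparsePrior ρ P0))

/-- The truncated second moment `E[X^2 * 1(|X| >= v)]`. -/
def truncSMge (P : Measure ℝ) (v : ℝ) : ℝ := ∫ x, if v ≤ |x| then x ^ 2 else 0 ∂P

/-- The tail probability `P(|X| >= v)`. -/
def tailProb (P : Measure ℝ) (v : ℝ) : ℝ := (P {x | v ≤ |x|}).toReal

/-- The part of hypothesis (H2) that the proof uses. -/
structure Regular (Δ : ℝ) {kA : ℕ} (φ : ℝ → (Fin kA → ℝ) → ℝ) (B : ℝ) : Prop where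
  pos : 0 < Δ
  meas : Measurable fun p : ℝ × (Fin kA → ℝ) => φ p.1 p.2
  bound : ∀ x a, |φ x a| ≤ B
  cont : ∀ a, Continuous fun x => φ x a

/-- The joint law of the channel randomness `(A, Z)`. -/
def noise {kA : ℕ} (PA : Measure (Fin kA → ℝ)) : Measure ((Fin kA → ℝ) × ℝ) := PA.prod stdG

/-- The channel output for input `s` and randomness `e = (a, z)`. -/
def out (Δ : ℝ) {kA : ℕ} (φ : ℝ → (Fin kA → ℝ) → ℝ) (s : ℝ) (e : (Fin kA → ℝ) × ℝ) : ℝ :=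
  φ s e.1 + √Δ * e.2

/-- The transition density from `u` when the input is `u + √τ w` with `w` standard Gaussian. -/
def smoothPout (Δ : ℝ) {kA : ℕ} (PA : Measure (Fin kA → ℝ)) (φ : ℝ → (Fin kA → ℝ) → ℝ)
    (y u τ : ℝ) : ℝ :=
  ∫ w, Pout Δ PA φ y (u + √τ * w) ∂stdG

/-- A constant with `|log Pout| ≤ logBound + z ^ 2` at outputs with Gaussian noise `z`. -/
def logBound (Δ B : ℝ) : ℝ := |log (√(2 * π * Δ))⁻¹| + 4 * B ^ 2 / Δ

instance : IsProbabilityMeasure stdG := by unfold stdG; infer_instance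

instance (n : ℕ) (μ : Measure ℝ) [IsProbabilityMeasure μ] : IsProbabilityMeasure (iid n μ) := by
  unfold iid; infer_instance

lemma smoothPout_zero {Δ : ℝ} {kA : ℕ} {PA : Measure (Fin kA → ℝ)}
    {φ : ℝ → (Fin kA → ℝ) → ℝ} (y u : ℝ) : smoothPout Δ PA φ y u 0 = Pout Δ PA φ y u := by
  simp [smoothPout]

section
variable {Δ : ℝ} {kA : ℕ} {PA : Measure (Fin kA → ℝ)} [IsProbabilityMeasure PA]
  {φ : ℝ → (Fin kA → ℝ) → ℝ} {B : ℝ}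

instance : IsProbabilityMeasure (noise PA) := by unfold noise; infer_instance

lemma Regular.measurable_section (h : Regular Δ φ B) (x : ℝ) : Measurable (φ x) :=
  h.meas.comp measurable_prodMk_left

lemma Regular.measurable_out (h : Regular Δ φ B) :
    Measurable fun p : ℝ × ((Fin kA → ℝ) × ℝ) => out Δ φ p.1 p.2 := by
  unfold out
  exact (h.meas.comp (measurable_fst.prodMk (measurable_fst.comp measurable_snd))).add
    ((measurable_snd.comp measurable_snd).const_mul _)

lemma Regular.abs_out_sub_le (h : Regular Δ φ B) (s : ℝ) (e : (Fin kA → ℝ) × ℝ) :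
    |out Δ φ s e - √Δ * e.2| ≤ B := by
  simpa [out] using h.bound s e.1

lemma exp_neg_sq_div_le_one (h : Regular Δ φ B) (y x : ℝ) (a : Fin kA → ℝ) :
    exp (-(y - φ x a) ^ 2 / (2 * Δ)) ≤ 1 := by
  have := h.pos
  rw [exp_le_one_iff]
  apply div_nonpos_of_nonpos_of_nonneg <;> nlinarith [sq_nonneg (y - φ x a)]

lemma Regular.integrable_exp (h : Regular Δ φ B) (y x : ℝ) :
    Integrable (fun a => exp (-(y - φ x a) ^ 2 / (2 * Δ))) PA := by
  refine Integrable.of_bound (C := 1) ?_ (.of_forall fun a => ?_)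
  · have := h.measurable_section x
    fun_prop
  · rw [Real.norm_eq_abs, abs_of_pos (exp_pos _)]; exact exp_neg_sq_div_le_one h y x a

lemma Regular.const_pos (h : Regular Δ φ B) : 0 < (√(2 * π * Δ))⁻¹ := by
  have := h.pos
  positivity

lemma Regular.continuous_Pout (h : Regular Δ φ B) :
    Continuous fun p : ℝ × ℝ => Pout Δ PA φ p.1 p.2 := by
  unfold Pout
  refine continuous_const.mul (continuous_of_dominated (bound := fun _ => 1) ?_ ?_ ?_ ?_)
  · intro p
    exact (h.integrable_exp p.1 p.2).aestronglyMeasurable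
  · intro p
    refine .of_forall fun a => ?_
    rw [Real.norm_eq_abs, abs_of_pos (exp_pos _)]; exact exp_neg_sq_div_le_one h _ _ a
  · exact integrable_const _
  · refine .of_forall fun a => ?_
    have := h.cont a
    fun_prop

lemma Regular.Pout_le (h : Regular Δ φ B) (y x : ℝ) : Pout Δ PA φ y x ≤ (√(2 * π * Δ))⁻¹ := by
  unfold Pout
  have : ∫ a, exp (-(y - φ x a) ^ 2 / (2 * Δ)) ∂PA ≤ ∫ _, (1 : ℝ) ∂PA :=
    integral_mono (h.integrable_exp y x) (integrable_const _) fun a =>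
      exp_neg_sq_div_le_one h y x a
  simp only [integral_const, probReal_univ, smul_eq_mul, mul_one] at this
  exact mul_le_of_le_one_right h.const_pos.le this

lemma Regular.le_Pout (h : Regular Δ φ B) {y z : ℝ} (hy : |y - √Δ * z| ≤ B) (x : ℝ) :
    (√(2 * π * Δ))⁻¹ * exp (-(4 * B ^ 2 / Δ) - z ^ 2) ≤ Pout Δ PA φ y x := by
  unfold Pout
  refine mul_le_mul_of_nonneg_left ?_ h.const_pos.le
  have : ∫ _, exp (-(4 * B ^ 2 / Δ) - z ^ 2) ∂PA ≤ ∫ a, exp (-(y - φ x a) ^ 2 / (2 * Δ)) ∂PA := by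
    refine integral_mono (integrable_const _) (h.integrable_exp y x) fun a => ?_
    have hΔ := h.pos
    have hb := h.bound x a
    refine exp_le_exp.2 ?_
    have h1 : (y - φ x a) ^ 2 ≤ 8 * B ^ 2 + 2 * Δ * z ^ 2 := by
      have h2 : (y - √Δ * z - φ x a) ^ 2 ≤ 4 * B ^ 2 := by
        have := (abs_sub (y - √Δ * z) (φ x a)).trans (add_le_add hy hb)
        have := sq_le_sq' (by linarith [neg_abs_le (y - √Δ * z - φ x a)])
          ((le_abs_self _).trans this)
        linarith
      have h3 : (√Δ * z) ^ 2 = Δ * z ^ 2 := by rw [mul_pow, sq_sqrt hΔ.le]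
      nlinarith [sq_nonneg (y - √Δ * z - φ x a - √Δ * z)]
    rw [neg_div, ← neg_add', neg_le_neg_iff, div_add' _ _ _ hΔ.ne', div_le_div_iff₀ (by positivity) hΔ]
    nlinarith
  simpa using this

lemma Regular.Pout_pos (h : Regular Δ φ B) (y x : ℝ) : 0 < Pout Δ PA φ y x := by
  refine lt_of_lt_of_le ?_ (h.le_Pout (y := y) (z := y / √Δ) ?_ x)
  · exact mul_pos h.const_pos (exp_pos _)
  · have := sqrt_pos.2 h.pos
    rw [mul_div_cancel₀ _ this.ne', sub_self, abs_zero]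
    exact (abs_nonneg _).trans (h.bound x 0)

lemma Regular.lintegral_out (h : Regular Δ φ B) (s : ℝ) {f : ℝ → ENNReal} (hf : Measurable f) :
    ∫⁻ e, f (out Δ φ s e) ∂(noise PA) = ∫⁻ y, f y * ENNReal.ofReal (Pout Δ PA φ y s) := by
  have hΔ := h.pos
  have hΔ' : Δ.toNNReal ≠ 0 := by simpa using hΔ
  have key (a : Fin kA → ℝ) : ∫⁻ z, f (φ s a + √Δ * z) ∂stdG
      = ∫⁻ y, ENNReal.ofReal ((√(2 * π * Δ))⁻¹ * exp (-(y - φ s a) ^ 2 / (2 * Δ))) * f y := by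
    have e1 : (stdG.map (fun z => √Δ * z)).map (fun z => φ s a + z)
        = gaussianReal (φ s a) Δ.toNNReal := by
      rw [stdG, gaussianReal_map_const_mul, gaussianReal_map_const_add]
      congr 1
      · simp
      · ext; simp [sq_sqrt hΔ.le, hΔ.le]
    rw [Measure.map_map (by fun_prop) (by fun_prop)] at e1
    have e2 := lintegral_map (μ := stdG) hf
      (show Measurable ((fun z => φ s a + z) ∘ fun z => √Δ * z) by fun_prop)
    rw [e1, gaussianReal_of_var_ne_zero _ hΔ',
      lintegral_withDensity_eq_lintegral_mul _ (measurable_gaussianPDF _ _) hf] at e2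
    simp only [Function.comp_apply] at e2
    rw [← e2]
    simp only [Pi.mul_apply, gaussianPDF, gaussianPDFReal, Real.coe_toNNReal _ hΔ.le]
  unfold noise
  rw [lintegral_prod]
  · simp only [out, key]
    rw [lintegral_lintegral_swap]
    · refine lintegral_congr fun y => ?_
      have := h.measurable_section s
      rw [lintegral_mul_const _ (by fun_prop), mul_comm, Pout,
        ← integral_const_mul, ofReal_integral_eq_lintegral_ofReal]
      · exact (h.integrable_exp y s).const_mul _
      · exact .of_forall fun a => mul_nonneg h.const_pos.le (exp_pos _).le
    · have : Measurable fun p : (Fin kA → ℝ) × ℝ => φ s p.1 :=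
        (h.measurable_section s).comp measurable_fst
      refine Measurable.aemeasurable ?_
      simp only [Function.uncurry_def]
      refine (ENNReal.measurable_ofReal.comp (measurable_const.mul (measurable_exp.comp
        (((measurable_snd.sub this).pow_const 2).neg.div_const _)))).mul (hf.comp measurable_snd)
  · exact (hf.comp (h.measurable_out.comp measurable_prodMk_left)).aemeasurable

lemma Regular.integrable_Pout_affine (h : Regular Δ φ B) (y u τ : ℝ) :
    Integrable (fun w => Pout Δ PA φ y (u + √τ * w)) stdG := by
  refine Integrable.of_bound (C := (√(2 * π * Δ))⁻¹) ?_ (.of_forall fun a => ?_)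
  · have := h.continuous_Pout (PA := PA)
    exact (this.comp (continuous_const.prodMk (by fun_prop))).aestronglyMeasurable
  · rw [Real.norm_eq_abs, abs_of_pos (h.Pout_pos _ _)]; exact h.Pout_le _ _

lemma Regular.continuous_smoothPout (h : Regular Δ φ B) :
    Continuous fun p : ℝ × ℝ × ℝ => smoothPout Δ PA φ p.1 p.2.1 p.2.2 := by
  unfold smoothPout
  refine continuous_of_dominated (bound := fun _ => (√(2 * π * Δ))⁻¹) ?_ ?_ ?_ ?_
  · intro p
    exact (h.integrable_Pout_affine _ _ _).aestronglyMeasurable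
  · intro p
    refine .of_forall fun a => ?_
    rw [Real.norm_eq_abs, abs_of_pos (h.Pout_pos _ _)]; exact h.Pout_le _ _
  · exact integrable_const _
  · refine .of_forall fun a => ?_
    exact h.continuous_Pout.comp (continuous_fst.prodMk (by fun_prop))

lemma Regular.smoothPout_le (h : Regular Δ φ B) (y u τ : ℝ) :
    smoothPout Δ PA φ y u τ ≤ (√(2 * π * Δ))⁻¹ := by
  simpa [smoothPout] using integral_mono (h.integrable_Pout_affine (PA := PA) y u τ) (integrable_const _)
    fun w => h.Pout_le y (u + √τ * w)

lemma Regular.le_smoothPout (h : Regular Δ φ B) {y z : ℝ} (hy : |y - √Δ * z| ≤ B) (u τ : ℝ) :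
    (√(2 * π * Δ))⁻¹ * exp (-(4 * B ^ 2 / Δ) - z ^ 2) ≤ smoothPout Δ PA φ y u τ := by
  simpa [smoothPout] using integral_mono (integrable_const _) (h.integrable_Pout_affine (PA := PA) y u τ)
    fun w => h.le_Pout hy (u + √τ * w)

lemma Regular.smoothPout_pos (h : Regular Δ φ B) (y u τ : ℝ) : 0 < smoothPout Δ PA φ y u τ := by
  refine lt_of_lt_of_le ?_ (h.le_smoothPout (y := y) (z := y / √Δ) ?_ u τ)
  · exact mul_pos h.const_pos (exp_pos _)
  · have := sqrt_pos.2 h.pos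
    rw [mul_div_cancel₀ _ this.ne', sub_self, abs_zero]
    exact (abs_nonneg _).trans (h.bound u 0)

lemma abs_log_le_of_bounds {c b t z : ℝ} (hc : 0 < c) (hb : 0 ≤ b) (h1 : t ≤ c)
    (h2 : c * exp (-b - z ^ 2) ≤ t) : |log t| ≤ |log c| + b + z ^ 2 := by
  have ht : 0 < t := lt_of_lt_of_le (by positivity) h2
  have h3 := log_le_log (by positivity) h2
  rw [log_mul hc.ne' (exp_pos _).ne', log_exp] at h3
  have h4 := log_le_log ht h1
  rw [abs_le]
  constructor <;> nlinarith [neg_abs_le (log c), le_abs_self (log c), sq_nonneg z]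

lemma Regular.abs_log_smoothPout_le (h : Regular Δ φ B) {y z : ℝ} (hy : |y - √Δ * z| ≤ B)
    (u τ : ℝ) : |log (smoothPout Δ PA φ y u τ)| ≤ logBound Δ B + z ^ 2 :=
  abs_log_le_of_bounds h.const_pos (by have := h.pos; positivity) (h.smoothPout_le _ _ _)
    (h.le_smoothPout hy u τ)

lemma Regular.log_smoothPout_le (h : Regular Δ φ B) (y u τ : ℝ) :
    log (smoothPout Δ PA φ y u τ) ≤ logBound Δ B := by
  have := log_le_log (h.smoothPout_pos (PA := PA) y u τ) (h.smoothPout_le y u τ)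
  have h2 : 0 ≤ 4 * B ^ 2 / Δ := by have := h.pos; positivity
  unfold logBound
  linarith [le_abs_self (log (√(2 * π * Δ))⁻¹)]

lemma Regular.lintegral_ofReal_Pout (h : Regular Δ φ B) (s : ℝ) :
    ∫⁻ y, ENNReal.ofReal (Pout Δ PA φ y s) = 1 := by
  have := h.lintegral_out (PA := PA) s (f := fun _ => 1) measurable_const
  simpa using this.symm

end

/-- The Gaussian law of `√q w`. -/
def gauss (q : ℝ) : Measure ℝ := stdG.map fun w => √q * w

instance (q : ℝ) : IsProbabilityMeasure (gauss q) :=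
  Measure.isProbabilityMeasure_map (by fun_prop)

lemma gauss_eq (q : ℝ) : gauss q = gaussianReal 0 q.toNNReal := by
  rw [gauss, stdG, gaussianReal_map_const_mul]
  congr 1
  · simp
  · ext
    rcases le_total 0 q with h | h
    · simp [sq_sqrt h, h]
    · simp [sqrt_eq_zero_of_nonpos h, h]

lemma gauss_conv {q τ : ℝ} (hq : 0 ≤ q) (hτ : 0 ≤ τ) : gauss q ∗ gauss τ = gauss (q + τ) := by
  simp only [gauss_eq, gaussianReal_conv_gaussianReal, add_zero]
  rw [Real.toNNReal_add hq hτ]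

lemma map_piecewise_iid (n : ℕ) (μ : Measure ℝ) [IsProbabilityMeasure μ] (S : Finset (Fin n)) :
    ((iid n μ).prod (iid n μ)).map (fun p => S.piecewise p.1 p.2) = iid n μ := by
  have hm : Measurable fun p : (Fin n → ℝ) × (Fin n → ℝ) => S.piecewise p.1 p.2 := by
    refine measurable_pi_lambda _ fun i => ?_
    by_cases h : i ∈ S
    · simp only [Finset.piecewise_eq_of_mem _ _ _ h]; fun_prop
    · simp only [Finset.piecewise_eq_of_notMem _ _ _ h]; fun_prop
  refine (Measure.pi_eq fun s hs => ?_).symm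
  rw [Measure.map_apply hm (MeasurableSet.univ_pi hs)]
  have : (fun p : (Fin n → ℝ) × (Fin n → ℝ) => S.piecewise p.1 p.2) ⁻¹' Set.univ.pi s
      = (Set.univ.pi fun i => if i ∈ S then s i else Set.univ) ×ˢ
        (Set.univ.pi fun i => if i ∈ S then Set.univ else s i) := by
    ext p
    simp only [Set.mem_preimage, Set.mem_univ_pi, Set.mem_prod, ← forall_and]
    refine forall_congr' fun i => ?_
    by_cases h : i ∈ S <;> simp [h]
  rw [this, Measure.prod_prod, iid, Measure.pi_pi, Measure.pi_pi, ← Finset.prod_mul_distrib]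
  refine Finset.prod_congr rfl fun i _ => ?_
  by_cases h : i ∈ S <;> simp [h]

lemma measurable_piecewise_prod {n : ℕ} (S : Finset (Fin n)) :
    Measurable fun p : (Fin n → ℝ) × (Fin n → ℝ) => S.piecewise p.1 p.2 := by
  refine measurable_pi_lambda _ fun i => ?_
  by_cases h : i ∈ S
  · simp only [Finset.piecewise_eq_of_mem _ _ _ h]; fun_prop
  · simp only [Finset.piecewise_eq_of_notMem _ _ _ h]; fun_prop

lemma lintegral_resample {n : ℕ} {μ : Measure ℝ} [IsProbabilityMeasure μ] (S : Finset (Fin n))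
    {f : (Fin n → ℝ) → ENNReal} (hf : Measurable f) :
    ∫⁻ r, f r ∂(iid n μ) = ∫⁻ r, ∫⁻ r', f (S.piecewise r r') ∂(iid n μ) ∂(iid n μ) := by
  conv_lhs => rw [← map_piecewise_iid n μ S]
  rw [lintegral_map hf (measurable_piecewise_prod S),
    lintegral_prod (fun p => f (S.piecewise p.1 p.2))
      (hf.comp (measurable_piecewise_prod S)).aemeasurable]

/-- The linear form with coefficients `c`. -/
def lin {n : ℕ} (c r : Fin n → ℝ) : ℝ := ∑ i, c i * r i

lemma measurable_lin {n : ℕ} (c : Fin n → ℝ) : Measurable (lin c) := by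
  unfold lin; fun_prop

lemma lin_add {n : ℕ} (c d r : Fin n → ℝ) : lin (c + d) r = lin c r + lin d r := by
  simp [lin, add_mul, Finset.sum_add_distrib]

lemma lin_piecewise_left {n : ℕ} {S : Finset (Fin n)} {c : Fin n → ℝ} (hc : ∀ i ∉ S, c i = 0)
    (r r' : Fin n → ℝ) : lin c (S.piecewise r r') = lin c r := by
  refine Finset.sum_congr rfl fun i _ => ?_
  by_cases h : i ∈ S <;> simp [h, hc]

lemma lin_piecewise_right {n : ℕ} {S : Finset (Fin n)} {c : Fin n → ℝ} (hc : ∀ i ∈ S, c i = 0)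
    (r r' : Fin n → ℝ) : lin c (S.piecewise r r') = lin c r' := by
  refine Finset.sum_congr rfl fun i _ => ?_
  by_cases h : i ∈ S <;> simp [h, hc]

lemma map_lin_pair_of_disjoint {n : ℕ} (S : Finset (Fin n)) {c d : Fin n → ℝ}
    (hc : ∀ i ∉ S, c i = 0) (hd : ∀ i ∈ S, d i = 0) :
    (iid n stdG).map (fun r => (lin c r, lin d r))
      = ((iid n stdG).map (lin c)).prod ((iid n stdG).map (lin d)) := by
  conv_lhs => rw [← map_piecewise_iid n stdG S]
  rw [Measure.map_map ((measurable_lin c).prodMk (measurable_lin d)) (measurable_piecewise_prod S),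
    Measure.map_prod_map _ _ (measurable_lin c) (measurable_lin d)]
  congr 1
  ext p <;> simp [lin_piecewise_left hc, lin_piecewise_right hd]

lemma map_lin (n : ℕ) (c : Fin n → ℝ) : (iid n stdG).map (lin c) = gauss (∑ i, c i ^ 2) := by
  suffices h : ∀ s : Finset (Fin n), (iid n stdG).map (lin fun i => if i ∈ s then c i else 0)
      = gauss (∑ i ∈ s, c i ^ 2) by simpa using h Finset.univ
  intro s
  induction s using Finset.induction_on with
  | empty =>
    have : lin (fun i : Fin n => if i ∈ (∅ : Finset (Fin n)) then c i else 0) = fun _ => 0 := by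
      ext r; simp [lin]
    rw [this, Measure.map_const]
    simp [gauss]
  | insert j s hj ih =>
    have e1 : (fun i => if i ∈ insert j s then c i else 0)
        = (fun i => if i ∈ s then c i else 0) + Pi.single j (c j) := by
      ext i
      by_cases h : i = j
      · subst h; simp [hj]
      · simp [h]
    have e2 : (iid n stdG).map (lin (Pi.single j (c j))) = gauss (c j ^ 2) := by
      have : lin (Pi.single j (c j)) = (fun x => c j * x) ∘ fun r : Fin n → ℝ => r j := by
        ext r; simp [lin, Pi.single_apply]
      have hev : (iid n stdG).map (fun r : Fin n → ℝ => r j) = stdG :=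
        (measurePreserving_eval (fun _ : Fin n => stdG) j).map_eq
      rw [this, ← Measure.map_map (by fun_prop) (by fun_prop), hev, gauss_eq, stdG,
        gaussianReal_map_const_mul]
      congr 1
      · simp
      · ext; simp [sq_nonneg]
    have e3 : lin ((fun i => if i ∈ s then c i else 0) + Pi.single j (c j))
        = (fun p : ℝ × ℝ => p.1 + p.2) ∘ fun r =>
          (lin (fun i => if i ∈ s then c i else 0) r, lin (Pi.single j (c j)) r) := by
      ext r; simp [lin_add]
    rw [e1, e3, ← Measure.map_map (by fun_prop)
      ((measurable_lin _).prodMk (measurable_lin _)), map_lin_pair_of_disjoint s, ih, e2,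
      Finset.sum_insert hj, add_comm (c j ^ 2), ← gauss_conv (Finset.sum_nonneg fun i _ => sq_nonneg _)
        (sq_nonneg _)]
    · rfl
    · intro i hi; simp [hi]
    · intro i hi
      have : i ≠ j := fun h => hj (h ▸ hi)
      simp [this]

section
variable {Δ : ℝ} {kA : ℕ} {PA : Measure (Fin kA → ℝ)} [IsProbabilityMeasure PA]
  {φ : ℝ → (Fin kA → ℝ) → ℝ} {B : ℝ}

lemma Regular.measurable_ofReal_Pout (h : Regular Δ φ B) {α : Type*} [MeasurableSpace α]
    {f g : α → ℝ} (hf : Measurable f) (hg : Measurable g) :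
    Measurable fun a => ENNReal.ofReal (Pout Δ PA φ (f a) (g a)) := by
  have h1 := (h.continuous_Pout (PA := PA)).measurable.comp (hf.prodMk hg)
  exact ENNReal.measurable_ofReal.comp h1

lemma Regular.measurable_smoothPout (h : Regular Δ φ B) {α : Type*} [MeasurableSpace α]
    {f g k : α → ℝ} (hf : Measurable f) (hg : Measurable g) (hk : Measurable k) :
    Measurable fun a => smoothPout Δ PA φ (f a) (g a) (k a) := by
  have h1 := (h.continuous_smoothPout (PA := PA)).measurable.comp (hf.prodMk (hg.prodMk hk))
  exact h1

lemma Regular.ofReal_smoothPout (h : Regular Δ φ B) (y u τ : ℝ) :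
    ENNReal.ofReal (smoothPout Δ PA φ y u τ)
      = ∫⁻ t, ENNReal.ofReal (Pout Δ PA φ y (u + t)) ∂(gauss τ) := by
  have hm : Measurable fun t => ENNReal.ofReal (Pout Δ PA φ y (u + t)) :=
    h.measurable_ofReal_Pout measurable_const (by fun_prop)
  rw [gauss, lintegral_map hm (by fun_prop), smoothPout,
    ofReal_integral_eq_lintegral_ofReal (h.integrable_Pout_affine y u τ)
      (.of_forall fun w => (h.Pout_pos _ _).le)]

lemma Regular.lintegral_smoothPout_gauss (h : Regular Δ φ B) (y u : ℝ) {τ δ : ℝ} (hτ : 0 ≤ τ)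
    (hδ : 0 ≤ δ) : ∫⁻ t, ENNReal.ofReal (smoothPout Δ PA φ y (u + t) τ) ∂(gauss δ)
      = ENNReal.ofReal (smoothPout Δ PA φ y u (δ + τ)) := by
  have hm : Measurable fun t => ENNReal.ofReal (Pout Δ PA φ y (u + t)) :=
    h.measurable_ofReal_Pout measurable_const (by fun_prop)
  simp only [h.ofReal_smoothPout]
  rw [← gauss_conv hδ hτ, Measure.lintegral_conv hm]
  simp only [add_assoc]

lemma Regular.lintegral_ofReal_smoothPout (h : Regular Δ φ B) (u τ : ℝ) :
    ∫⁻ y, ENNReal.ofReal (smoothPout Δ PA φ y u τ) = 1 := by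
  simp only [h.ofReal_smoothPout]
  rw [lintegral_lintegral_swap]
  · simp [h.lintegral_ofReal_Pout]
  · exact (h.measurable_ofReal_Pout measurable_fst (by fun_prop)).aemeasurable

/-- Conditionally on the coordinates in `S`, the output with input `c · r + b · r` (where `c` lives
on `S` and `b` off `S`) has density `smoothPout`. -/
lemma Regular.lintegral_row_out (h : Regular Δ φ B) {n : ℕ} (S : Finset (Fin n)) {c b : Fin n → ℝ}
    (hc : ∀ i ∉ S, c i = 0) (hb : ∀ i ∈ S, b i = 0) {f : (Fin n → ℝ) → ℝ → ENNReal}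
    (hf : Measurable (Function.uncurry f)) (hS : ∀ r r' y, f (S.piecewise r r') y = f r y) :
    ∫⁻ r, ∫⁻ e, f r (out Δ φ (lin c r + lin b r) e) ∂(noise PA) ∂(iid n stdG)
      = ∫⁻ r, (∫⁻ y, f r y * ENNReal.ofReal (smoothPout Δ PA φ y (lin c r) (∑ i, b i ^ 2)))
          ∂(iid n stdG) := by
  have hf' (r : Fin n → ℝ) : Measurable (f r) := hf.comp measurable_prodMk_left
  simp only [fun (r : Fin n → ℝ) (s : ℝ) => h.lintegral_out (PA := PA) s (hf' r)]
  rw [lintegral_resample S]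
  · simp only [hS, lin_piecewise_left hc, lin_piecewise_right hb]
    refine lintegral_congr fun r => ?_
    rw [lintegral_lintegral_swap]
    · refine lintegral_congr fun y => ?_
      have hm : Measurable fun t => ENNReal.ofReal (Pout Δ PA φ y (lin c r + t)) :=
        h.measurable_ofReal_Pout measurable_const (by fun_prop)
      rw [h.ofReal_smoothPout, ← map_lin, lintegral_map hm (measurable_lin b)]
      exact lintegral_const_mul _ (hm.comp (measurable_lin b))
    · refine Measurable.aemeasurable ?_
      exact ((hf' r).comp measurable_snd).mul (h.measurable_ofReal_Pout measurable_snd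
        (measurable_const.add ((measurable_lin b).comp measurable_fst)))
  · refine Measurable.lintegral_prod_right ?_
    exact hf.mul (h.measurable_ofReal_Pout measurable_snd
      (((measurable_lin c).comp measurable_fst).add ((measurable_lin b).comp measurable_fst)))

end

lemma integrable_sq_stdG : Integrable (fun z : ℝ => z ^ 2) stdG :=
  (memLp_id_gaussianReal' (μ := 0) (v := 1) 2 (by simp)).integrable_sq

lemma integral_sq_stdG : ∫ z, z ^ 2 ∂stdG = 1 := by
  have h := variance_of_integral_eq_zero (μ := stdG) (X := id) aemeasurable_id
    (by simp [stdG])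
  have h2 : Var[id; stdG] = 1 := by simp [stdG]
  rw [h2] at h
  simpa using h.symm

lemma integrable_pow_four_stdG : Integrable (fun z : ℝ => z ^ 4) stdG := by
  have h := (memLp_id_gaussianReal' (μ := 0) (v := 1) 4 (by simp)).integrable_norm_pow (by simp)
  refine h.congr (.of_forall fun z => ?_)
  simp [Even.pow_abs (show Even 4 by decide)]

lemma integrable_sq_add_sq_stdG (C : ℝ) : Integrable (fun z : ℝ => (C + z ^ 2) ^ 2) stdG := by
  have : (fun z : ℝ => (C + z ^ 2) ^ 2) = fun z => C ^ 2 + 2 * C * z ^ 2 + z ^ 4 := by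
    ext z; ring
  rw [this]
  exact ((integrable_const _).add (integrable_sq_stdG.const_mul _)).add integrable_pow_four_stdG

lemma exp_le_quadratic {t : ℝ} (ht : t ≤ 1) : exp t ≤ 1 + t + t ^ 2 := by
  rcases le_total (-1) t with h | h
  · have := (abs_le.1 (abs_exp_sub_one_sub_id_le (abs_le.2 ⟨h, ht⟩))).2
    linarith
  · have : exp t ≤ 1 := exp_le_one_iff.2 (by linarith)
    nlinarith

section
variable {Ω : Type*} [MeasurableSpace Ω] {P : Measure Ω} [IsProbabilityMeasure P]

/-- A centred variable bounded above has a sub-Gaussian moment generating function near `0`. -/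
lemma lintegral_exp_mul_le {g G : Ω → ℝ} {M s : ℝ} (hg : Integrable g P) (h0 : ∫ ω, g ω ∂P = 0)
    (hM : ∀ ω, g ω ≤ M) (hG : ∀ ω, |g ω| ≤ G ω) (hG2 : Integrable (fun ω => G ω ^ 2) P)
    (hs : 0 ≤ s) (hsM : s * M ≤ 1) :
    ∫⁻ ω, ENNReal.ofReal (exp (s * g ω)) ∂P ≤ ENNReal.ofReal (exp (s ^ 2 * ∫ ω, G ω ^ 2 ∂P)) := by
  have key (ω : Ω) : exp (s * g ω) ≤ 1 + s * g ω + s ^ 2 * G ω ^ 2 := by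
    have h1 := exp_le_quadratic (t := s * g ω) ((mul_le_mul_of_nonneg_left (hM ω) hs).trans hsM)
    have h2 : g ω ^ 2 ≤ G ω ^ 2 := sq_le_sq' (by linarith [neg_abs_le (g ω), hG ω])
      ((le_abs_self _).trans (hG ω))
    nlinarith [mul_le_mul_of_nonneg_left h2 (sq_nonneg s)]
  have hi : Integrable (fun ω => 1 + s * g ω + s ^ 2 * G ω ^ 2) P :=
    ((integrable_const _).add (hg.const_mul _)).add (hG2.const_mul _)
  calc _ ≤ ∫⁻ ω, ENNReal.ofReal (1 + s * g ω + s ^ 2 * G ω ^ 2) ∂P :=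
        lintegral_mono fun ω => ENNReal.ofReal_le_ofReal (key ω)
    _ = ENNReal.ofReal (∫ ω, (1 + s * g ω + s ^ 2 * G ω ^ 2) ∂P) :=
        (ofReal_integral_eq_lintegral_ofReal hi
          (.of_forall fun ω => (exp_pos _).le.trans (key ω))).symm
    _ ≤ _ := by
      apply ENNReal.ofReal_le_ofReal
      have hi1 : Integrable (fun ω => 1 + s * g ω) P := (integrable_const _).add (hg.const_mul _)
      rw [integral_add hi1 (hG2.const_mul _),
        integral_add (integrable_const _) (hg.const_mul _), integral_const_mul, integral_const_mul,
        h0]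
      simp only [integral_const, probReal_univ, smul_eq_mul, mul_one, mul_zero, add_zero]
      linarith [add_one_le_exp (s ^ 2 * ∫ ω, G ω ^ 2 ∂P)]

lemma integral_le_log_of_lintegral_exp_le {L : Ω → ℝ} (hL : Integrable L P) {N : ℝ} (hN : 0 < N)
    (h : ∫⁻ ω, ENNReal.ofReal (exp (L ω)) ∂P ≤ ENNReal.ofReal N) : ∫ ω, L ω ∂P ≤ log N := by
  have hm : AEStronglyMeasurable (fun ω => exp (L ω)) P :=
    continuous_exp.comp_aestronglyMeasurable hL.1
  have hi : Integrable (fun ω => exp (L ω)) P := by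
    refine ⟨hm, ?_⟩
    rw [hasFiniteIntegral_iff_ofReal (.of_forall fun ω => (exp_pos _).le)]
    exact h.trans_lt ENNReal.ofReal_lt_top
  have h1 : ∫ ω, exp (L ω) ∂P ≤ N := by
    rw [← ofReal_integral_eq_lintegral_ofReal hi (.of_forall fun ω => (exp_pos _).le)] at h
    exact (ENNReal.ofReal_le_ofReal_iff hN.le).1 h
  have h2 : ∫ ω, L ω ∂P ≤ ∫ ω, (exp (L ω) / N - 1 + log N) ∂P := by
    refine integral_mono hL (((hi.div_const _).sub (integrable_const _)).add (integrable_const _))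
      fun ω => ?_
    have := log_le_sub_one_of_pos (div_pos (exp_pos (L ω)) hN)
    rw [log_div (exp_pos _).ne' hN.ne', log_exp] at this
    simp only
    linarith
  have hi1 : Integrable (fun ω => exp (L ω) / N - 1) P :=
    (hi.div_const _).sub (integrable_const _)
  rw [integral_add hi1 (integrable_const _),
    integral_sub (hi.div_const _) (integrable_const _), integral_div] at h2
  simp only [integral_const, probReal_univ, smul_eq_mul, one_mul] at h2
  have := div_le_one_of_le₀ h1 hN.le
  linarith

end

/-- The expected log-density at the output with input `√q v + √τ w`, when the density is computed
given `√q v` and with input variance `τ'`. -/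
def expLog (Δ : ℝ) {kA : ℕ} (PA : Measure (Fin kA → ℝ)) (φ : ℝ → (Fin kA → ℝ) → ℝ)
    (q τ τ' : ℝ) : ℝ :=
  ∫ p, log (smoothPout Δ PA φ (out Δ φ (√q * p.1.1 + √τ * p.1.2) p.2) (√q * p.1.1) τ')
    ∂((stdG.prod stdG).prod (noise PA))

/-- The law of one row of the sensing matrix together with its channel randomness. -/
def rowLaw {kA : ℕ} (PA : Measure (Fin kA → ℝ)) (n : ℕ) :
    Measure ((Fin n → ℝ) × ((Fin kA → ℝ) × ℝ)) := (iid n stdG).prod (noise PA)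

section
variable {Δ : ℝ} {kA : ℕ} {PA : Measure (Fin kA → ℝ)} [IsProbabilityMeasure PA]
  {φ : ℝ → (Fin kA → ℝ) → ℝ} {B : ℝ}

instance (n : ℕ) : IsProbabilityMeasure (rowLaw PA n) := by unfold rowLaw; infer_instance

lemma Regular.abs_log_out_le (h : Regular Δ φ B) (s u τ : ℝ) (e : (Fin kA → ℝ) × ℝ) :
    |log (smoothPout Δ PA φ (out Δ φ s e) u τ)| ≤ logBound Δ B + e.2 ^ 2 :=
  h.abs_log_smoothPout_le (h.abs_out_sub_le s e) u τ

lemma measurePreserving_noise_snd : MeasurePreserving (fun e : (Fin kA → ℝ) × ℝ => e.2)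
    (noise PA) stdG := measurePreserving_snd

lemma measurePreserving_prod_noise_snd {Ω : Type*} [MeasurableSpace Ω] {P : Measure Ω}
    [IsProbabilityMeasure P] : MeasurePreserving (fun p : Ω × ((Fin kA → ℝ) × ℝ) => p.2.2)
    (P.prod (noise PA)) stdG :=
  measurePreserving_noise_snd.comp measurePreserving_snd

lemma integrable_logBound_prod {Ω : Type*} [MeasurableSpace Ω] {P : Measure Ω}
    [IsProbabilityMeasure P] (C : ℝ) :
    Integrable (fun p : Ω × ((Fin kA → ℝ) × ℝ) => C + p.2.2 ^ 2) (P.prod (noise PA)) :=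
  measurePreserving_prod_noise_snd.integrable_comp_of_integrable
    ((integrable_const C).add integrable_sq_stdG)

lemma integral_logBound_prod {Ω : Type*} [MeasurableSpace Ω] {P : Measure Ω}
    [IsProbabilityMeasure P] (C : ℝ) :
    ∫ p : Ω × ((Fin kA → ℝ) × ℝ), (C + p.2.2 ^ 2) ∂(P.prod (noise PA)) = C + 1 := by
  have hp := measurePreserving_prod_noise_snd (kA := kA) (PA := PA) (P := P)
  have := integral_map (μ := P.prod (noise PA)) hp.measurable.aemeasurable
    (f := fun z : ℝ => C + z ^ 2) (by fun_prop)
  rw [← this, hp.map_eq, integral_add (integrable_const _) integrable_sq_stdG, integral_sq_stdG]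
  simp

lemma Regular.measurable_log_out (h : Regular Δ φ B) {Ω : Type*} [MeasurableSpace Ω]
    {U V k : Ω → ℝ} {e : Ω → (Fin kA → ℝ) × ℝ} (hU : Measurable U) (hV : Measurable V)
    (hk : Measurable k) (he : Measurable e) :
    Measurable fun p => log (smoothPout Δ PA φ (out Δ φ (V p) (e p)) (U p) (k p)) :=
  (h.measurable_smoothPout (h.measurable_out.comp (hV.prodMk he)) hU hk).log

lemma Regular.integrable_log_out (h : Regular Δ φ B) {Ω : Type*} [MeasurableSpace Ω]
    {P : Measure Ω} [IsProbabilityMeasure P] {U V : Ω → ℝ} (hU : Measurable U)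
    (hV : Measurable V) (τ : ℝ) : Integrable (fun p : Ω × ((Fin kA → ℝ) × ℝ) =>
      log (smoothPout Δ PA φ (out Δ φ (V p.1) p.2) (U p.1) τ)) (P.prod (noise PA)) := by
  refine (integrable_logBound_prod (logBound Δ B)).mono' ?_ (.of_forall fun p => ?_)
  · exact (h.measurable_log_out (hU.comp measurable_fst) (hV.comp measurable_fst)
      measurable_const measurable_snd).aestronglyMeasurable
  · exact h.abs_log_out_le _ _ _ _

lemma Regular.abs_expLog_le (h : Regular Δ φ B) (q τ τ' : ℝ) :
    |expLog Δ PA φ q τ τ'| ≤ logBound Δ B + 1 := by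
  unfold expLog
  rw [← integral_logBound_prod (PA := PA) (P := stdG.prod stdG), ← Real.norm_eq_abs]
  refine norm_integral_le_of_norm_le (integrable_logBound_prod (PA := PA) (P := stdG.prod stdG)
    (logBound Δ B)) (.of_forall fun p => ?_)
  exact h.abs_log_out_le _ _ _ _

lemma Regular.continuous_expLog (h : Regular Δ φ B) :
    Continuous fun p : ℝ × ℝ × ℝ => expLog Δ PA φ p.1 p.2.1 p.2.2 := by
  unfold expLog
  refine continuous_of_dominated (bound := fun p => logBound Δ B + p.2.2 ^ 2) ?_ ?_ ?_ ?_
  · intro q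
    exact (h.measurable_log_out (by fun_prop) (by fun_prop)
      measurable_const measurable_snd).aestronglyMeasurable
  · exact fun q => .of_forall fun p => h.abs_log_out_le _ _ _ _
  · exact integrable_logBound_prod _
  · refine .of_forall fun p => ?_
    refine Continuous.log ?_ fun q => (h.smoothPout_pos _ _ _).ne'
    have hout : Continuous fun q : ℝ × ℝ × ℝ => out Δ φ (√q.1 * p.1.1 + √q.2.1 * p.1.2) p.2 := by
      unfold out
      exact ((h.cont p.2.1).comp (by fun_prop)).add continuous_const
    exact h.continuous_smoothPout.comp (hout.prodMk
      ((by fun_prop : Continuous fun q : ℝ × ℝ × ℝ => (√q.1 * p.1.1, q.2.2))))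

/-- `expLog` computed on any space carrying independent Gaussian variables. -/
lemma Regular.integral_log_out (h : Regular Δ φ B) {Ω : Type*} [MeasurableSpace Ω]
    {P : Measure Ω} [IsProbabilityMeasure P] {U T : Ω → ℝ} (hU : Measurable U)
    (hT : Measurable T) {q τ : ℝ} (hlaw : P.map (fun ω => (U ω, T ω)) = (gauss q).prod (gauss τ))
    (τ' : ℝ) : ∫ p, log (smoothPout Δ PA φ (out Δ φ (U p.1 + T p.1) p.2) (U p.1) τ')
      ∂(P.prod (noise PA)) = expLog Δ PA φ q τ τ' := by
  let F : (ℝ × ℝ) × ((Fin kA → ℝ) × ℝ) → ℝ := fun p =>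
    log (smoothPout Δ PA φ (out Δ φ (p.1.1 + p.1.2) p.2) p.1.1 τ')
  have hF : Measurable F := h.measurable_log_out (by fun_prop) (by fun_prop) (by fun_prop)
    (by fun_prop)
  have e1 : (P.prod (noise PA)).map (Prod.map (fun ω => (U ω, T ω)) id)
      = ((gauss q).prod (gauss τ)).prod (noise PA) := by
    rw [← Measure.map_prod_map _ _ (hU.prodMk hT) measurable_id, hlaw, Measure.map_id]
  have e2 : ((stdG.prod stdG).prod (noise PA)).map
      (Prod.map (Prod.map (fun w => √q * w) (fun w => √τ * w)) id)
      = ((gauss q).prod (gauss τ)).prod (noise PA) := by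
    rw [← Measure.map_prod_map _ _ (by fun_prop) measurable_id,
      ← Measure.map_prod_map _ _ (by fun_prop) (by fun_prop), Measure.map_id]
    rfl
  have i1 := integral_map (μ := P.prod (noise PA)) (φ := Prod.map (fun ω => (U ω, T ω)) id)
    ((hU.prodMk hT).prodMap measurable_id).aemeasurable (f := F) hF.aestronglyMeasurable
  have i2 := integral_map (μ := (stdG.prod stdG).prod (noise PA))
    (φ := Prod.map (Prod.map (fun w => √q * w) (fun w => √τ * w)) id)
    (by fun_prop) (f := F) hF.aestronglyMeasurable
  rw [e1] at i1
  rw [e2] at i2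
  exact i1.symm.trans i2

lemma IPout_eq (h : Regular Δ φ B) (q ρ' : ℝ) :
    IPout Δ PA φ q ρ' = expLog Δ PA φ ρ' 0 0 - expLog Δ PA φ q (ρ' - q) (ρ' - q) := by
  unfold IPout expLog
  congr 1
  · have hi := h.integrable_log_out (PA := PA) (P := stdG.prod stdG)
      (U := fun p => √ρ' * p.1) (V := fun p => √ρ' * p.1 + √0 * p.2) (by fun_prop) (by fun_prop) 0
    have hi1 : Integrable (fun p : ℝ × ((Fin kA → ℝ) × ℝ) =>
        log (Pout Δ PA φ (out Δ φ (√ρ' * p.1) p.2) (√ρ' * p.1))) (stdG.prod (noise PA)) := by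
      simpa [smoothPout_zero] using h.integrable_log_out (PA := PA) (P := stdG)
        (U := fun p => √ρ' * p) (V := fun p => √ρ' * p) (by fun_prop) (by fun_prop) 0
    rw [integral_prod _ hi]
    rw [integral_prod _ hi.integral_prod_left]
    simp only [sqrt_zero, zero_mul, add_zero, smoothPout_zero, integral_const, probReal_univ,
      one_smul]
    refine integral_congr_ae ?_
    filter_upwards [hi1.prod_right_ae] with v hv
    exact (integral_prod _ hv).symm
  · have hi := h.integrable_log_out (PA := PA) (P := stdG.prod stdG)
      (U := fun p => √q * p.1) (V := fun p => √q * p.1 + √(ρ' - q) * p.2) (by fun_prop)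
      (by fun_prop) (ρ' - q)
    rw [integral_prod _ hi, integral_prod _ hi.integral_prod_left]
    refine integral_congr_ae (.of_forall fun v => ?_)
    refine integral_congr_ae (.of_forall fun w => ?_)
    have hi1 := h.integrable_log_out (PA := PA) (P := stdG)
      (U := fun p => √q * v) (V := fun p => √q * v + √(ρ' - q) * w) (by fun_prop)
      (by fun_prop) (ρ' - q)
    obtain ⟨p, hp⟩ := hi1.prod_right_ae.exists
    exact (integral_prod _ hp).symm

lemma Regular.integral_row_log (h : Regular Δ φ B) {n : ℕ} (S : Finset (Fin n))
    {c b : Fin n → ℝ} (hc : ∀ i ∉ S, c i = 0) (hb : ∀ i ∈ S, b i = 0) (τ' : ℝ) :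
    ∫ p, log (smoothPout Δ PA φ (out Δ φ (lin c p.1 + lin b p.1) p.2) (lin c p.1) τ')
      ∂(rowLaw PA n) = expLog Δ PA φ (∑ i, c i ^ 2) (∑ i, b i ^ 2) τ' :=
  h.integral_log_out (measurable_lin c) (measurable_lin b)
    (by rw [map_lin_pair_of_disjoint S hc hb, map_lin, map_lin]) τ'

lemma Regular.lintegral_row_div (h : Regular Δ φ B) {n : ℕ} (S : Finset (Fin n)) {c b : Fin n → ℝ}
    (hc : ∀ i ∉ S, c i = 0) (hb : ∀ i ∈ S, b i = 0) {g : (Fin n → ℝ) → ℝ → ENNReal}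
    (hg : Measurable (Function.uncurry g)) (hS : ∀ r r' y, g (S.piecewise r r') y = g r y) :
    ∫⁻ p, g p.1 (out Δ φ (lin c p.1 + lin b p.1) p.2) / ENNReal.ofReal (smoothPout Δ PA φ
        (out Δ φ (lin c p.1 + lin b p.1) p.2) (lin c p.1) (∑ i, b i ^ 2)) ∂(rowLaw PA n)
      = ∫⁻ r, (∫⁻ y, g r y) ∂(iid n stdG) := by
  let f : (Fin n → ℝ) → ℝ → ENNReal := fun r y =>
    g r y / ENNReal.ofReal (smoothPout Δ PA φ y (lin c r) (∑ i, b i ^ 2))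
  have hf : Measurable (Function.uncurry f) :=
    hg.div (ENNReal.measurable_ofReal.comp (h.measurable_smoothPout measurable_snd
      ((measurable_lin c).comp measurable_fst) measurable_const))
  have hout : Measurable fun p : (Fin n → ℝ) × ((Fin kA → ℝ) × ℝ) =>
      out Δ φ (lin c p.1 + lin b p.1) p.2 :=
    h.measurable_out.comp ((((measurable_lin c).comp measurable_fst).add
      ((measurable_lin b).comp measurable_fst)).prodMk measurable_snd)
  have key := h.lintegral_row_out (PA := PA) S hc hb hf
    (fun r r' y => by simp only [f, hS, lin_piecewise_left hc])
  have hprod := lintegral_prod (μ := iid n stdG) (ν := noise PA)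
    (fun p : (Fin n → ℝ) × ((Fin kA → ℝ) × ℝ) => f p.1 (out Δ φ (lin c p.1 + lin b p.1) p.2))
    (hf.comp (measurable_fst.prodMk hout)).aemeasurable
  refine hprod.trans (key.trans ?_)
  refine lintegral_congr fun r => lintegral_congr fun y => ?_
  exact ENNReal.div_mul_cancel (by simpa using h.smoothPout_pos _ _ _) ENNReal.ofReal_ne_top

lemma Regular.lintegral_row_exp (h : Regular Δ φ B) {n : ℕ} (S : Finset (Fin n))
    {c b : Fin n → ℝ} (hc : ∀ i ∉ S, c i = 0) (hb : ∀ i ∈ S, b i = 0) (τ' : ℝ) {s : ℝ}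
    (hs : 0 ≤ s) (hs1 : s * (2 * logBound Δ B + 1) ≤ 1) :
    ∫⁻ p, ENNReal.ofReal (exp (s * (log (smoothPout Δ PA φ
      (out Δ φ (lin c p.1 + lin b p.1) p.2) (lin c p.1) τ') -
        expLog Δ PA φ (∑ i, c i ^ 2) (∑ i, b i ^ 2) τ'))) ∂(rowLaw PA n)
      ≤ ENNReal.ofReal (exp (s ^ 2 * ∫ z, (2 * logBound Δ B + 1 + z ^ 2) ^ 2 ∂stdG)) := by
  have hi := h.integrable_log_out (PA := PA) (P := iid n stdG) (measurable_lin c)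
    ((measurable_lin c).add (measurable_lin b)) τ'
  have hE := abs_le.1 (h.abs_expLog_le (PA := PA) (∑ i, c i ^ 2) (∑ i, b i ^ 2) τ')
  have hp := measurePreserving_prod_noise_snd (kA := kA) (PA := PA) (P := iid n stdG)
  have hint : ∫ z, (2 * logBound Δ B + 1 + z ^ 2) ^ 2 ∂stdG
      = ∫ p : (Fin n → ℝ) × ((Fin kA → ℝ) × ℝ), (2 * logBound Δ B + 1 + p.2.2 ^ 2) ^ 2
        ∂(rowLaw PA n) := by
    rw [← hp.map_eq]
    exact integral_map hp.measurable.aemeasurable (by fun_prop)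
  rw [hint]
  refine lintegral_exp_mul_le (hi.sub (integrable_const _)) ?_ (fun p => ?_) (fun p => ?_) ?_ hs hs1
  · have := integral_sub hi (integrable_const (expLog Δ PA φ (∑ i, c i ^ 2) (∑ i, b i ^ 2) τ'))
    refine this.trans ?_
    have h2 := h.integral_row_log (PA := PA) S hc hb τ'
    simp only [rowLaw] at h2
    simp [h2]
  · have := h.log_smoothPout_le (PA := PA) (out Δ φ (lin c p.1 + lin b p.1) p.2) (lin c p.1) τ'
    linarith
  · have := abs_le.1 (h.abs_log_out_le (PA := PA) (lin c p.1 + lin b p.1) (lin c p.1) τ' p.2)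
    rw [abs_le]; constructor <;> linarith
  · exact hp.integrable_comp_of_integrable (integrable_sq_add_sq_stdG _)

end

/-- A continuous midpoint-convex function lies below its chords. -/
lemma le_chord_of_midpoint {F : ℝ → ℝ} {x y : ℝ} (hF : Continuous F)
    (hmid : ∀ t δ, 0 ≤ δ → x ≤ t - δ → t + δ ≤ y → 2 * F t ≤ F (t - δ) + F (t + δ))
    {t : ℝ} (hxt : x ≤ t) (hty : t ≤ y) : (y - x) * F t ≤ (y - t) * F x + (t - x) * F y := by
  let G : ℝ → ℝ := fun u => (y - x) * F u - ((y - u) * F x + (u - x) * F y)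
  have hG : Continuous G := by fun_prop
  have hGx : G x = 0 := by simp only [G]; ring
  have hGy : G y = 0 := by simp only [G]; ring
  suffices h : G t ≤ 0 by simp only [G] at h; linarith
  by_contra! hpos
  obtain ⟨M, hM, hmax⟩ := isCompact_Icc.exists_isMaxOn ⟨t, hxt, hty⟩ hG.continuousOn
  have hMpos : 0 < G M := hpos.trans_le (hmax ⟨hxt, hty⟩)
  have hcomp : IsCompact (Set.Icc x y ∩ G ⁻¹' {G M}) :=
    isCompact_Icc.inter_right (isClosed_singleton.preimage hG)
  obtain ⟨u, ⟨⟨hu1, hu2⟩, hu3⟩, hleast⟩ := hcomp.exists_isLeast ⟨M, hM, rfl⟩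
  have hu3' : G u = G M := hu3
  have hxu : x < u := lt_of_le_of_ne hu1 fun e => by rw [← e, hGx] at hu3'; linarith
  have huy : u < y := lt_of_le_of_ne hu2 fun e => by rw [e, hGy] at hu3'; linarith
  let δ := min (u - x) (y - u)
  have hδ : 0 < δ := lt_min (by linarith) (by linarith)
  have hδ1 : δ ≤ u - x := min_le_left _ _
  have hδ2 : δ ≤ y - u := min_le_right _ _
  have h1 : G (u - δ) < G M := by
    refine lt_of_le_of_ne (hmax ⟨by linarith, by linarith⟩) fun e => ?_
    have := hleast (a := u - δ) ⟨⟨by linarith, by linarith⟩, e⟩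
    linarith
  have h2 : G (u + δ) ≤ G M := hmax ⟨by linarith, by linarith⟩
  have h3 := hmid u δ hδ.le (by linarith) (by linarith)
  have h4 : 2 * G u ≤ G (u - δ) + G (u + δ) := by
    have := mul_le_mul_of_nonneg_left h3 (by linarith : 0 ≤ y - x)
    simp only [G]; linarith
  linarith

section
variable {Δ : ℝ} {kA : ℕ} {PA : Measure (Fin kA → ℝ)} [IsProbabilityMeasure PA]
  {φ : ℝ → (Fin kA → ℝ) → ℝ} {B : ℝ}

lemma Regular.lintegral_smoothPout_lin (h : Regular Δ φ B) {n : ℕ} (d : Fin n → ℝ) (y u : ℝ)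
    {τ : ℝ} (hτ : 0 ≤ τ) :
    ∫⁻ r, ENNReal.ofReal (smoothPout Δ PA φ y (u + lin d r) τ) ∂(iid n stdG)
      = ENNReal.ofReal (smoothPout Δ PA φ y u (∑ i, d i ^ 2 + τ)) := by
  rw [← h.lintegral_smoothPout_gauss y u hτ (Finset.sum_nonneg fun i _ => sq_nonneg _), ← map_lin,
    lintegral_map (h.measurable_smoothPout measurable_const (by fun_prop)
      measurable_const).ennreal_ofReal (measurable_lin d)]

lemma Regular.measurable_ofReal_smoothPout_lin (h : Regular Δ φ B) {n : ℕ} (c : Fin n → ℝ)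
    (τ : ℝ) : Measurable fun p : (Fin n → ℝ) × ℝ =>
      ENNReal.ofReal (smoothPout Δ PA φ p.2 (lin c p.1) τ) :=
  (h.measurable_smoothPout measurable_snd ((measurable_lin c).comp measurable_fst)
    measurable_const).ennreal_ofReal

lemma Regular.lintegral_mul_div (h : Regular Δ φ B) {n : ℕ} (S : Finset (Fin n))
    {c c' d : Fin n → ℝ} (hc : ∀ i ∉ S, c i = 0) (hc' : ∀ i ∉ S, c' i = 0)
    (hd : ∀ i ∈ S, d i = 0) {τ : ℝ} (τ' : ℝ) (hτ : 0 ≤ τ) :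
    ∫⁻ r, (∫⁻ y, ENNReal.ofReal (smoothPout Δ PA φ y (lin c' r) τ') *
      (ENNReal.ofReal (smoothPout Δ PA φ y (lin c r + lin d r) τ) /
        ENNReal.ofReal (smoothPout Δ PA φ y (lin c r) (∑ i, d i ^ 2 + τ)))) ∂(iid n stdG) = 1 := by
  let g : (Fin n → ℝ) → ℝ → ENNReal := fun r y =>
    ENNReal.ofReal (smoothPout Δ PA φ y (lin c' r) τ') *
      (ENNReal.ofReal (smoothPout Δ PA φ y (lin c r + lin d r) τ) /
        ENNReal.ofReal (smoothPout Δ PA φ y (lin c r) (∑ i, d i ^ 2 + τ)))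
  have hg : Measurable (Function.uncurry g) := by
    have h1 := h.measurable_ofReal_smoothPout_lin (PA := PA) (c + d) τ
    simp only [lin_add] at h1
    exact (h.measurable_ofReal_smoothPout_lin c' τ').mul
      (h1.div (h.measurable_ofReal_smoothPout_lin c _))
  have key (y : ℝ) : ∫⁻ r, g r y ∂(iid n stdG)
      = ∫⁻ r, ENNReal.ofReal (smoothPout Δ PA φ y (lin c' r) τ') ∂(iid n stdG) := by
    have hgy : Measurable fun r => g r y := hg.of_uncurry_right
    refine (lintegral_resample S hgy).trans (lintegral_congr fun r => ?_)
    simp only [g, lin_piecewise_left hc, lin_piecewise_left hc', lin_piecewise_right hd,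
      div_eq_mul_inv]
    have hm : Measurable fun r' => ENNReal.ofReal
        (smoothPout Δ PA φ y (lin c r + lin d r') τ) :=
      (h.measurable_smoothPout measurable_const (measurable_const.add (measurable_lin d))
        measurable_const).ennreal_ofReal
    rw [lintegral_const_mul _ (hm.mul_const _), lintegral_mul_const _ hm,
      h.lintegral_smoothPout_lin d y _ hτ,
      ENNReal.mul_inv_cancel (by simpa using h.smoothPout_pos _ _ _) ENNReal.ofReal_ne_top,
      mul_one]
  have hsw : Measurable (Function.uncurry fun (y : ℝ) (r : Fin n → ℝ) =>
      ENNReal.ofReal (smoothPout Δ PA φ y (lin c' r) τ')) :=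
    (h.measurable_smoothPout measurable_fst ((measurable_lin c').comp measurable_snd)
      measurable_const).ennreal_ofReal
  change ∫⁻ r, (∫⁻ y, g r y) ∂(iid n stdG) = 1
  rw [lintegral_lintegral_swap hg.aemeasurable]
  simp only [key]
  rw [lintegral_lintegral_swap hsw.aemeasurable]
  simp [h.lintegral_ofReal_smoothPout]

lemma Regular.expLog_midpoint (h : Regular Δ φ B) {q δ κ : ℝ} (hq : 0 ≤ q) (hδ : 0 ≤ δ)
    (hκ : 0 ≤ κ) : 2 * expLog Δ PA φ (q + δ) (δ + κ) (δ + κ)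
      ≤ expLog Δ PA φ q (δ + δ + κ) (δ + δ + κ) + expLog Δ PA φ (q + δ + δ) κ κ := by
  let c0 : Fin 4 → ℝ := ![√q, 0, 0, 0]
  let b0 : Fin 4 → ℝ := ![0, √δ, √δ, √κ]
  let c1 : Fin 4 → ℝ := ![√q, √δ, 0, 0]
  let b1 : Fin 4 → ℝ := ![0, 0, √δ, √κ]
  let c2 : Fin 4 → ℝ := ![√q, 0, √δ, 0]
  let b2 : Fin 4 → ℝ := ![0, √δ, 0, √κ]
  let c3 : Fin 4 → ℝ := ![√q, √δ, √δ, 0]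
  let b3 : Fin 4 → ℝ := ![0, 0, 0, √κ]
  let d : Fin 4 → ℝ := ![0, 0, √δ, 0]
  let X : (Fin 4 → ℝ) → ℝ := fun r => lin c3 r + lin b3 r
  have hX0 (r) : lin c0 r + lin b0 r = X r := by
    simp [X, lin, Fin.sum_univ_four, c0, b0, c3, b3]; ring
  have hX1 (r) : lin c1 r + lin b1 r = X r := by
    simp [X, lin, Fin.sum_univ_four, c1, b1, c3, b3]; ring
  have hX2 (r) : lin c2 r + lin b2 r = X r := by
    simp [X, lin, Fin.sum_univ_four, c2, b2, c3, b3]; ring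
  have hXm : Measurable X := (measurable_lin _).add (measurable_lin _)
  have E0 := h.integral_row_log (PA := PA) (c := c0) (b := b0) {0} 
    (by simp [c0, Fin.forall_fin_succ]) (by simp [b0]) (δ + δ + κ)
  have E1 := h.integral_row_log (PA := PA) (c := c1) (b := b1) {0, 1}
    (by simp [c1, Fin.forall_fin_succ]) (by simp [b1]) (δ + κ)
  have E2 := h.integral_row_log (PA := PA) (c := c2) (b := b2) {0, 2}
    (by simp [c2, Fin.forall_fin_succ]) (by simp [b2]) (δ + κ)
  have hc3 : ∀ i ∉ ({0, 1, 2} : Finset (Fin 4)), c3 i = 0 := by simp [c3, Fin.forall_fin_succ]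
  have hb3 : ∀ i ∈ ({0, 1, 2} : Finset (Fin 4)), b3 i = 0 := by simp [b3]
  have E3 := h.integral_row_log (PA := PA) (c := c3) (b := b3) {0, 1, 2} hc3 hb3 κ
  simp only [hX0] at E0
  simp only [hX1] at E1
  simp only [hX2] at E2
  let H0 : (Fin 4 → ℝ) → ℝ → ℝ := fun r y => smoothPout Δ PA φ y (lin c0 r) (δ + δ + κ)
  let H1 : (Fin 4 → ℝ) → ℝ → ℝ := fun r y => smoothPout Δ PA φ y (lin c1 r) (δ + κ)
  let H2 : (Fin 4 → ℝ) → ℝ → ℝ := fun r y => smoothPout Δ PA φ y (lin c2 r) (δ + κ)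
  let H3 : (Fin 4 → ℝ) → ℝ → ℝ := fun r y => smoothPout Δ PA φ y (lin c3 r) κ
  have hH (c : Fin 4 → ℝ) (τ : ℝ) : Measurable fun p : (Fin 4 → ℝ) × ℝ =>
      ENNReal.ofReal (smoothPout Δ PA φ p.2 (lin c p.1) τ) :=
    (h.measurable_smoothPout measurable_snd ((measurable_lin c).comp measurable_fst)
      measurable_const).ennreal_ofReal
  let g : (Fin 4 → ℝ) → ℝ → ENNReal := fun r y =>
    ENNReal.ofReal (H1 r y) * (ENNReal.ofReal (H2 r y) / ENNReal.ofReal (H0 r y))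
  have hg : Measurable (Function.uncurry g) := (hH c1 _).mul ((hH c2 _).div (hH c0 _))
  have hg1 : ∫⁻ r, (∫⁻ y, g r y) ∂(iid 4 stdG) = 1 := by
    have hsq : ∑ i, d i ^ 2 + (δ + κ) = δ + δ + κ := by
      simp [d, Fin.sum_univ_four, sq_sqrt hδ]; ring
    have hc2 : c2 = c0 + d := by ext i; fin_cases i <;> simp [c2, c0, d]
    have := h.lintegral_mul_div (PA := PA) (c := c0) (c' := c1) (d := d) {0, 1}
      (by simp [c0, Fin.forall_fin_succ]) (by simp [c1, Fin.forall_fin_succ]) (by simp [d])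
      (δ + κ) (add_nonneg hδ hκ)
    rw [hsq] at this
    simpa only [g, H0, H1, H2, hc2, lin_add] using this
  have hdiv := h.lintegral_row_div (PA := PA) {0, 1, 2} hc3 hb3 hg fun r r' y => by
    have h0 : ∀ i ∉ ({0, 1, 2} : Finset (Fin 4)), c0 i = 0 := by simp [c0, Fin.forall_fin_succ]
    have h1 : ∀ i ∉ ({0, 1, 2} : Finset (Fin 4)), c1 i = 0 := by simp [c1, Fin.forall_fin_succ]
    have h2 : ∀ i ∉ ({0, 1, 2} : Finset (Fin 4)), c2 i = 0 := by simp [c2, Fin.forall_fin_succ]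
    simp only [g, H0, H1, H2, lin_piecewise_left h0, lin_piecewise_left h1, lin_piecewise_left h2]
  have hb3' : ∑ i, b3 i ^ 2 = κ := by simp [b3, Fin.sum_univ_four, sq_sqrt hκ]
  rw [hg1, hb3'] at hdiv
  let Y : (Fin 4 → ℝ) × ((Fin kA → ℝ) × ℝ) → ℝ := fun p => out Δ φ (X p.1) p.2
  have hI (c : Fin 4 → ℝ) (τ : ℝ) : Integrable (fun p : (Fin 4 → ℝ) × ((Fin kA → ℝ) × ℝ) =>
      log (smoothPout Δ PA φ (Y p) (lin c p.1) τ)) (rowLaw PA 4) :=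
    h.integrable_log_out (measurable_lin c) hXm τ
  have hI0 := hI c0 (δ + δ + κ)
  have hI1 := hI c1 (δ + κ)
  have hI2 := hI c2 (δ + κ)
  have hI3 := hI c3 κ
  have hpos (y u τ : ℝ) := h.smoothPout_pos (PA := PA) y u τ
  have hJ := integral_le_log_of_lintegral_exp_le ((hI1.add hI2).sub (hI3.add hI0)) one_pos (by
    rw [ENNReal.ofReal_one, ← hdiv]
    refine le_of_eq (lintegral_congr fun p => ?_)
    simp only [Pi.add_apply, Pi.sub_apply, exp_sub, exp_add, exp_log (hpos _ _ _), g, H0, H1, H2]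
    rw [ENNReal.ofReal_div_of_pos (mul_pos (hpos _ _ _) (hpos _ _ _)),
      ENNReal.ofReal_mul (hpos _ _ _).le, ENNReal.ofReal_mul (hpos _ _ _).le]
    simp only [div_eq_mul_inv]
    rw [ENNReal.mul_inv (by simp) (by simp)]
    simp only [Y, X]
    ring)
  have hA := integral_sub (hI1.add hI2) (hI3.add hI0)
  have hB := integral_add hI1 hI2
  have hC := integral_add hI3 hI0
  simp only [Pi.add_apply, Pi.sub_apply] at hA hB hC hJ
  rw [hA, hB, hC, log_one] at hJ
  have s0 : ∑ i, c0 i ^ 2 = q := by simp [c0, Fin.sum_univ_four, sq_sqrt hq]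
  have s1 : ∑ i, c1 i ^ 2 = q + δ := by simp [c1, Fin.sum_univ_four, sq_sqrt hq, sq_sqrt hδ]
  have s2 : ∑ i, c2 i ^ 2 = q + δ := by simp [c2, Fin.sum_univ_four, sq_sqrt hq, sq_sqrt hδ]
  have s3 : ∑ i, c3 i ^ 2 = q + δ + δ := by
    simp [c3, Fin.sum_univ_four, sq_sqrt hq, sq_sqrt hδ]
  have t0 : ∑ i, b0 i ^ 2 = δ + δ + κ := by
    simp [b0, Fin.sum_univ_four, sq_sqrt hκ, sq_sqrt hδ]
  have t1 : ∑ i, b1 i ^ 2 = δ + κ := by simp [b1, Fin.sum_univ_four, sq_sqrt hκ, sq_sqrt hδ]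
  have t2 : ∑ i, b2 i ^ 2 = δ + κ := by simp [b2, Fin.sum_univ_four, sq_sqrt hκ, sq_sqrt hδ]
  rw [s0, t0] at E0
  rw [s1, t1] at E1
  rw [s2, t2] at E2
  rw [s3, hb3'] at E3
  simp only [Y] at hJ
  linarith

/-- The expected log-density is convex along `q ↦ (q, S - q, S - q)`. -/
lemma Regular.expLog_le_chord (h : Regular Δ φ B) {S x y t : ℝ} (hx : 0 ≤ x) (hxt : x ≤ t)
    (hty : t ≤ y) (hy : y ≤ S) :
    (y - x) * expLog Δ PA φ t (S - t) (S - t)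
      ≤ (y - t) * expLog Δ PA φ x (S - x) (S - x) + (t - x) * expLog Δ PA φ y (S - y) (S - y) := by
  have hc := (h.continuous_expLog (PA := PA)).comp
    (by fun_prop : Continuous fun u : ℝ => (u, S - u, S - u))
  refine le_chord_of_midpoint hc (fun u δ hδ h1 h2 => ?_) hxt hty
  have := h.expLog_midpoint (PA := PA) (q := u - δ) (δ := δ) (κ := S - u - δ) (by linarith) hδ
    (by linarith)
  rw [show u - δ + δ = u by ring, show δ + (S - u - δ) = S - u by ring,
    show δ + δ + (S - u - δ) = S - (u - δ) by ring, show S - u - δ = S - (u + δ) by ring] at this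
  exact this

end

/-- The signal normalised by `√k`. -/
def scaled {n : ℕ} (k : ℝ) (x : Fin n → ℝ) : Fin n → ℝ := fun i => x i / √k

/-- The joint law of the sensing matrix and of the channel randomness, row by row. -/
def sysLaw {kA : ℕ} (PA : Measure (Fin kA → ℝ)) (n m : ℕ) :
    Measure (Fin m → (Fin n → ℝ) × ((Fin kA → ℝ) × ℝ)) := Measure.pi fun _ => rowLaw PA n

/-- The observations with coefficient vector `c`. -/
def sysOut (Δ : ℝ) {kA : ℕ} (φ : ℝ → (Fin kA → ℝ) → ℝ) {n m : ℕ} (c : Fin n → ℝ)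
    (ω : Fin m → (Fin n → ℝ) × ((Fin kA → ℝ) × ℝ)) : Fin m → ℝ :=
  fun μ => out Δ φ (lin c (ω μ).1) (ω μ).2

/-- The density of the observations given the coefficients `c`, with residual variance `τ`. -/
def prodDens (Δ : ℝ) {kA : ℕ} (PA : Measure (Fin kA → ℝ)) (φ : ℝ → (Fin kA → ℝ) → ℝ) {n m : ℕ}
    (c : Fin n → ℝ) (τ : ℝ) (Φ : Fin m → Fin n → ℝ) (y : Fin m → ℝ) : ℝ :=
  ∏ μ, smoothPout Δ PA φ (y μ) (lin c (Φ μ)) τ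

/-- The marginal density of the observations `y` given the matrix. -/
def margDens (Δ : ℝ) {kA : ℕ} (PA : Measure (Fin kA → ℝ)) (φ : ℝ → (Fin kA → ℝ) → ℝ) {n m : ℕ}
    (P : Measure ℝ) (k : ℝ) (Φ : Fin m → Fin n → ℝ) (y : Fin m → ℝ) : ℝ :=
  ∫ x, prodDens Δ PA φ (scaled k x) 0 Φ y ∂(iid n P)

lemma measurable_scaled {n : ℕ} (k : ℝ) : Measurable (scaled k : (Fin n → ℝ) → Fin n → ℝ) := by
  unfold scaled; fun_prop

lemma measurable_lin_prod {n : ℕ} {α : Type*} [MeasurableSpace α] {c r : α → Fin n → ℝ}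
    (hc : Measurable c) (hr : Measurable r) : Measurable fun a => lin (c a) (r a) := by
  unfold lin; fun_prop

lemma lin_scaled {n : ℕ} (k : ℝ) (x r : Fin n → ℝ) :
    lin (scaled k x) r = (∑ i, r i * x i) / √k := by
  simp only [lin, scaled, Finset.sum_div]
  exact Finset.sum_congr rfl fun i _ => by ring

lemma lin_zero {n : ℕ} (r : Fin n → ℝ) : lin 0 r = 0 := by simp [lin]

/-- Separating the matrix, the channel variables and the Gaussian noise. -/
lemma measurePreserving_sysLaw {kA : ℕ} (PA : Measure (Fin kA → ℝ)) [IsProbabilityMeasure PA]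
    (n m : ℕ) : MeasurePreserving (fun ω : Fin m → (Fin n → ℝ) × ((Fin kA → ℝ) × ℝ) =>
      ((fun μ => (ω μ).1), ((fun μ => (ω μ).2.1), fun μ => (ω μ).2.2))) (sysLaw PA n m)
      ((Measure.pi fun _ : Fin m => iid n stdG).prod
        ((Measure.pi fun _ : Fin m => PA).prod (iid m stdG))) := by
  have h1 := measurePreserving_arrowProdEquivProdArrow (Fin n → ℝ) ((Fin kA → ℝ) × ℝ) (Fin m)
    (fun _ => iid n stdG) (fun _ => PA.prod stdG)
  have h2 := measurePreserving_arrowProdEquivProdArrow (Fin kA → ℝ) ℝ (Fin m)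
    (fun _ => PA) (fun _ => stdG)
  exact ((MeasurePreserving.id (Measure.pi fun _ : Fin m => iid n stdG)).prod h2).comp h1

section
variable {Δ : ℝ} {kA : ℕ} {PA : Measure (Fin kA → ℝ)} {φ : ℝ → (Fin kA → ℝ) → ℝ} {n m : ℕ}

lemma pCond_eq (k : ℝ) (Φ : Fin m → Fin n → ℝ) (x : Fin n → ℝ) (y : Fin m → ℝ) :
    pCond Δ PA φ n m k Φ x y = prodDens Δ PA φ (scaled k x) 0 Φ y := by
  simp [pCond, prodDens, smoothPout_zero, lin_scaled]

lemma pMarg_eq (P : Measure ℝ) (k : ℝ) (Φ : Fin m → Fin n → ℝ) (y : Fin m → ℝ) :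
    pMarg Δ PA φ n m P k Φ y = margDens Δ PA φ P k Φ y := by
  simp [pMarg, margDens, pCond_eq]

lemma Yobs_eq (k : ℝ) (x : Fin n → ℝ) (ω : Fin m → (Fin n → ℝ) × ((Fin kA → ℝ) × ℝ)) :
    Yobs Δ φ n m k (fun μ => (ω μ).1) x (fun μ => (ω μ).2.1) (fun μ => (ω μ).2.2)
      = sysOut Δ φ (scaled k x) ω := by
  ext μ; simp [Yobs, sysOut, out, lin_scaled]

end

section
variable {Δ : ℝ} {kA : ℕ} {PA : Measure (Fin kA → ℝ)} [IsProbabilityMeasure PA]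
  {φ : ℝ → (Fin kA → ℝ) → ℝ} {B : ℝ} {n m : ℕ}

instance : IsProbabilityMeasure (sysLaw PA n m) := by unfold sysLaw; infer_instance

lemma Regular.measurable_prodDens (h : Regular Δ φ B) {α : Type*} [MeasurableSpace α]
    {c : α → Fin n → ℝ} {τ : α → ℝ} {Φ : α → Fin m → Fin n → ℝ} {y : α → Fin m → ℝ}
    (hc : Measurable c) (hτ : Measurable τ) (hΦ : Measurable Φ) (hy : Measurable y) :
    Measurable fun a => prodDens Δ PA φ (c a) (τ a) (Φ a) (y a) := by
  unfold prodDens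
  refine Finset.measurable_prod _ fun μ _ => h.measurable_smoothPout ?_ ?_ hτ
  · exact (measurable_pi_apply μ).comp hy
  · exact measurable_lin_prod hc ((measurable_pi_apply μ).comp hΦ)

lemma Regular.measurable_margDens (h : Regular Δ φ B) {α : Type*} [MeasurableSpace α]
    {P : Measure ℝ} [IsProbabilityMeasure P] {k : ℝ} {Φ : α → Fin m → Fin n → ℝ}
    {y : α → Fin m → ℝ} (hΦ : Measurable Φ) (hy : Measurable y) :
    Measurable fun a => margDens Δ PA φ P k (Φ a) (y a) := by
  unfold margDens
  refine (StronglyMeasurable.integral_prod_right (f := fun a (x : Fin n → ℝ) =>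
    prodDens Δ PA φ (scaled k x) 0 (Φ a) (y a)) ?_).measurable
  exact (h.measurable_prodDens ((measurable_scaled k).comp measurable_snd) measurable_const
    (hΦ.comp measurable_fst) (hy.comp measurable_fst)).stronglyMeasurable

lemma Regular.measurable_sysOut (h : Regular Δ φ B) {α : Type*} [MeasurableSpace α]
    {c : α → Fin n → ℝ} {ω : α → Fin m → (Fin n → ℝ) × ((Fin kA → ℝ) × ℝ)} (hc : Measurable c)
    (hω : Measurable ω) : Measurable fun a => sysOut Δ φ (c a) (ω a) := by
  refine measurable_pi_lambda _ fun μ => ?_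
  have hμ : Measurable fun a => ω a μ := (measurable_pi_apply μ).comp hω
  exact h.measurable_out.comp ((measurable_lin_prod hc hμ.fst).prodMk hμ.snd)

lemma Regular.prodDens_pos (h : Regular Δ φ B) (c : Fin n → ℝ) (τ : ℝ) (Φ : Fin m → Fin n → ℝ)
    (y : Fin m → ℝ) : 0 < prodDens Δ PA φ c τ Φ y :=
  Finset.prod_pos fun _ _ => h.smoothPout_pos _ _ _

lemma Regular.prodDens_le (h : Regular Δ φ B) (c : Fin n → ℝ) (τ : ℝ) (Φ : Fin m → Fin n → ℝ)
    (y : Fin m → ℝ) : prodDens Δ PA φ c τ Φ y ≤ ∏ _μ : Fin m, (√(2 * π * Δ))⁻¹ :=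
  Finset.prod_le_prod (fun _ _ => (h.smoothPout_pos _ _ _).le) fun _ _ => h.smoothPout_le _ _ _

lemma Regular.le_prodDens (h : Regular Δ φ B) (c : Fin n → ℝ) (τ : ℝ) (Φ : Fin m → Fin n → ℝ)
    {y z : Fin m → ℝ} (hy : ∀ μ, |y μ - √Δ * z μ| ≤ B) :
    ∏ μ, ((√(2 * π * Δ))⁻¹ * exp (-(4 * B ^ 2 / Δ) - z μ ^ 2)) ≤ prodDens Δ PA φ c τ Φ y :=
  Finset.prod_le_prod (fun _ _ => (mul_pos h.const_pos (exp_pos _)).le)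
    fun μ _ => h.le_smoothPout (hy μ) _ _

lemma Regular.abs_sysOut_sub_le (h : Regular Δ φ B) (c : Fin n → ℝ)
    (ω : Fin m → (Fin n → ℝ) × ((Fin kA → ℝ) × ℝ)) (μ : Fin m) :
    |sysOut Δ φ c ω μ - √Δ * (ω μ).2.2| ≤ B := h.abs_out_sub_le _ _

lemma Regular.abs_log_le_sum (h : Regular Δ φ B) {z : Fin m → ℝ} {t : ℝ}
    (h1 : t ≤ ∏ _μ : Fin m, (√(2 * π * Δ))⁻¹)
    (h2 : ∏ μ, ((√(2 * π * Δ))⁻¹ * exp (-(4 * B ^ 2 / Δ) - z μ ^ 2)) ≤ t) :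
    |log t| ≤ ∑ μ, (logBound Δ B + z μ ^ 2) := by
  have hc := h.const_pos
  have hl (μ : Fin m) : 0 < (√(2 * π * Δ))⁻¹ * exp (-(4 * B ^ 2 / Δ) - z μ ^ 2) :=
    mul_pos hc (exp_pos _)
  have ht : 0 < t := (Finset.prod_pos fun μ _ => hl μ).trans_le h2
  have h0 : 0 ≤ 4 * B ^ 2 / Δ := by have := h.pos; positivity
  rw [abs_le]
  constructor
  · have := log_le_log (Finset.prod_pos fun μ _ => hl μ) h2
    rw [log_prod (fun μ _ => (hl μ).ne')] at this
    refine le_trans ?_ this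
    rw [← Finset.sum_neg_distrib]
    refine Finset.sum_le_sum fun μ _ => ?_
    rw [log_mul hc.ne' (exp_pos _).ne', log_exp]
    unfold logBound
    linarith [neg_abs_le (log (√(2 * π * Δ))⁻¹)]
  · have := log_le_log ht h1
    rw [log_prod (fun μ _ => hc.ne')] at this
    refine this.trans (Finset.sum_le_sum fun μ _ => ?_)
    unfold logBound
    linarith [le_abs_self (log (√(2 * π * Δ))⁻¹), sq_nonneg (z μ)]

lemma Regular.integrable_prodDens (h : Regular Δ φ B) {P : Measure ℝ} [IsProbabilityMeasure P]
    (k : ℝ) (Φ : Fin m → Fin n → ℝ) (y : Fin m → ℝ) :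
    Integrable (fun x => prodDens Δ PA φ (scaled k x) 0 Φ y) (iid n P) := by
  refine Integrable.of_bound (C := ∏ _μ : Fin m, (√(2 * π * Δ))⁻¹) ?_ (.of_forall fun x => ?_)
  · exact (h.measurable_prodDens (measurable_scaled k) measurable_const measurable_const
      measurable_const).aestronglyMeasurable
  · rw [Real.norm_eq_abs, abs_of_pos (h.prodDens_pos _ _ _ _)]
    exact h.prodDens_le _ _ _ _

lemma Regular.margDens_le (h : Regular Δ φ B) {P : Measure ℝ} [IsProbabilityMeasure P] (k : ℝ)
    (Φ : Fin m → Fin n → ℝ) (y : Fin m → ℝ) :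
    margDens Δ PA φ P k Φ y ≤ ∏ _μ : Fin m, (√(2 * π * Δ))⁻¹ := by
  have := integral_mono (h.integrable_prodDens (PA := PA) (P := P) k Φ y) (integrable_const _)
    fun x => h.prodDens_le (scaled k x) 0 Φ y
  simp only [integral_const, probReal_univ, one_smul] at this
  exact this

lemma Regular.le_margDens (h : Regular Δ φ B) {P : Measure ℝ} [IsProbabilityMeasure P] (k : ℝ)
    (Φ : Fin m → Fin n → ℝ) {y z : Fin m → ℝ} (hy : ∀ μ, |y μ - √Δ * z μ| ≤ B) :
    ∏ μ, ((√(2 * π * Δ))⁻¹ * exp (-(4 * B ^ 2 / Δ) - z μ ^ 2)) ≤ margDens Δ PA φ P k Φ y := by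
  have := integral_mono (integrable_const _) (h.integrable_prodDens (PA := PA) (P := P) k Φ y)
    fun x => h.le_prodDens (scaled k x) 0 Φ hy
  simp only [integral_const, probReal_univ, one_smul] at this
  exact this

lemma Regular.margDens_pos (h : Regular Δ φ B) {P : Measure ℝ} [IsProbabilityMeasure P] (k : ℝ)
    (Φ : Fin m → Fin n → ℝ) (y : Fin m → ℝ) : 0 < margDens Δ PA φ P k Φ y := by
  refine (Finset.prod_pos fun μ _ => ?_).trans_le (h.le_margDens k Φ (z := fun μ => y μ / √Δ) ?_)
  · exact mul_pos h.const_pos (exp_pos _)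
  · intro μ
    have := sqrt_pos.2 h.pos
    rw [mul_div_cancel₀ _ this.ne', sub_self, abs_zero]
    exact (abs_nonneg _).trans (h.bound 0 0)

lemma integrable_sum_bound (C : ℝ) : Integrable
    (fun ω : Fin m → (Fin n → ℝ) × ((Fin kA → ℝ) × ℝ) => ∑ μ, (C + (ω μ).2.2 ^ 2))
    (sysLaw PA n m) :=
  integrable_finsetSum _ fun μ _ =>
    integrable_comp_eval (μ := fun _ : Fin m => rowLaw PA n) (i := μ) (integrable_logBound_prod C)

lemma Regular.abs_log_prodDens_le (h : Regular Δ φ B) (c c' : Fin n → ℝ) (τ : ℝ)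
    (ω : Fin m → (Fin n → ℝ) × ((Fin kA → ℝ) × ℝ)) :
    |log (prodDens Δ PA φ c τ (fun μ => (ω μ).1) (sysOut Δ φ c' ω))|
      ≤ ∑ μ, (logBound Δ B + (ω μ).2.2 ^ 2) :=
  h.abs_log_le_sum (h.prodDens_le _ _ _ _) (h.le_prodDens _ _ _ (h.abs_sysOut_sub_le c' ω))

lemma Regular.abs_log_margDens_le (h : Regular Δ φ B) {P : Measure ℝ} [IsProbabilityMeasure P]
    (k : ℝ) (c' : Fin n → ℝ) (ω : Fin m → (Fin n → ℝ) × ((Fin kA → ℝ) × ℝ)) :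
    |log (margDens Δ PA φ P k (fun μ => (ω μ).1) (sysOut Δ φ c' ω))|
      ≤ ∑ μ, (logBound Δ B + (ω μ).2.2 ^ 2) :=
  h.abs_log_le_sum (h.margDens_le _ _ _) (h.le_margDens _ _ (h.abs_sysOut_sub_le c' ω))

lemma measurable_rows : Measurable fun (ω : Fin m → (Fin n → ℝ) × ((Fin kA → ℝ) × ℝ)) μ =>
    (ω μ).1 := by fun_prop

lemma Regular.integrable_log_prodDens (h : Regular Δ φ B) (c c' : Fin n → ℝ) (τ : ℝ) :
    Integrable (fun ω : Fin m → (Fin n → ℝ) × ((Fin kA → ℝ) × ℝ) =>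
      log (prodDens Δ PA φ c τ (fun μ => (ω μ).1) (sysOut Δ φ c' ω))) (sysLaw PA n m) :=
  (integrable_sum_bound (logBound Δ B)).mono'
    (h.measurable_prodDens measurable_const measurable_const measurable_rows
      (h.measurable_sysOut measurable_const measurable_id)).log.aestronglyMeasurable
    (.of_forall fun ω => h.abs_log_prodDens_le c c' τ ω)

lemma Regular.integrable_log_margDens (h : Regular Δ φ B) {P : Measure ℝ}
    [IsProbabilityMeasure P] (k : ℝ) (c' : Fin n → ℝ) :
    Integrable (fun ω : Fin m → (Fin n → ℝ) × ((Fin kA → ℝ) × ℝ) =>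
      log (margDens Δ PA φ P k (fun μ => (ω μ).1) (sysOut Δ φ c' ω))) (sysLaw PA n m) :=
  (integrable_sum_bound (logBound Δ B)).mono'
    (h.measurable_margDens measurable_rows
      (h.measurable_sysOut measurable_const measurable_id)).log.aestronglyMeasurable
    (.of_forall fun ω => h.abs_log_margDens_le k c' ω)

lemma Regular.integral_log_prodDens (h : Regular Δ φ B) (S : Finset (Fin n)) {c b : Fin n → ℝ}
    (hc : ∀ i ∉ S, c i = 0) (hb : ∀ i ∈ S, b i = 0) (τ : ℝ) :
    ∫ ω, log (prodDens Δ PA φ c τ (fun μ => (ω μ).1) (sysOut Δ φ (c + b) ω)) ∂(sysLaw PA n m)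
      = m * expLog Δ PA φ (∑ i, c i ^ 2) (∑ i, b i ^ 2) τ := by
  have hlog (ω : Fin m → (Fin n → ℝ) × ((Fin kA → ℝ) × ℝ)) :
      log (prodDens Δ PA φ c τ (fun μ => (ω μ).1) (sysOut Δ φ (c + b) ω))
        = ∑ μ, log (smoothPout Δ PA φ (out Δ φ (lin c (ω μ).1 + lin b (ω μ).1) (ω μ).2)
          (lin c (ω μ).1) τ) := by
    rw [prodDens, log_prod fun μ _ => (h.smoothPout_pos _ _ _).ne']
    simp [sysOut, lin_add]
  have hi : Integrable (fun p : (Fin n → ℝ) × ((Fin kA → ℝ) × ℝ) => log (smoothPout Δ PA φ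
      (out Δ φ (lin c p.1 + lin b p.1) p.2) (lin c p.1) τ)) (rowLaw PA n) :=
    h.integrable_log_out (PA := PA) (P := iid n stdG)
      (measurable_lin c) ((measurable_lin c).add (measurable_lin b)) τ
  simp only [hlog, sysLaw]
  rw [integral_finsetSum _ fun μ _ => integrable_comp_eval (μ := fun _ : Fin m => rowLaw PA n)
    (i := μ) hi]
  have (μ : Fin m) := integral_comp_eval (μ := fun _ : Fin m => rowLaw PA n) (i := μ) hi.1
  have h2 (μ : Fin m) := (this μ).trans (h.integral_row_log S hc hb τ)
  simp only [h2]
  simp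

/-- The mutual information in terms of the expected log marginal density. -/
lemma Regular.MI_eq (h : Regular Δ φ B) {P0 : Measure ℝ} {ρ : ℝ}
    [IsProbabilityMeasure (sparsePrior ρ P0)] : MI Δ PA φ P0 ρ n m
      = ∫ x, (m * expLog Δ PA φ (∑ i, scaled (n * ρ) x i ^ 2) 0 0
        - ∫ ω, log (margDens Δ PA φ (sparsePrior ρ P0) (n * ρ) (fun μ => (ω μ).1)
          (sysOut Δ φ (scaled (n * ρ) x) ω)) ∂(sysLaw PA n m)) ∂(iid n (sparsePrior ρ P0)) := by
  unfold MI
  refine integral_congr_ae (.of_forall fun x => ?_)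
  simp only
  set k := (n : ℝ) * ρ
  have h1 := h.integrable_log_prodDens (PA := PA) (m := m) (scaled k x) (scaled k x) 0
  have h2 := h.integrable_log_margDens (PA := PA) (m := m) (P := sparsePrior ρ P0) k (scaled k x)
  have h3 := h.integral_log_prodDens (PA := PA) (m := m) (c := scaled k x) (b := 0) Finset.univ
    (by simp) (by simp) 0
  simp only [add_zero, Pi.zero_apply, ne_eq, OfNat.ofNat_ne_zero, not_false_eq_true, zero_pow,
    Finset.sum_const_zero] at h3
  rw [← h3, ← integral_sub h1 h2]
  let F : (Fin m → Fin n → ℝ) × ((Fin m → Fin kA → ℝ) × (Fin m → ℝ)) → ℝ := fun p =>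
    log (pCond Δ PA φ n m k p.1 x (Yobs Δ φ n m k p.1 x p.2.1 p.2.2)
      / pMarg Δ PA φ n m (sparsePrior ρ P0) k p.1 (Yobs Δ φ n m k p.1 x p.2.1 p.2.2))
  have hY : Measurable fun p : (Fin m → Fin n → ℝ) × ((Fin m → Fin kA → ℝ) × (Fin m → ℝ)) =>
      Yobs Δ φ n m k p.1 x p.2.1 p.2.2 := by
    unfold Yobs
    refine measurable_pi_lambda _ fun μ => Measurable.add ?_ (by fun_prop)
    exact h.meas.comp (by fun_prop : Measurable fun p : (Fin m → Fin n → ℝ) ×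
      ((Fin m → Fin kA → ℝ) × (Fin m → ℝ)) => ((∑ i, p.1 μ i * x i) / √k, p.2.1 μ))
  have hF : Measurable F := by
    simp only [F, pCond_eq, pMarg_eq]
    exact ((h.measurable_prodDens measurable_const measurable_const measurable_fst hY).div
      (h.measurable_margDens measurable_fst hY)).log
  have hmp := measurePreserving_sysLaw PA n m
  have hFω (ω : Fin m → (Fin n → ℝ) × ((Fin kA → ℝ) × ℝ)) :
      F ((fun μ => (ω μ).1), ((fun μ => (ω μ).2.1), fun μ => (ω μ).2.2))
        = log (prodDens Δ PA φ (scaled k x) 0 (fun μ => (ω μ).1) (sysOut Δ φ (scaled k x) ω))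
          - log (margDens Δ PA φ (sparsePrior ρ P0) k (fun μ => (ω μ).1)
            (sysOut Δ φ (scaled k x) ω)) := by
    simp only [F, Yobs_eq, pCond_eq, pMarg_eq]
    exact log_div (h.prodDens_pos _ _ _ _).ne' (h.margDens_pos _ _ _).ne'
  have hFi : Integrable F ((Measure.pi fun _ : Fin m => iid n stdG).prod
      ((Measure.pi fun _ : Fin m => PA).prod (iid m stdG))) := by
    rw [← hmp.integrable_comp hF.aestronglyMeasurable]
    exact (h1.sub h2).congr (.of_forall fun ω => (hFω ω).symm)
  have e1 : ∫ ω, F ((fun μ => (ω μ).1), ((fun μ => (ω μ).2.1), fun μ => (ω μ).2.2))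
      ∂(sysLaw PA n m) = ∫ p, F p ∂((Measure.pi fun _ : Fin m => iid n stdG).prod
      ((Measure.pi fun _ : Fin m => PA).prod (iid m stdG))) := by
    rw [← hmp.map_eq]
    exact (integral_map hmp.measurable.aemeasurable hF.aestronglyMeasurable).symm
  simp only [hFω] at e1
  rw [e1, integral_prod _ hFi]
  refine integral_congr_ae ?_
  filter_upwards [hFi.prod_right_ae] with Φ hΦ
  exact (integral_prod _ hΦ).symm

end

lemma lintegral_pi_prod {ι α : Type*} [Fintype ι] [MeasurableSpace α] {P : Measure α}
    [IsProbabilityMeasure P] {f : ι → α → ENNReal} (hf : ∀ i, Measurable (f i)) :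
    ∫⁻ ω, ∏ i, f i (ω i) ∂(Measure.pi fun _ : ι => P) = ∏ i, ∫⁻ a, f i a ∂P := by
  rw [lintegral_prod_eq_prod_lintegral_of_indepFun Finset.univ (fun i (ω : ι → α) => f i (ω i))
    (iIndepFun_pi fun i => (hf i).aemeasurable) fun i => (hf i).comp (measurable_pi_apply i)]
  exact Finset.prod_congr rfl fun i _ =>
    (measurePreserving_eval (fun _ : ι => P) i).lintegral_comp (hf i)

/-- The vectors whose support meets `T` exactly in `A`. -/
def supportEvent {n : ℕ} (T A : Finset (Fin n)) : Set (Fin n → ℝ) :=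
  {x | T.filter (fun i => x i ≠ 0) = A}

lemma measurableSet_supportEvent {n : ℕ} (T A : Finset (Fin n)) :
    MeasurableSet (supportEvent T A) := by
  have : supportEvent T A = ⋂ i, {x : Fin n → ℝ | (i ∈ T ∧ x i ≠ 0) ↔ i ∈ A} := by
    ext x; simp [supportEvent, Finset.ext_iff]
  rw [this]
  refine MeasurableSet.iInter fun i => ?_
  have h0 : MeasurableSet {x : Fin n → ℝ | x i ≠ 0} :=
    (measurableSet_eq_fun (measurable_pi_apply i) measurable_const).compl
  by_cases hT : i ∈ T <;> by_cases hA : i ∈ A <;> simp only [hT, hA, true_and, false_and, iff_true,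
    iff_false, MeasurableSet.const, not_not]
  · exact h0
  · exact measurableSet_eq_fun (measurable_pi_apply i) measurable_const

lemma measure_supportEvent_le {n : ℕ} {P : Measure ℝ} [IsProbabilityMeasure P] {p : ENNReal}
    (hp : P {x | x ≠ 0} ≤ p) (T A : Finset (Fin n)) :
    iid n P (supportEvent T A) ≤ p ^ A.card := by
  have hsub : supportEvent T A ⊆ Set.univ.pi fun i => if i ∈ A then {x : ℝ | x ≠ 0} else Set.univ := by
    intro x hx i _
    by_cases hi : i ∈ A
    · have hx' : T.filter (fun i => x i ≠ 0) = A := hx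
      rw [← hx', Finset.mem_filter] at hi
      have hi' : i ∈ A := by rw [← hx', Finset.mem_filter]; exact hi
      simpa [hi'] using hi.2
    · simp [hi]
  refine (measure_mono hsub).trans ?_
  rw [iid, Measure.pi_pi, ← Finset.prod_const, ← Finset.prod_subset (Finset.subset_univ A)]
  · refine Finset.prod_le_prod' fun i hi => ?_
    simpa [hi] using hp
  · intro i _ hi; simp [hi]

section
variable {Δ : ℝ} {kA : ℕ} {PA : Measure (Fin kA → ℝ)} [IsProbabilityMeasure PA]
  {φ : ℝ → (Fin kA → ℝ) → ℝ} {B : ℝ} {n m : ℕ}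

lemma Regular.lintegral_prodDens_div (h : Regular Δ φ B) (S : Finset (Fin n)) {c b d : Fin n → ℝ}
    (hc : ∀ i ∉ S, c i = 0) (hb : ∀ i ∈ S, b i = 0) (hd : ∀ i ∉ S, d i = 0) :
    ∫⁻ ω, ENNReal.ofReal (prodDens Δ PA φ d 0 (fun μ => (ω μ).1) (sysOut Δ φ (c + b) ω)
      / prodDens Δ PA φ c (∑ i, b i ^ 2) (fun μ => (ω μ).1) (sysOut Δ φ (c + b) ω))
      ∂(sysLaw PA n m) = 1 := by
  let f : (Fin n → ℝ) × ((Fin kA → ℝ) × ℝ) → ENNReal := fun p =>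
    ENNReal.ofReal (smoothPout Δ PA φ (out Δ φ (lin c p.1 + lin b p.1) p.2) (lin d p.1) 0)
      / ENNReal.ofReal (smoothPout Δ PA φ
        (out Δ φ (lin c p.1 + lin b p.1) p.2) (lin c p.1) (∑ i, b i ^ 2))
  have ho : Measurable fun p : (Fin n → ℝ) × ((Fin kA → ℝ) × ℝ) =>
      out Δ φ (lin c p.1 + lin b p.1) p.2 := by
    have h1 := h.measurable_out.comp ((((measurable_lin c).add (measurable_lin b)).comp
      measurable_fst).prodMk (measurable_snd (α := Fin n → ℝ) (β := (Fin kA → ℝ) × ℝ)))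
    exact h1
  have hf : Measurable f :=
    (h.measurable_smoothPout ho ((measurable_lin d).comp measurable_fst)
      measurable_const).ennreal_ofReal.div
    (h.measurable_smoothPout ho ((measurable_lin c).comp measurable_fst)
      measurable_const).ennreal_ofReal
  have hrow : ∫⁻ p, f p ∂(rowLaw PA n) = 1 := by
    have hg : Measurable (Function.uncurry fun (r : Fin n → ℝ) (y : ℝ) =>
        ENNReal.ofReal (smoothPout Δ PA φ y (lin d r) 0)) :=
      (h.measurable_smoothPout measurable_snd ((measurable_lin d).comp measurable_fst)
        measurable_const).ennreal_ofReal
    have e := h.lintegral_row_div (PA := PA) S hc hb hg fun r r' y => by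
      rw [lin_piecewise_left hd]
    refine e.trans ?_
    simp only [h.lintegral_ofReal_smoothPout, lintegral_const, measure_univ, mul_one]
  have hfω (ω : Fin m → (Fin n → ℝ) × ((Fin kA → ℝ) × ℝ)) :
      ENNReal.ofReal (prodDens Δ PA φ d 0 (fun μ => (ω μ).1) (sysOut Δ φ (c + b) ω)
      / prodDens Δ PA φ c (∑ i, b i ^ 2) (fun μ => (ω μ).1) (sysOut Δ φ (c + b) ω))
      = ∏ μ, f (ω μ) := by
    simp only [prodDens, ← Finset.prod_div_distrib, f, sysOut, lin_add]
    rw [ENNReal.ofReal_prod_of_nonneg fun μ _ =>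
      (div_pos (h.smoothPout_pos _ _ _) (h.smoothPout_pos _ _ _)).le]
    exact Finset.prod_congr rfl fun μ _ => ENNReal.ofReal_div_of_pos (h.smoothPout_pos _ _ _)
  simp only [hfω, sysLaw, lintegral_pi_prod fun _ => hf, hrow, Finset.prod_const_one]

lemma Regular.lintegral_exp_prodDens (h : Regular Δ φ B) (S : Finset (Fin n)) {c b : Fin n → ℝ}
    (hc : ∀ i ∉ S, c i = 0) (hb : ∀ i ∈ S, b i = 0) (τ : ℝ) {s : ℝ}
    (hs : 0 ≤ s) (hs1 : s * (2 * logBound Δ B + 1) ≤ 1) :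
    ∫⁻ ω, ENNReal.ofReal (exp (s * (log (prodDens Δ PA φ c τ (fun μ => (ω μ).1)
      (sysOut Δ φ (c + b) ω)) - m * expLog Δ PA φ (∑ i, c i ^ 2) (∑ i, b i ^ 2) τ)))
      ∂(sysLaw PA n m)
      ≤ ENNReal.ofReal (exp (m * (s ^ 2 * ∫ z, (2 * logBound Δ B + 1 + z ^ 2) ^ 2 ∂stdG))) := by
  let f : (Fin n → ℝ) × ((Fin kA → ℝ) × ℝ) → ENNReal := fun p =>
    ENNReal.ofReal (exp (s * (log (smoothPout Δ PA φ
      (out Δ φ (lin c p.1 + lin b p.1) p.2) (lin c p.1) τ) -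
        expLog Δ PA φ (∑ i, c i ^ 2) (∑ i, b i ^ 2) τ)))
  have ho : Measurable fun p : (Fin n → ℝ) × ((Fin kA → ℝ) × ℝ) =>
      out Δ φ (lin c p.1 + lin b p.1) p.2 := by
    have h1 := h.measurable_out.comp ((((measurable_lin c).add (measurable_lin b)).comp
      measurable_fst).prodMk (measurable_snd (α := Fin n → ℝ) (β := (Fin kA → ℝ) × ℝ)))
    exact h1
  have hf : Measurable f := by
    have := (h.measurable_smoothPout (PA := PA) ho ((measurable_lin c).comp measurable_fst)
      (measurable_const (a := τ))).log
    exact (((this.sub_const _).const_mul s).exp).ennreal_ofReal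
  have hfω (ω : Fin m → (Fin n → ℝ) × ((Fin kA → ℝ) × ℝ)) :
      ENNReal.ofReal (exp (s * (log (prodDens Δ PA φ c τ (fun μ => (ω μ).1)
      (sysOut Δ φ (c + b) ω)) - m * expLog Δ PA φ (∑ i, c i ^ 2) (∑ i, b i ^ 2) τ)))
      = ∏ μ, f (ω μ) := by
    rw [← ENNReal.ofReal_prod_of_nonneg fun μ _ => (exp_pos _).le, ← exp_sum, prodDens,
      log_prod fun μ _ => (h.smoothPout_pos _ _ _).ne']
    simp only [← Finset.mul_sum, Finset.sum_sub_distrib, sysOut, lin_add, Finset.sum_const,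
      Finset.card_univ, Fintype.card_fin, nsmul_eq_mul]
  simp only [hfω, sysLaw, lintegral_pi_prod fun _ => hf]
  rw [Finset.prod_const, Finset.card_univ, Fintype.card_fin, exp_nat_mul,
    ENNReal.ofReal_pow (exp_pos _).le]
  exact pow_le_pow_left' (h.lintegral_row_exp S hc hb τ hs hs1) m

end

lemma exp_mul_add_le {s : ℝ} (hs : 0 < s) (u w : ℝ) :
    exp (s / (1 + s) * (u + w)) ≤ s / (1 + s) * exp u + (1 / (1 + s)) * exp (s * w) := by
  have h1 : 0 < 1 + s := by linarith
  have := convexOn_exp.2 (Set.mem_univ u) (Set.mem_univ (s * w)) (div_pos hs h1).le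
    (one_div_pos.2 h1).le (by field_simp; ring)
  simp only [smul_eq_mul] at this
  refine le_trans (le_of_eq ?_) this
  congr 1
  field_simp

lemma measurable_scaled_snd {n : ℕ} {α : Type*} [MeasurableSpace α] (k : ℝ) :
    Measurable fun p : α × (Fin n → ℝ) => scaled k p.2 := by
  unfold scaled; fun_prop

/-- If `L` is dominated at every point by one of finitely many `log R + X`, where each `R` has
mean at most one and each `X` has a controlled exponential moment, then the mean of `L` is small. -/
lemma integral_le_of_exists_le_log_add {Ω ι : Type*} [MeasurableSpace Ω] {Q : Measure Ω}
    [IsProbabilityMeasure Q] {L : Ω → ℝ} (hL : Integrable L Q) {F : Finset ι} (hF : F.Nonempty)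
    {R X : ι → Ω → ℝ} (hRm : ∀ A ∈ F, Measurable (R A)) (hR0 : ∀ A ω, 0 ≤ R A ω)
    (hXm : ∀ A ∈ F, Measurable (X A)) {s N : ℝ} (hs : 0 < s) (hN : 1 ≤ N)
    (hR : ∀ A ∈ F, ∫⁻ ω, ENNReal.ofReal (R A ω) ∂Q ≤ 1)
    (hX : ∀ A ∈ F, ∫⁻ ω, ENNReal.ofReal (exp (s * X A ω)) ∂Q ≤ ENNReal.ofReal N)
    (h : ∀ ω, ∃ A ∈ F, 0 < R A ω ∧ L ω ≤ log (R A ω) + X A ω) :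
    ∫ ω, L ω ∂Q ≤ (1 + s) / s * (log F.card + log N) := by
  have h1s : 0 < 1 + s := by linarith
  have hF0 : (0 : ℝ) < F.card := by exact_mod_cast hF.card_pos
  have hpt (ω) : exp (s / (1 + s) * L ω) ≤ ∑ A ∈ F,
      (s / (1 + s) * R A ω + 1 / (1 + s) * exp (s * X A ω)) := by
    obtain ⟨A, hA, hp, hle⟩ := h ω
    have h2 := exp_mul_add_le hs (log (R A ω)) (X A ω)
    rw [exp_log hp] at h2
    refine (exp_le_exp.2 (mul_le_mul_of_nonneg_left hle (div_pos hs h1s).le)).trans (h2.trans ?_)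
    exact Finset.single_le_sum (f := fun A => s / (1 + s) * R A ω + 1 / (1 + s) * exp (s * X A ω))
      (fun A' _ => by have := hR0 A' ω; positivity) hA
  have hint : ∫⁻ ω, ENNReal.ofReal (exp (s / (1 + s) * L ω)) ∂Q
      ≤ ENNReal.ofReal (F.card * N) := by
    calc _ ≤ ∫⁻ ω, ∑ A ∈ F, (ENNReal.ofReal (s / (1 + s)) * ENNReal.ofReal (R A ω)
          + ENNReal.ofReal (1 / (1 + s)) * ENNReal.ofReal (exp (s * X A ω))) ∂Q := by
          refine lintegral_mono fun ω => (ENNReal.ofReal_le_ofReal (hpt ω)).trans (le_of_eq ?_)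
          rw [ENNReal.ofReal_sum_of_nonneg fun A _ => by have := hR0 A ω; positivity]
          refine Finset.sum_congr rfl fun A _ => ?_
          rw [ENNReal.ofReal_add (by have := hR0 A ω; positivity) (by positivity),
            ENNReal.ofReal_mul (by positivity), ENNReal.ofReal_mul (by positivity)]
      _ = ∑ A ∈ F, (∫⁻ ω, (ENNReal.ofReal (s / (1 + s)) * ENNReal.ofReal (R A ω)
          + ENNReal.ofReal (1 / (1 + s)) * ENNReal.ofReal (exp (s * X A ω))) ∂Q) := by
          refine lintegral_finsetSum' _ fun A hA => ?_
          exact (((hRm A hA).ennreal_ofReal.const_mul _).add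
            (((hXm A hA).const_mul s).exp.ennreal_ofReal.const_mul _)).aemeasurable
      _ ≤ ∑ A ∈ F, ENNReal.ofReal N := by
          refine Finset.sum_le_sum fun A hA => ?_
          rw [lintegral_add_right _ (((hXm A hA).const_mul s).exp.ennreal_ofReal.const_mul _),
            lintegral_const_mul' _ _ ENNReal.ofReal_ne_top,
            lintegral_const_mul' _ _ ENNReal.ofReal_ne_top]
          calc _ ≤ ENNReal.ofReal (s / (1 + s)) * ENNReal.ofReal N
                + ENNReal.ofReal (1 / (1 + s)) * ENNReal.ofReal N := by
                gcongr
                · refine (hR A hA).trans ?_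
                  rw [← ENNReal.ofReal_one]
                  exact ENNReal.ofReal_le_ofReal hN
                · exact hX A hA
            _ = _ := by
                rw [← add_mul, ← ENNReal.ofReal_add (by positivity) (by positivity)]
                have : s / (1 + s) + 1 / (1 + s) = 1 := by field_simp; ring
                rw [this, ENNReal.ofReal_one, one_mul]
      _ = _ := by
          rw [Finset.sum_const, nsmul_eq_mul, ENNReal.ofReal_mul hF0.le, ENNReal.ofReal_natCast]
  have hmain := integral_le_log_of_lintegral_exp_le (hL.const_mul (s / (1 + s)))
    (by positivity : 0 < F.card * N) hint
  rw [integral_const_mul, log_mul hF0.ne' (by positivity)] at hmain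
  have := mul_le_mul_of_nonneg_left hmain (by positivity : 0 ≤ (1 + s) / s)
  rwa [← mul_assoc, show (1 + s) / s * (s / (1 + s)) = 1 by field_simp, one_mul] at this

section
variable {Δ : ℝ} {kA : ℕ} {PA : Measure (Fin kA → ℝ)} [IsProbabilityMeasure PA]
  {φ : ℝ → (Fin kA → ℝ) → ℝ} {B : ℝ} {n m : ℕ}

lemma Regular.lintegral_supportEvent_div (h : Regular Δ φ B) {P : Measure ℝ}
    [IsProbabilityMeasure P] {k ρ : ℝ} (hρ : 0 < ρ) (hP : P {x | x ≠ 0} ≤ ENNReal.ofReal ρ)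
    {T A : Finset (Fin n)} {c b : Fin n → ℝ} (hc : ∀ i ∉ A, c i = 0)
    (hb : ∀ i ∉ T \ A, b i = 0) :
    ∫⁻ ω, ENNReal.ofReal ((∫ x in supportEvent T A, prodDens Δ PA φ (scaled k x) 0
        (fun μ => (ω μ).1) (sysOut Δ φ (c + b) ω) ∂(iid n P))
      / (prodDens Δ PA φ c (∑ i, b i ^ 2) (fun μ => (ω μ).1) (sysOut Δ φ (c + b) ω)
        * ρ ^ A.card)) ∂(sysLaw PA n m) ≤ 1 := by
  have hρA : 0 < ρ ^ A.card := pow_pos hρ _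
  have hE := measurableSet_supportEvent T A
  let f : (Fin m → (Fin n → ℝ) × ((Fin kA → ℝ) × ℝ)) → (Fin n → ℝ) → ENNReal := fun ω x =>
    ENNReal.ofReal (prodDens Δ PA φ (scaled k x) 0 (fun μ => (ω μ).1) (sysOut Δ φ (c + b) ω)
      / prodDens Δ PA φ c (∑ i, b i ^ 2) (fun μ => (ω μ).1) (sysOut Δ φ (c + b) ω))
  have hf : Measurable (Function.uncurry f) := by
    have hY : Measurable fun p : (Fin m → (Fin n → ℝ) × ((Fin kA → ℝ) × ℝ)) × (Fin n → ℝ) =>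
        sysOut Δ φ (c + b) p.1 := h.measurable_sysOut measurable_const measurable_fst
    have hΦ : Measurable fun p : (Fin m → (Fin n → ℝ) × ((Fin kA → ℝ) × ℝ)) × (Fin n → ℝ) =>
        fun μ => (p.1 μ).1 := by fun_prop
    have hs : Measurable fun p : (Fin m → (Fin n → ℝ) × ((Fin kA → ℝ) × ℝ)) × (Fin n → ℝ) =>
        scaled k p.2 := measurable_scaled_snd k
    exact ((h.measurable_prodDens hs measurable_const hΦ hY).div
      (h.measurable_prodDens measurable_const measurable_const hΦ hY)).ennreal_ofReal
  have hR (ω : Fin m → (Fin n → ℝ) × ((Fin kA → ℝ) × ℝ)) :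
      ENNReal.ofReal ((∫ x in supportEvent T A, prodDens Δ PA φ (scaled k x) 0
        (fun μ => (ω μ).1) (sysOut Δ φ (c + b) ω) ∂(iid n P))
      / (prodDens Δ PA φ c (∑ i, b i ^ 2) (fun μ => (ω μ).1) (sysOut Δ φ (c + b) ω)
        * ρ ^ A.card))
      = ENNReal.ofReal (ρ ^ A.card)⁻¹ * ∫⁻ x in supportEvent T A, f ω x ∂(iid n P) := by
    have hp := h.prodDens_pos (PA := PA) c (∑ i, b i ^ 2) (fun μ => (ω μ).1) (sysOut Δ φ (c + b) ω)
    rw [mul_comm _ (ρ ^ A.card), ← div_div, div_right_comm, div_eq_inv_mul _ (ρ ^ A.card),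
      ENNReal.ofReal_mul (inv_pos.2 hρA).le, ← integral_div,
      ofReal_integral_eq_lintegral_ofReal]
    · exact ((h.integrable_prodDens k _ _).integrableOn).div_const _
    · exact .of_forall fun x => (div_pos (h.prodDens_pos _ _ _ _) hp).le
  simp only [hR]
  rw [lintegral_const_mul' _ _ ENNReal.ofReal_ne_top, lintegral_lintegral_swap hf.aemeasurable]
  have hin : ∀ x ∈ supportEvent T A, ∫⁻ ω, f ω x ∂(sysLaw PA n m) = 1 := by
    intro x hx
    refine h.lintegral_prodDens_div (PA := PA) (T \ A)ᶜ ?_ ?_ ?_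
    · intro i hi
      refine hc i fun h' => ?_
      simp [h'] at hi
    · intro i hi
      exact hb i (by simpa using hi)
    · intro i hi
      simp only [Finset.mem_compl, not_not, Finset.mem_sdiff] at hi
      have hx' : T.filter (fun i => x i ≠ 0) = A := hx
      have : x i = 0 := by
        by_contra h0
        exact hi.2 (hx' ▸ Finset.mem_filter.2 ⟨hi.1, h0⟩)
      simp [scaled, this]
  rw [setLIntegral_congr_fun hE hin, setLIntegral_const, one_mul]
  calc _ ≤ ENNReal.ofReal (ρ ^ A.card)⁻¹ * ENNReal.ofReal ρ ^ A.card := by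
        gcongr; exact measure_supportEvent_le hP T A
    _ = 1 := by
        rw [← ENNReal.ofReal_pow hρ.le, ← ENNReal.ofReal_mul (inv_pos.2 hρA).le,
          inv_mul_cancel₀ hρA.ne', ENNReal.ofReal_one]

lemma Regular.margDens_eq_sum (h : Regular Δ φ B) {P : Measure ℝ} [IsProbabilityMeasure P]
    (k : ℝ) (T : Finset (Fin n)) (Φ : Fin m → Fin n → ℝ) (y : Fin m → ℝ) :
    margDens Δ PA φ P k Φ y = ∑ A ∈ T.powerset, ∫ x in supportEvent T A,
      prodDens Δ PA φ (scaled k x) 0 Φ y ∂(iid n P) := by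
  rw [← integral_biUnion_finset]
  · rw [margDens, ← setIntegral_univ]
    congr 2
    refine (Set.eq_univ_of_forall fun x => ?_).symm
    simp only [Set.mem_iUnion]
    exact ⟨_, Finset.mem_powerset.2 (Finset.filter_subset (fun i => x i ≠ 0) T), rfl⟩
  · exact fun A _ => measurableSet_supportEvent T A
  · intro A _ A' _ hne
    refine Set.disjoint_left.2 fun x hx hx' => hne ?_
    exact (show _ = A from hx).symm.trans hx'
  · exact fun A _ => (h.integrable_prodDens k Φ y).integrableOn

lemma Regular.exists_log_margDens_le (h : Regular Δ φ B) {P : Measure ℝ}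
    [IsProbabilityMeasure P] (k : ℝ) {ρ : ℝ} (hρ : 0 < ρ) (T : Finset (Fin n))
    {D : Finset (Fin n) → ℝ}
    {D0 : ℝ} (hD : ∀ A ∈ T.powerset, D A + A.card * log ρ ≤ D0) (Φ : Fin m → Fin n → ℝ)
    (y : Fin m → ℝ) (p : Finset (Fin n) → ℝ) (hp : ∀ A, 0 < p A) :
    ∃ A ∈ T.powerset, 0 < (∫ x in supportEvent T A, prodDens Δ PA φ (scaled k x) 0 Φ y
        ∂(iid n P)) / (p A * ρ ^ A.card) ∧
      log (margDens Δ PA φ P k Φ y) - (T.card * log 2 + D0)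
        ≤ log ((∫ x in supportEvent T A, prodDens Δ PA φ (scaled k x) 0 Φ y
          ∂(iid n P)) / (p A * ρ ^ A.card)) + (log (p A) - D A) := by
  have hM := h.margDens_pos (PA := PA) (P := P) k Φ y
  have h2 : (0 : ℝ) < 2 ^ T.card := by positivity
  obtain ⟨A, hAT, hA⟩ : ∃ A ∈ T.powerset, margDens Δ PA φ P k Φ y / 2 ^ T.card
      ≤ ∫ x in supportEvent T A, prodDens Δ PA φ (scaled k x) 0 Φ y ∂(iid n P) := by
    refine Finset.exists_le_of_sum_le ⟨∅, by simp⟩ (le_of_eq ?_)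
    rw [Finset.sum_const, Finset.card_powerset, nsmul_eq_mul, ← h.margDens_eq_sum k T Φ y]
    push_cast
    exact mul_div_cancel₀ _ h2.ne'
  have hG := (div_pos hM h2).trans_le hA
  have hρA : 0 < ρ ^ A.card := pow_pos hρ _
  refine ⟨A, hAT, div_pos hG (mul_pos (hp A) hρA), ?_⟩
  have hle := log_le_log (div_pos hM h2) hA
  rw [log_div hM.ne' h2.ne', log_pow] at hle
  rw [log_div hG.ne' (mul_pos (hp A) hρA).ne', log_mul (hp A).ne' hρA.ne', log_pow]
  linarith [hD A hAT]

lemma Regular.measurable_setIntegral_prodDens (h : Regular Δ φ B) {P : Measure ℝ}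
    [IsProbabilityMeasure P] (k : ℝ) (c : Fin n → ℝ) (E : Set (Fin n → ℝ)) :
    Measurable fun ω : Fin m → (Fin n → ℝ) × ((Fin kA → ℝ) × ℝ) => ∫ x in E,
      prodDens Δ PA φ (scaled k x) 0 (fun μ => (ω μ).1) (sysOut Δ φ c ω) ∂(iid n P) := by
  refine (StronglyMeasurable.integral_prod_right (ν := (iid n P).restrict E)
    (f := fun (ω : Fin m → (Fin n → ℝ) × ((Fin kA → ℝ) × ℝ)) (x : Fin n → ℝ) =>
      prodDens Δ PA φ (scaled k x) 0 (fun μ => (ω μ).1) (sysOut Δ φ c ω)) ?_).measurable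
  exact (h.measurable_prodDens (measurable_scaled_snd k) measurable_const (by fun_prop)
    (h.measurable_sysOut measurable_const measurable_fst)).stronglyMeasurable

/-- An upper bound on the conditional free entropy for a fixed signal: a large posterior weight
can only come from a partial recovery `A` of the support `T`. -/
lemma Regular.integral_log_margDens_le (h : Regular Δ φ B) {P : Measure ℝ}
    [IsProbabilityMeasure P] (k : ℝ) {ρ : ℝ} (hρ : 0 < ρ) (hP : P {x | x ≠ 0} ≤ ENNReal.ofReal ρ)
    {T : Finset (Fin n)} {c : Fin n → ℝ} (hc : ∀ i ∉ T, c i = 0) {s : ℝ} (hs : 0 < s)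
    (hs1 : s * (2 * logBound Δ B + 1) ≤ 1) {D : ℝ}
    (hD : ∀ A ∈ T.powerset, m * expLog Δ PA φ (∑ i ∈ A, c i ^ 2) (∑ i ∈ T \ A, c i ^ 2)
      (∑ i ∈ T \ A, c i ^ 2) + A.card * log ρ ≤ D) :
    ∫ ω, log (margDens Δ PA φ P k (fun μ => (ω μ).1) (sysOut Δ φ c ω)) ∂(sysLaw PA n m)
      ≤ D + T.card * log 2 + (1 + s) / s *
        (T.card * log 2 + m * (s ^ 2 * ∫ z, (2 * logBound Δ B + 1 + z ^ 2) ^ 2 ∂stdG)) := by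
  set V := ∫ z, (2 * logBound Δ B + 1 + z ^ 2) ^ 2 ∂stdG with hV
  have hV0 : 0 ≤ V := integral_nonneg fun z => sq_nonneg _
  let cA : Finset (Fin n) → Fin n → ℝ := fun A i => if i ∈ A then c i else 0
  have hsum (A : Finset (Fin n)) : ∑ i, cA A i ^ 2 = ∑ i ∈ A, c i ^ 2 := by
    simp [cA, ite_pow, Finset.sum_ite_mem]
  have hdec : ∀ A ∈ T.powerset, cA A + cA (T \ A) = c := by
    intro A hA
    ext i
    by_cases hT : i ∈ T <;> by_cases hi : i ∈ A <;> simp [cA, hT, hi, hc]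
  let p : Finset (Fin n) → (Fin m → (Fin n → ℝ) × ((Fin kA → ℝ) × ℝ)) → ℝ := fun A ω =>
    prodDens Δ PA φ (cA A) (∑ i ∈ T \ A, c i ^ 2) (fun μ => (ω μ).1) (sysOut Δ φ c ω)
  let D' : Finset (Fin n) → ℝ := fun A => m * expLog Δ PA φ (∑ i ∈ A, c i ^ 2)
    (∑ i ∈ T \ A, c i ^ 2) (∑ i ∈ T \ A, c i ^ 2)
  let R : Finset (Fin n) → (Fin m → (Fin n → ℝ) × ((Fin kA → ℝ) × ℝ)) → ℝ := fun A ω =>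
    (∫ x in supportEvent T A, prodDens Δ PA φ (scaled k x) 0 (fun μ => (ω μ).1) (sysOut Δ φ c ω)
      ∂(iid n P)) / (p A ω * ρ ^ A.card)
  have hp0 (A ω) : 0 < p A ω := h.prodDens_pos _ _ _ _
  have hpm (A : Finset (Fin n)) : Measurable (p A) :=
    h.measurable_prodDens measurable_const measurable_const measurable_rows
      (h.measurable_sysOut measurable_const measurable_id)
  have hX : ∀ A ∈ T.powerset, ∫⁻ ω, ENNReal.ofReal (exp (s * (log (p A ω) - D' A)))
      ∂(sysLaw PA n m) ≤ ENNReal.ofReal (exp (m * (s ^ 2 * V))) := by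
    intro A hA
    have := h.lintegral_exp_prodDens (PA := PA) (m := m) A (c := cA A) (b := cA (T \ A))
      (fun i hi => by simp [cA, hi]) (fun i hi => by simp [cA, hi]) (∑ i ∈ T \ A, c i ^ 2) hs.le hs1
    simp only [hdec A hA, hsum] at this
    exact this
  have hR : ∀ A ∈ T.powerset, ∫⁻ ω, ENNReal.ofReal (R A ω) ∂(sysLaw PA n m) ≤ 1 := by
    intro A hA
    have := h.lintegral_supportEvent_div (PA := PA) (m := m) (T := T) (k := k) hρ hP
      (A := A) (c := cA A) (b := cA (T \ A)) (fun i hi => by simp [cA, hi])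
      (fun i hi => by simp only [cA, if_neg hi])
    simp only [hdec A hA, hsum] at this
    exact this
  have hR0 (A ω) : 0 ≤ R A ω :=
    div_nonneg (integral_nonneg fun x => (h.prodDens_pos _ _ _ _).le)
      (mul_pos (hp0 A ω) (pow_pos hρ _)).le
  have hL := h.integrable_log_margDens (PA := PA) (m := m) (P := P) k c
  have hmain := integral_le_of_exists_le_log_add (hL.sub (integrable_const (T.card * log 2 + D)))
    (F := T.powerset) ⟨∅, by simp⟩ (R := R) (X := fun A ω => log (p A ω) - D' A)
    (fun A _ => (h.measurable_setIntegral_prodDens k c _).div ((hpm A).mul_const _)) hR0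
    (fun A _ => (hpm A).log.sub_const _) hs (one_le_exp (by positivity)) hR hX
    (fun ω => h.exists_log_margDens_le k hρ T (D := D') hD _ _ (fun A => p A ω) fun A => hp0 A ω)
  simp only [Pi.sub_apply] at hmain
  rw [integral_sub hL (integrable_const _), integral_const, probReal_univ,
    one_smul, log_exp, Finset.card_powerset] at hmain
  push_cast at hmain
  rw [log_pow] at hmain
  linarith

end

section
variable {ρ : ℝ} {P0 : Measure ℝ}

lemma isProbabilityMeasure_sparsePrior [IsProbabilityMeasure P0] (h0 : 0 < ρ) (h1 : ρ < 1) :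
    IsProbabilityMeasure (sparsePrior ρ P0) := by
  constructor
  simp only [sparsePrior, Measure.coe_add, Measure.coe_smul, Pi.add_apply, Pi.smul_apply,
    measure_univ, smul_eq_mul, mul_one]
  rw [← ENNReal.ofReal_add (by linarith) h0.le]
  simp

lemma sparsePrior_ne_zero_le [IsProbabilityMeasure P0] :
    sparsePrior ρ P0 {x | x ≠ 0} ≤ ENNReal.ofReal ρ := by
  have : MeasurableSet {x : ℝ | x ≠ 0} := measurableSet_eq_fun measurable_id measurable_const |>.compl
  simp only [sparsePrior, Measure.coe_add, Measure.coe_smul, Pi.add_apply, Pi.smul_apply,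
    smul_eq_mul, Measure.dirac_apply' _ this]
  simp only [ne_eq, Set.mem_ofPred_eq, not_true_eq_false, not_false_eq_true,
    Set.indicator_of_notMem, mul_zero, zero_add]
  exact (mul_le_mul_right prob_le_one _).trans (mul_one _).le

lemma ae_sparsePrior {p : ℝ → Prop} (h0 : p 0) (h : ∀ᵐ x ∂P0, p x) :
    ∀ᵐ x ∂(sparsePrior ρ P0), p x := by
  unfold sparsePrior
  rw [ae_add_measure_iff]
  refine ⟨Measure.ae_smul_measure ?_ _, Measure.ae_smul_measure h _⟩
  rw [ae_dirac_eq]; exact h0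

lemma ae_iid {P : Measure ℝ} [IsProbabilityMeasure P] {p : ℝ → Prop} (h : ∀ᵐ x ∂P, p x) (n : ℕ) :
    ∀ᵐ x ∂(iid n P), ∀ i, p (x i) := by
  rw [ae_all_iff]
  exact fun i => (measurePreserving_eval (fun _ : Fin n => P) i).quasiMeasurePreserving.ae h

lemma integrable_sparsePrior {f : ℝ → ℝ} (hf : Integrable f P0) :
    Integrable f (sparsePrior ρ P0) :=
  ((integrable_dirac (by simp)).smul_measure ENNReal.ofReal_ne_top).add_measure
    (hf.smul_measure ENNReal.ofReal_ne_top)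

lemma integral_sparsePrior (h0 : 0 < ρ) (h1 : ρ < 1) {f : ℝ → ℝ} (hf : Integrable f P0) :
    ∫ x, f x ∂(sparsePrior ρ P0) = (1 - ρ) * f 0 + ρ * ∫ x, f x ∂P0 := by
  rw [sparsePrior, integral_add_measure ((integrable_dirac (by simp)).smul_measure
    ENNReal.ofReal_ne_top) (hf.smul_measure ENNReal.ofReal_ne_top), integral_smul_measure,
    integral_smul_measure, integral_dirac, ENNReal.toReal_ofReal (by linarith),
    ENNReal.toReal_ofReal h0.le, smul_eq_mul, smul_eq_mul]

/-- The sum of `f` over the coordinates, normalised by `k`. -/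
def emp {n : ℕ} (k : ℝ) (f : ℝ → ℝ) (x : Fin n → ℝ) : ℝ := (∑ i, f (x i)) / k

lemma memLp_sum_iid {P : Measure ℝ} [IsProbabilityMeasure P] (n : ℕ) {f : ℝ → ℝ}
    (hf : MemLp f 2 P) : MemLp (fun x : Fin n → ℝ => ∑ i, f (x i)) 2 (iid n P) :=
  memLp_finsetSum _ fun i _ =>
    hf.comp_measurePreserving (measurePreserving_eval (fun _ : Fin n => P) i)

lemma memLp_sparsePrior {f : ℝ → ℝ} (hfm : AEStronglyMeasurable f P0) (hf : MemLp f 2 P0) :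
    MemLp f 2 (sparsePrior ρ P0) := by
  have hm : AEStronglyMeasurable f (sparsePrior ρ P0) := by
    unfold sparsePrior
    exact AEStronglyMeasurable.add_measure
      (AEStronglyMeasurable.smul_measure aestronglyMeasurable_dirac _) (hfm.smul_measure _)
  exact (memLp_two_iff_integrable_sq hm).2 (integrable_sparsePrior hf.integrable_sq)

lemma integrable_emp_sub_sq [IsProbabilityMeasure (sparsePrior ρ P0)] {f : ℝ → ℝ}
    (hf : MemLp f 2 P0) (n : ℕ) (k e : ℝ) :
    Integrable (fun x => (emp k f x - e) ^ 2) (iid n (sparsePrior ρ P0)) := by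
  have h1 := (memLp_sum_iid n (memLp_sparsePrior (ρ := ρ) hf.1 hf)).mul_const k⁻¹
  have h2 := (h1.sub (memLp_const e)).integrable_sq
  exact h2

/-- The quadratic law of large numbers for the sparse empirical averages. -/
lemma integral_emp_sub_sq_le [IsProbabilityMeasure P0] (h0 : 0 < ρ) (h1 : ρ < 1) {f : ℝ → ℝ}
    (hf0 : f 0 = 0) (hf : MemLp f 2 P0) {n : ℕ} (hn : 0 < n) :
    ∫ x, (emp (n * ρ) f x - ∫ t, f t ∂P0) ^ 2 ∂(iid n (sparsePrior ρ P0))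
      ≤ (∫ t, f t ^ 2 ∂P0) / (n * ρ) := by
  have := isProbabilityMeasure_sparsePrior (P0 := P0) h0 h1
  have hk : 0 < n * ρ := by positivity
  have hfP := memLp_sparsePrior (ρ := ρ) hf.1 hf
  have hS := memLp_sum_iid n hfP
  have hmean : ∫ x : Fin n → ℝ, ∑ i, f (x i) ∂(iid n (sparsePrior ρ P0))
      = n * ρ * ∫ t, f t ∂P0 := by
    unfold iid
    have hi := hfP.integrable (by norm_num : (1 : ENNReal) ≤ 2)
    rw [integral_finsetSum _ fun i _ => integrable_comp_eval
      (μ := fun _ : Fin n => sparsePrior ρ P0) (i := i) hi]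
    have (i : Fin n) := integral_comp_eval (μ := fun _ : Fin n => sparsePrior ρ P0) (i := i) hi.1
    simp only [this, integral_sparsePrior h0 h1 (hf.integrable (by norm_num)), hf0]
    simp
    ring
  have hvar : ∫ x : Fin n → ℝ, (∑ i, f (x i) - n * ρ * ∫ t, f t ∂P0) ^ 2
      ∂(iid n (sparsePrior ρ P0)) ≤ n * ρ * ∫ t, f t ^ 2 ∂P0 := by
    rw [← hmean, ← variance_eq_integral hS.1.aemeasurable]
    have e := variance_sum_pi (μ := fun _ : Fin n => sparsePrior ρ P0) (X := fun _ => f)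
      fun _ => hfP
    have e2 : (∑ i : Fin n, fun ω : Fin n → ℝ => f (ω i)) = fun x => ∑ i, f (x i) := by
      ext x; simp
    rw [e2] at e
    unfold iid
    rw [e, Finset.sum_const, Finset.card_univ, Fintype.card_fin, nsmul_eq_mul, mul_assoc]
    gcongr
    refine (variance_le_expectation_sq hfP.1).trans ?_
    have := integral_sparsePrior h0 h1 (f := fun t => f t ^ 2) hf.integrable_sq
    rw [hf0] at this
    simp only [ne_eq, OfNat.ofNat_ne_zero, not_false_eq_true, zero_pow, mul_zero, zero_add] at this
    exact this.le
  have hpt (x : Fin n → ℝ) : (emp (n * ρ) f x - ∫ t, f t ∂P0) ^ 2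
      = (∑ i, f (x i) - n * ρ * ∫ t, f t ∂P0) ^ 2 / (n * ρ) ^ 2 := by
    unfold emp; field_simp
  simp only [hpt, integral_div]
  rw [div_le_div_iff₀ (by positivity) hk]
  nlinarith [mul_le_mul_of_nonneg_right hvar hk.le]

end

/-- The values whose modulus is at least the `j`-th threshold; empty for `j ≥ K`. -/
def lvl {K : ℕ} (v : Fin K → ℝ) (j : ℕ) : Set ℝ := {t | ∃ h : j < K, v ⟨j, h⟩ ≤ |t|}

instance {K : ℕ} (v : Fin K → ℝ) (j : ℕ) : DecidablePred (· ∈ lvl v j) :=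
  fun _ => Classical.propDecidable _

lemma measurableSet_lvl {K : ℕ} (v : Fin K → ℝ) (j : ℕ) : MeasurableSet (lvl v j) := by
  by_cases h : j < K
  · have : lvl v j = {t | v ⟨j, h⟩ ≤ |t|} := by ext; simp [lvl, h]
    rw [this]
    exact measurableSet_le measurable_const measurable_norm
  · have : lvl v j = ∅ := by ext; simp [lvl, h]
    rw [this]; exact .empty

lemma exists_between_succ {f : ℕ → ℝ} {q : ℝ} {K : ℕ} (hK : 0 < K) (h0 : q ≤ f 0)
    (h1 : f K ≤ q) : ∃ j < K, f (j + 1) ≤ q ∧ q ≤ f j := by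
  induction K with
  | zero => exact absurd hK (lt_irrefl 0)
  | succ K ih =>
    by_cases h : q ≤ f K
    · exact ⟨K, K.lt_succ_self, h1, h⟩
    · rcases K.eq_zero_or_pos with rfl | hK'
      · exact absurd h0 h
      · obtain ⟨j, hj, hj'⟩ := ih hK' (not_le.1 h).le
        exact ⟨j, hj.trans K.lt_succ_self, hj'⟩

section
variable {K : ℕ} {v : Fin K → ℝ} {n : ℕ} {x : Fin n → ℝ}

lemma zero_notMem_lvl (hv0 : ∀ j, 0 < v j) (j : ℕ) : (0 : ℝ) ∉ lvl v j := by
  rintro ⟨h, h'⟩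
  rw [abs_zero] at h'
  exact absurd (hv0 ⟨j, h⟩) h'.not_gt

/-- Among all subsets `A` with prescribed energy, those made of the largest coordinates have the
fewest elements. -/
lemma card_level_le (hv0 : ∀ j, 0 < v j) (hv : StrictMono v)
    (hx : ∀ i, x i = 0 ∨ ∃ j, |x i| = v j) {j : ℕ} (hj : j < K) {A : Finset (Fin n)}
    (hA : ∀ i ∈ A, x i ≠ 0) :
    ∑ i ∈ A, x i ^ 2 - ∑ i with x i ∈ lvl v (j + 1), x i ^ 2
      ≤ v ⟨j, hj⟩ ^ 2 * (A.card - (Finset.univ.filter fun i => x i ∈ lvl v (j + 1)).card) := by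
  have key : ∑ i, ((if i ∈ A then 1 else 0) - (if x i ∈ lvl v (j + 1) then 1 else 0))
      * (x i ^ 2 - v ⟨j, hj⟩ ^ 2) ≤ 0 := by
    refine Finset.sum_nonpos fun i _ => ?_
    have hvj := hv0 ⟨j, hj⟩
    by_cases hl : x i ∈ lvl v (j + 1)
    · obtain ⟨h1, h2⟩ := hl
      have h3 : v ⟨j, hj⟩ ≤ |x i| := (hv (show (⟨j, hj⟩ : Fin K) < ⟨j + 1, h1⟩ from by simp)).le.trans h2
      have h4 : v ⟨j, hj⟩ ^ 2 ≤ x i ^ 2 := by rw [← sq_abs (x i)]; gcongr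
      have hl : x i ∈ lvl v (j + 1) := ⟨h1, h2⟩
      by_cases hi : i ∈ A <;> simp [hi, hl, h4]
    · by_cases hi : i ∈ A
      · have h4 : x i ^ 2 ≤ v ⟨j, hj⟩ ^ 2 := by
          rcases hx i with h0 | ⟨l, h0⟩
          · exact absurd h0 (hA i hi)
          · rw [← sq_abs (x i), h0]
            have : v l ≤ v ⟨j, hj⟩ := by
              refine hv.monotone ?_
              by_contra hlt
              refine hl ⟨?_, ?_⟩
              · have := l.2; simp only [Fin.le_def, not_le] at hlt; omega
              · rw [h0]
                refine hv.monotone ?_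
                simp only [Fin.le_def, not_le] at hlt ⊢; omega
            have := hv0 l
            gcongr
        simp [hi, hl, h4]
      · simp [hi, hl]
  have e : ∑ i, ((if i ∈ A then (1 : ℝ) else 0) - (if x i ∈ lvl v (j + 1) then 1 else 0))
      * (x i ^ 2 - v ⟨j, hj⟩ ^ 2) = (∑ i ∈ A, x i ^ 2 - ∑ i with x i ∈ lvl v (j + 1), x i ^ 2)
      - v ⟨j, hj⟩ ^ 2 * (A.card - (Finset.univ.filter fun i => x i ∈ lvl v (j + 1)).card) := by
    simp only [sub_mul, mul_sub, ite_mul, one_mul, zero_mul, Finset.sum_sub_distrib,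
      Finset.sum_ite_mem, Finset.univ_inter, Finset.sum_const, nsmul_eq_mul, ← Finset.sum_filter]
    ring
  rw [e] at key
  linarith

lemma sum_level_sub (hv : StrictMono v) (hx : ∀ i, x i = 0 ∨ ∃ j, |x i| = v j)
    (hv0 : ∀ j, 0 < v j) {j : ℕ} (hj : j < K) :
    ∑ i with x i ∈ lvl v j, x i ^ 2 - ∑ i with x i ∈ lvl v (j + 1), x i ^ 2
      = v ⟨j, hj⟩ ^ 2 * ((Finset.univ.filter fun i => x i ∈ lvl v j).card
        - (Finset.univ.filter fun i => x i ∈ lvl v (j + 1)).card) := by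
  have e : ∑ i, ((if x i ∈ lvl v j then (1 : ℝ) else 0) - (if x i ∈ lvl v (j + 1) then 1 else 0))
      * (x i ^ 2 - v ⟨j, hj⟩ ^ 2) = (∑ i with x i ∈ lvl v j, x i ^ 2
        - ∑ i with x i ∈ lvl v (j + 1), x i ^ 2)
      - v ⟨j, hj⟩ ^ 2 * ((Finset.univ.filter fun i => x i ∈ lvl v j).card
        - (Finset.univ.filter fun i => x i ∈ lvl v (j + 1)).card) := by
    simp only [sub_mul, mul_sub, ite_mul, one_mul, zero_mul, Finset.sum_sub_distrib,
      Finset.sum_const, nsmul_eq_mul, ← Finset.sum_filter]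
    ring
  have key : ∑ i, ((if x i ∈ lvl v j then (1 : ℝ) else 0)
      - (if x i ∈ lvl v (j + 1) then 1 else 0)) * (x i ^ 2 - v ⟨j, hj⟩ ^ 2) = 0 := by
    refine Finset.sum_eq_zero fun i _ => ?_
    by_cases hl : x i ∈ lvl v (j + 1)
    · obtain ⟨h1, h2⟩ := hl
      have h3 : x i ∈ lvl v j :=
        ⟨hj, (hv (show (⟨j, hj⟩ : Fin K) < ⟨j + 1, h1⟩ from by simp)).le.trans h2⟩
      have hl : x i ∈ lvl v (j + 1) := ⟨h1, h2⟩
      simp [hl, h3]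
    · by_cases hi : x i ∈ lvl v j
      · obtain ⟨h1, h2⟩ := hi
        have h4 : |x i| = v ⟨j, hj⟩ := by
          rcases hx i with h0 | ⟨l, h0⟩
          · rw [h0, abs_zero] at h2
            exact absurd (hv0 ⟨j, hj⟩) h2.not_gt
          · refine le_antisymm ?_ h2
            rw [h0]
            refine hv.monotone ?_
            by_contra hlt
            refine hl ⟨?_, ?_⟩
            · have := l.2; simp only [Fin.le_def, not_le] at hlt; omega
            · rw [h0]
              refine hv.monotone ?_
              simp only [Fin.le_def, not_le] at hlt ⊢; omega
        rw [← sq_abs (x i), h4]; simp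
      · simp [hi, hl]
  rw [key] at e
  linarith

variable {Δ : ℝ} {kA : ℕ} {PA : Measure (Fin kA → ℝ)} [IsProbabilityMeasure PA]
  {φ : ℝ → (Fin kA → ℝ) → ℝ} {B : ℝ} {m : ℕ}

lemma sum_scaled_sq {k : ℝ} (hk : 0 < k) (s : Finset (Fin n)) :
    ∑ i ∈ s, scaled k x i ^ 2 = (∑ i ∈ s, x i ^ 2) / k := by
  simp only [scaled, div_pow, sq_sqrt hk.le, Finset.sum_div]

/-- By concavity along the chords, the level sets are the only partial recoveries to consider. -/
lemma Regular.expLog_add_card_le (h : Regular Δ φ B) (hK : 0 < K) (hv0 : ∀ j, 0 < v j)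
    (hv : StrictMono v) (hx : ∀ i, x i = 0 ∨ ∃ j, |x i| = v j) {k l D : ℝ} (hk : 0 < k)
    (hl : l ≤ 0)
    (hD : ∀ j ≤ K, m * expLog Δ PA φ (∑ i with x i ∈ lvl v j, scaled k x i ^ 2)
      (∑ i, scaled k x i ^ 2 - ∑ i with x i ∈ lvl v j, scaled k x i ^ 2)
      (∑ i, scaled k x i ^ 2 - ∑ i with x i ∈ lvl v j, scaled k x i ^ 2)
      + (Finset.univ.filter fun i => x i ∈ lvl v j).card * l ≤ D) {A : Finset (Fin n)}
    (hA : ∀ i ∈ A, x i ≠ 0) :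
    m * expLog Δ PA φ (∑ i ∈ A, scaled k x i ^ 2)
      (∑ i, scaled k x i ^ 2 - ∑ i ∈ A, scaled k x i ^ 2)
      (∑ i, scaled k x i ^ 2 - ∑ i ∈ A, scaled k x i ^ 2) + A.card * l ≤ D := by
  set S := ∑ i, scaled k x i ^ 2
  set F : ℝ → ℝ := fun q => expLog Δ PA φ q (S - q) (S - q) with hF
  let Q : ℕ → ℝ := fun j => ∑ i with x i ∈ lvl v j, scaled k x i ^ 2
  let N : ℕ → ℝ := fun j => (Finset.univ.filter fun i => x i ∈ lvl v j).card
  set t := ∑ i ∈ A, scaled k x i ^ 2 with ht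
  have ht0 : 0 ≤ t := Finset.sum_nonneg fun i _ => sq_nonneg _
  have hQS (j) : Q j ≤ S :=
    Finset.sum_le_sum_of_subset_of_nonneg (Finset.filter_subset _ _) fun i _ _ => sq_nonneg _
  have hQ0 (j) : 0 ≤ Q j := Finset.sum_nonneg fun i _ => sq_nonneg _
  have htop : t ≤ Q 0 := by
    refine Finset.sum_le_sum_of_subset_of_nonneg (fun i hi => ?_) fun i _ _ => sq_nonneg _
    rcases hx i with h0 | ⟨j, h0⟩
    · exact absurd h0 (hA i hi)
    · simp only [Finset.mem_filter, Finset.mem_univ, true_and]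
      exact ⟨hK, by rw [h0]; exact hv.monotone (by simp [Fin.le_def])⟩
  have hbot : Q K ≤ t := by
    have : Q K = 0 := by simp [Q, lvl]
    rw [this]; exact ht0
  obtain ⟨j, hj, h1, h2⟩ := exists_between_succ hK htop hbot
  have hc1 := card_level_le hv0 hv hx hj hA
  have hc2 := sum_level_sub hv hx hv0 hj
  have eQ (j) : ∑ i with x i ∈ lvl v j, x i ^ 2 = k * Q j := by
    simp only [Q, sum_scaled_sq hk]; field_simp
  have et : ∑ i ∈ A, x i ^ 2 = k * t := by
    rw [ht, sum_scaled_sq hk]; field_simp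
  rw [eQ, et] at hc1
  rw [eQ, eQ] at hc2
  change k * t - k * Q (j + 1) ≤ v ⟨j, hj⟩ ^ 2 * (A.card - N (j + 1)) at hc1
  change k * Q j - k * Q (j + 1) = v ⟨j, hj⟩ ^ 2 * (N j - N (j + 1)) at hc2
  have hD1 : m * F (Q j) + N j * l ≤ D := hD j hj.le
  have hD2 : m * F (Q (j + 1)) + N (j + 1) * l ≤ D := hD (j + 1) hj
  change m * F t + A.card * l ≤ D
  have hvp : 0 < v ⟨j, hj⟩ ^ 2 := pow_pos (hv0 _) 2
  rcases (h1.trans h2).eq_or_lt with heq | hlt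
  · have htq : t = Q (j + 1) := le_antisymm (heq ▸ h2) h1
    rw [htq, sub_self] at hc1
    have : 0 ≤ A.card - N (j + 1) := nonneg_of_mul_nonneg_right hc1 hvp
    rw [htq]
    nlinarith
  · have hch := h.expLog_le_chord (PA := PA) (hQ0 (j + 1)) h1 h2 (hQS j)
    change (Q j - Q (j + 1)) * F t ≤ (Q j - t) * F (Q (j + 1)) + (t - Q (j + 1)) * F (Q j) at hch
    have hd : 0 < Q j - Q (j + 1) := sub_pos.2 hlt
    have hcard : (t - Q (j + 1)) * (N j - N (j + 1)) ≤ (Q j - Q (j + 1)) * (A.card - N (j + 1)) := by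
      refine le_of_mul_le_mul_left ?_ hvp
      calc _ = (t - Q (j + 1)) * (v ⟨j, hj⟩ ^ 2 * (N j - N (j + 1))) := by ring
        _ = (Q j - Q (j + 1)) * (k * t - k * Q (j + 1)) := by rw [← hc2]; ring
        _ ≤ (Q j - Q (j + 1)) * (v ⟨j, hj⟩ ^ 2 * (A.card - N (j + 1))) := by gcongr
        _ = _ := by ring
    have hm : (0 : ℝ) ≤ m := Nat.cast_nonneg m
    refine le_of_mul_le_mul_left ?_ hd
    have a1 := mul_le_mul_of_nonneg_left hch hm
    have a2 := mul_le_mul_of_nonpos_right hcard hl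
    have a3 := mul_le_mul_of_nonneg_left hD1 (sub_nonneg.2 h1)
    have a4 := mul_le_mul_of_nonneg_left hD2 (sub_nonneg.2 h2)
    nlinarith

/-- The upper bound on the conditional free entropy for a signal taking values `0, ±v_j`. -/
lemma Regular.integral_log_margDens_le_of_levels (h : Regular Δ φ B) (hK : 0 < K)
    (hv0 : ∀ j, 0 < v j) (hv : StrictMono v) (hx : ∀ i, x i = 0 ∨ ∃ j, |x i| = v j)
    {P : Measure ℝ} [IsProbabilityMeasure P] {k ρ : ℝ} (hk : 0 < k) (hρ : 0 < ρ) (hρ1 : ρ < 1)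
    (hP : P {x | x ≠ 0} ≤ ENNReal.ofReal ρ) {s : ℝ} (hs : 0 < s)
    (hs1 : s * (2 * logBound Δ B + 1) ≤ 1) {D : ℝ}
    (hD : ∀ j ≤ K, m * expLog Δ PA φ (∑ i with x i ∈ lvl v j, scaled k x i ^ 2)
      (∑ i, scaled k x i ^ 2 - ∑ i with x i ∈ lvl v j, scaled k x i ^ 2)
      (∑ i, scaled k x i ^ 2 - ∑ i with x i ∈ lvl v j, scaled k x i ^ 2)
      + (Finset.univ.filter fun i => x i ∈ lvl v j).card * log ρ ≤ D) :
    ∫ ω, log (margDens Δ PA φ P k (fun μ => (ω μ).1) (sysOut Δ φ (scaled k x) ω)) ∂(sysLaw PA n m)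
      ≤ D + (Finset.univ.filter fun i => x i ≠ 0).card * log 2 + (1 + s) / s *
        ((Finset.univ.filter fun i => x i ≠ 0).card * log 2
          + m * (s ^ 2 * ∫ z, (2 * logBound Δ B + 1 + z ^ 2) ^ 2 ∂stdG)) := by
  refine h.integral_log_margDens_le k hρ hP (fun i hi => ?_) hs hs1 fun A hA => ?_
  · have : x i = 0 := by simpa using hi
    simp [scaled, this]
  · have hAT := Finset.mem_powerset.1 hA
    have hsum : ∑ i ∈ (Finset.univ.filter fun i => x i ≠ 0) \ A, scaled k x i ^ 2
        = ∑ i, scaled k x i ^ 2 - ∑ i ∈ A, scaled k x i ^ 2 := by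
      rw [eq_sub_iff_add_eq, Finset.sum_sdiff hAT]
      refine Finset.sum_subset (Finset.filter_subset _ _) fun i _ hi => ?_
      have : x i = 0 := by simpa using hi
      simp [scaled, this]
    rw [hsum]
    exact h.expLog_add_card_le hK hv0 hv hx hk (log_nonpos hρ.le hρ1.le) hD
      fun i hi => (Finset.mem_filter.1 (hAT hi)).2

end

lemma pi_withDensity {ι α : Type*} [Fintype ι] [MeasurableSpace α] {R : Measure α}
    [IsProbabilityMeasure R] {d : α → ENNReal} (hd : Measurable d)
    [SigmaFinite (R.withDensity d)] :
    (Measure.pi fun _ : ι => R.withDensity d)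
      = (Measure.pi fun _ : ι => R).withDensity fun ω => ∏ i, d (ω i) := by
  refine Measure.pi_eq (μ := fun _ : ι => R.withDensity d) fun s hs => ?_
  rw [withDensity_apply _ (MeasurableSet.univ_pi hs), ← lintegral_indicator (MeasurableSet.univ_pi hs)]
  have (ω : ι → α) : (Set.univ.pi s).indicator (fun ω => ∏ i, d (ω i)) ω
      = ∏ i, (s i).indicator d (ω i) := by
    by_cases hω : ω ∈ Set.univ.pi s
    · rw [Set.indicator_of_mem hω]
      exact Finset.prod_congr rfl fun i _ => (Set.indicator_of_mem (hω i trivial) d).symm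
    · rw [Set.indicator_of_notMem hω]
      simp only [Set.mem_pi, Set.mem_univ, true_imp_iff, not_forall] at hω
      obtain ⟨i, hi⟩ := hω
      exact (Finset.prod_eq_zero (Finset.mem_univ i) (Set.indicator_of_notMem hi d)).symm
  simp only [this]
  rw [lintegral_pi_prod fun i => hd.indicator (hs i)]
  refine Finset.prod_congr rfl fun i _ => ?_
  rw [lintegral_indicator (hs i), withDensity_apply _ (hs i)]

/-- One row of the matrix together with the corresponding observation. -/
def rowObs (Δ : ℝ) {kA : ℕ} (φ : ℝ → (Fin kA → ℝ) → ℝ) {n : ℕ} (c : Fin n → ℝ)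
    (p : (Fin n → ℝ) × ((Fin kA → ℝ) × ℝ)) : (Fin n → ℝ) × ℝ := (p.1, out Δ φ (lin c p.1) p.2)

/-- The likelihood ratio of a row with respect to the pure noise model. -/
def rowRatio (Δ : ℝ) {kA : ℕ} (PA : Measure (Fin kA → ℝ)) (φ : ℝ → (Fin kA → ℝ) → ℝ) {n : ℕ}
    (c : Fin n → ℝ) (τ : ℝ) (q : (Fin n → ℝ) × ℝ) : ENNReal :=
  ENNReal.ofReal (smoothPout Δ PA φ q.2 (lin c q.1) τ / smoothPout Δ PA φ q.2 0 0)

/-- The law of the matrix and observations in the pure noise model. -/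
def nullLaw (Δ : ℝ) {kA : ℕ} (PA : Measure (Fin kA → ℝ)) (φ : ℝ → (Fin kA → ℝ) → ℝ) (n m : ℕ) :
    Measure (Fin m → (Fin n → ℝ) × ℝ) := Measure.pi fun _ => (rowLaw PA n).map (rowObs Δ φ 0)

section
variable {Δ : ℝ} {kA : ℕ} {PA : Measure (Fin kA → ℝ)} [IsProbabilityMeasure PA]
  {φ : ℝ → (Fin kA → ℝ) → ℝ} {B : ℝ} {n m : ℕ}

lemma Regular.measurable_rowObs (h : Regular Δ φ B) (c : Fin n → ℝ) :
    Measurable (rowObs Δ φ c) := by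
  have h1 := h.measurable_out.comp (((measurable_lin c).comp measurable_fst).prodMk
    (measurable_snd (α := Fin n → ℝ) (β := (Fin kA → ℝ) × ℝ)))
  exact measurable_fst.prodMk h1

lemma Regular.measurable_rowRatio (h : Regular Δ φ B) (c : Fin n → ℝ) (τ : ℝ) :
    Measurable (rowRatio Δ PA φ c τ) :=
  ((h.measurable_smoothPout measurable_snd ((measurable_lin c).comp measurable_fst)
    measurable_const).div (h.measurable_smoothPout measurable_snd measurable_const
    measurable_const)).ennreal_ofReal

lemma Regular.lintegral_rowObs (h : Regular Δ φ B) (c : Fin n → ℝ)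
    {f : (Fin n → ℝ) × ℝ → ENNReal} (hf : Measurable f) :
    ∫⁻ p, f (rowObs Δ φ c p) ∂(rowLaw PA n)
      = ∫⁻ r, (∫⁻ y, f (r, y) * ENNReal.ofReal (smoothPout Δ PA φ y (lin c r) 0)) ∂(iid n stdG) := by
  have e := h.lintegral_row_out (PA := PA) Finset.univ (c := c) (b := 0) (by simp) (by simp)
    (f := fun r y => f (r, y)) hf (by simp)
  simp only [lin_zero, add_zero, Pi.zero_apply, ne_eq, OfNat.ofNat_ne_zero, not_false_eq_true,
    zero_pow, Finset.sum_const_zero] at e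
  rw [← e, rowLaw]
  have hm := (hf.comp (h.measurable_rowObs c)).aemeasurable (μ := (iid n stdG).prod (noise PA))
  exact lintegral_prod _ hm

lemma Regular.lintegral_mul_rowRatio (h : Regular Δ φ B) (c : Fin n → ℝ) (τ : ℝ)
    {f : (Fin n → ℝ) × ℝ → ENNReal} (hf : Measurable f) :
    ∫⁻ p, f (rowObs Δ φ 0 p) * rowRatio Δ PA φ c τ (rowObs Δ φ 0 p) ∂(rowLaw PA n)
      = ∫⁻ r, (∫⁻ y, f (r, y) * ENNReal.ofReal (smoothPout Δ PA φ y (lin c r) τ))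
        ∂(iid n stdG) := by
  rw [h.lintegral_rowObs 0 (f := fun q => f q * rowRatio Δ PA φ c τ q)
    (hf.mul (h.measurable_rowRatio c τ))]
  refine lintegral_congr fun r => lintegral_congr fun y => ?_
  rw [mul_assoc, rowRatio, ← ENNReal.ofReal_mul (div_pos (h.smoothPout_pos _ _ _)
    (h.smoothPout_pos _ _ _)).le]
  have e : lin (0 : Fin n → ℝ) r = 0 := lin_zero r
  simp only [e, div_mul_cancel₀ _ (h.smoothPout_pos (PA := PA) y 0 0).ne']

lemma Regular.lintegral_rowRatio (h : Regular Δ φ B) (c : Fin n → ℝ) (τ : ℝ) :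
    ∫⁻ q, rowRatio Δ PA φ c τ q ∂((rowLaw PA n).map (rowObs Δ φ 0)) = 1 := by
  rw [lintegral_map (h.measurable_rowRatio c τ) (h.measurable_rowObs 0)]
  have e := h.lintegral_mul_rowRatio (PA := PA) c τ (f := fun _ => 1) measurable_const
  simp only [one_mul, h.lintegral_ofReal_smoothPout, lintegral_const, measure_univ] at e
  exact e

lemma Regular.map_rowObs (h : Regular Δ φ B) (c : Fin n → ℝ) :
    (rowLaw PA n).map (rowObs Δ φ c)
      = ((rowLaw PA n).map (rowObs Δ φ 0)).withDensity (rowRatio Δ PA φ c 0) := by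
  ext s hs
  have hi : Measurable (s.indicator fun _ => (1 : ENNReal)) := measurable_const.indicator hs
  rw [withDensity_apply _ hs, ← lintegral_indicator hs, ← lintegral_indicator_one hs,
    lintegral_map (measurable_one.indicator hs) (h.measurable_rowObs c),
    lintegral_map ((h.measurable_rowRatio c 0).indicator hs) (h.measurable_rowObs 0)]
  have e1 := h.lintegral_rowObs (PA := PA) c hi
  have e2 := h.lintegral_mul_rowRatio (PA := PA) c 0 hi
  rw [← e1] at e2
  refine e2.symm.trans (lintegral_congr fun p => ?_)
  by_cases hp : rowObs Δ φ 0 p ∈ s <;> simp [hp]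

lemma Regular.isProbabilityMeasure_rowObs (h : Regular Δ φ B) (c : Fin n → ℝ) :
    IsProbabilityMeasure ((rowLaw PA n).map (rowObs Δ φ c)) :=
  Measure.isProbabilityMeasure_map (h.measurable_rowObs c).aemeasurable

lemma Regular.prod_rowRatio (h : Regular Δ φ B) (c : Fin n → ℝ) (τ : ℝ)
    (η : Fin m → (Fin n → ℝ) × ℝ) : ∏ μ, rowRatio Δ PA φ c τ (η μ)
      = ENNReal.ofReal (prodDens Δ PA φ c τ (fun μ => (η μ).1) (fun μ => (η μ).2)
        / prodDens Δ PA φ (0 : Fin n → ℝ) 0 (fun μ => (η μ).1) (fun μ => (η μ).2)) := by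
  simp only [rowRatio, prodDens, lin_zero, ← Finset.prod_div_distrib]
  rw [ENNReal.ofReal_prod_of_nonneg fun μ _ =>
      (div_pos (h.smoothPout_pos _ _ _) (h.smoothPout_pos _ _ _)).le]

/-- Change of measure from the pure noise model. -/
lemma Regular.lintegral_sysLaw_eq (h : Regular Δ φ B) (c : Fin n → ℝ)
    {F : (Fin m → Fin n → ℝ) → (Fin m → ℝ) → ENNReal} (hF : Measurable (Function.uncurry F)) :
    ∫⁻ ω, F (fun μ => (ω μ).1) (sysOut Δ φ c ω) ∂(sysLaw PA n m)
      = ∫⁻ η, F (fun μ => (η μ).1) (fun μ => (η μ).2) * ENNReal.ofReal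
          (prodDens Δ PA φ c 0 (fun μ => (η μ).1) (fun μ => (η μ).2)
          / prodDens Δ PA φ (0 : Fin n → ℝ) 0 (fun μ => (η μ).1) (fun μ => (η μ).2))
        ∂(nullLaw Δ PA φ n m) := by
  have hp := h.isProbabilityMeasure_rowObs (PA := PA) c
  have hp0 := h.isProbabilityMeasure_rowObs (PA := PA) (0 : Fin n → ℝ)
  have hG : Measurable fun η : Fin m → (Fin n → ℝ) × ℝ => F (fun μ => (η μ).1) fun μ => (η μ).2 := by
    have h1 : Measurable fun η : Fin m → (Fin n → ℝ) × ℝ => ((fun μ => (η μ).1), fun μ => (η μ).2) := by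
      fun_prop
    have h2 := hF.comp h1
    exact h2
  have hmap : (sysLaw PA n m).map (fun ω μ => rowObs Δ φ c (ω μ))
      = (nullLaw Δ PA φ n m).withDensity fun η => ∏ μ, rowRatio Δ PA φ c 0 (η μ) := by
    unfold sysLaw nullLaw
    rw [h.map_rowObs c] at hp
    rw [Measure.pi_map_pi fun _ => (h.measurable_rowObs c).aemeasurable, h.map_rowObs c,
      pi_withDensity (h.measurable_rowRatio c 0)]
  have hmeas : Measurable fun (ω : Fin m → (Fin n → ℝ) × ((Fin kA → ℝ) × ℝ)) μ =>
      rowObs Δ φ c (ω μ) :=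
    measurable_pi_lambda _ fun μ => (h.measurable_rowObs c).comp (measurable_pi_apply μ)
  have e := lintegral_map (μ := sysLaw PA n m) hG hmeas
  rw [hmap] at e
  refine e.symm.trans ?_
  have hr : Measurable fun η : Fin m → (Fin n → ℝ) × ℝ => ∏ μ, rowRatio Δ PA φ c 0 (η μ) :=
    Finset.measurable_prod _ fun μ _ => (h.measurable_rowRatio c 0).comp (measurable_pi_apply μ)
  rw [lintegral_withDensity_eq_lintegral_mul _ hr hG]
  refine lintegral_congr fun η => ?_
  rw [Pi.mul_apply, h.prod_rowRatio, mul_comm]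

lemma Regular.lintegral_nullLaw (h : Regular Δ φ B) (c : Fin n → ℝ) (τ : ℝ) :
    ∫⁻ η, ENNReal.ofReal (prodDens Δ PA φ c τ (fun μ => (η μ).1) (fun μ => (η μ).2)
          / prodDens Δ PA φ (0 : Fin n → ℝ) 0 (fun μ => (η μ).1) (fun μ => (η μ).2))
        ∂(nullLaw Δ PA φ n m) = 1 := by
  have hp0 := h.isProbabilityMeasure_rowObs (PA := PA) (0 : Fin n → ℝ)
  simp only [← h.prod_rowRatio, nullLaw]
  rw [lintegral_pi_prod fun _ => h.measurable_rowRatio c τ]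
  simp [h.lintegral_rowRatio]

end

/-- Replacing the numerator mixture by its components, after normalising by the mixture of `D`. -/
lemma lintegral_mixture_div {X Y : Type*} [MeasurableSpace X] [MeasurableSpace Y] {μ : Measure X}
    {ν : Measure Y} [SFinite μ] [SFinite ν] {Q D : X → Y → ENNReal} {R G : Y → ENNReal}
    (hQ : Measurable (Function.uncurry Q)) (hD : Measurable (Function.uncurry D))
    (hR : Measurable R) (hG : ∀ y, ∫⁻ x, D x y ∂μ = G y) (hGm : Measurable G)
    (hG0 : ∀ y, G y ≠ 0) (hG1 : ∀ y, G y ≠ ⊤) :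
    ∫⁻ x, ∫⁻ y, (∫⁻ x', Q x' y ∂μ) / G y * (D x y / R y) ∂ν ∂μ = ∫⁻ x, ∫⁻ y, Q x y / R y ∂ν ∂μ := by
  have hM : Measurable fun y => ∫⁻ x', Q x' y ∂μ := hQ.lintegral_prod_left'
  have hm : Measurable fun p : X × Y => (∫⁻ x', Q x' p.2 ∂μ) / G p.2 * (D p.1 p.2 / R p.2) :=
    ((hM.comp measurable_snd).div (hGm.comp measurable_snd)).mul (hD.div (hR.comp measurable_snd))
  have hm' : Measurable fun p : X × Y => Q p.1 p.2 / R p.2 := hQ.div (hR.comp measurable_snd)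
  refine (lintegral_lintegral_swap hm.aemeasurable).trans
    (Eq.trans ?_ (lintegral_lintegral_swap hm'.aemeasurable).symm)
  refine lintegral_congr fun y => ?_
  have hDy : Measurable fun x => D x y := hD.comp measurable_prodMk_right
  have hQy : Measurable fun x => Q x y := hQ.comp measurable_prodMk_right
  rw [lintegral_const_mul _ (hDy.div_const _)]
  simp only [div_eq_mul_inv]
  rw [lintegral_mul_const _ hDy, lintegral_mul_const _ hQy, hG, mul_assoc, ← mul_assoc (G y)⁻¹,
    ENNReal.inv_mul_cancel (hG0 y) (hG1 y), one_mul]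

section
variable {Δ : ℝ} {kA : ℕ} {PA : Measure (Fin kA → ℝ)} [IsProbabilityMeasure PA]
  {φ : ℝ → (Fin kA → ℝ) → ℝ} {B : ℝ} {n m : ℕ}

lemma measurable_fst_rows {α : Type*} [MeasurableSpace α] {η : α → Fin m → (Fin n → ℝ) × ℝ}
    (hη : Measurable η) : Measurable fun a μ => (η a μ).1 := by fun_prop

lemma measurable_snd_rows {α : Type*} [MeasurableSpace α] {η : α → Fin m → (Fin n → ℝ) × ℝ}
    (hη : Measurable η) : Measurable fun a μ => (η a μ).2 := by fun_prop

lemma Regular.ofReal_margDens (h : Regular Δ φ B) {P : Measure ℝ} [IsProbabilityMeasure P] (k : ℝ)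
    (Φ : Fin m → Fin n → ℝ) (y : Fin m → ℝ) : ENNReal.ofReal (margDens Δ PA φ P k Φ y)
      = ∫⁻ x, ENNReal.ofReal (prodDens Δ PA φ (scaled k x) 0 Φ y) ∂(iid n P) :=
  ofReal_integral_eq_lintegral_ofReal (h.integrable_prodDens k Φ y)
    (.of_forall fun _ => (h.prodDens_pos _ _ _ _).le)

lemma Regular.measurable_prodDens_rows (h : Regular Δ φ B) {c : (Fin n → ℝ) → Fin n → ℝ}
    (hc : Measurable c) (τ : ℝ) : Measurable (Function.uncurry
      fun (x : Fin n → ℝ) (η : Fin m → (Fin n → ℝ) × ℝ) => ENNReal.ofReal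
        (prodDens Δ PA φ (c x) τ (fun μ => (η μ).1) fun μ => (η μ).2)) :=
  (h.measurable_prodDens (hc.comp measurable_fst) measurable_const
    (measurable_fst_rows measurable_snd) (measurable_snd_rows measurable_snd)).ennreal_ofReal

lemma Regular.lintegral_weighted_div_le (h : Regular Δ φ B) {P : Measure ℝ}
    [IsProbabilityMeasure P] (k τ : ℝ) {c x : Fin n → ℝ} {w : ℝ}
    {M : (Fin m → Fin n → ℝ) → (Fin m → ℝ) → ENNReal}
    (hw : ∀ Φ y, ENNReal.ofReal (w * prodDens Δ PA φ c τ Φ y) ≤ M Φ y) :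
    ∫⁻ ω, ENNReal.ofReal (w * prodDens Δ PA φ c τ (fun μ => (ω μ).1)
        (sysOut Δ φ (scaled k x) ω) / margDens Δ PA φ P k (fun μ => (ω μ).1)
        (sysOut Δ φ (scaled k x) ω)) ∂(sysLaw PA n m)
      ≤ ∫⁻ η, M (fun μ => (η μ).1) (fun μ => (η μ).2)
        / ENNReal.ofReal (margDens Δ PA φ P k (fun μ => (η μ).1) fun μ => (η μ).2)
        * (ENNReal.ofReal (prodDens Δ PA φ (scaled k x) 0 (fun μ => (η μ).1) fun μ => (η μ).2)
        / ENNReal.ofReal (prodDens Δ PA φ (0 : Fin n → ℝ) 0 (fun μ => (η μ).1) fun μ => (η μ).2))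
        ∂(nullLaw Δ PA φ n m) := by
  have hF : Measurable (Function.uncurry fun (Φ : Fin m → Fin n → ℝ) (y : Fin m → ℝ) =>
      ENNReal.ofReal (w * prodDens Δ PA φ c τ Φ y / margDens Δ PA φ P k Φ y)) :=
    (((h.measurable_prodDens measurable_const measurable_const measurable_fst
      measurable_snd).const_mul w).div
      (h.measurable_margDens measurable_fst measurable_snd)).ennreal_ofReal
  rw [h.lintegral_sysLaw_eq (scaled k x) hF]
  refine lintegral_mono fun η => ?_
  rw [ENNReal.ofReal_div_of_pos (h.margDens_pos _ _ _),
    ENNReal.ofReal_div_of_pos (h.prodDens_pos _ _ _ _)]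
  exact mul_le_mul_left (ENNReal.div_le_div_right (hw _ _) _) _

lemma Regular.lintegral_weighted_div_le_one (h : Regular Δ φ B) {P : Measure ℝ}
    [IsProbabilityMeasure P] (k τ : ℝ) {c : (Fin n → ℝ) → Fin n → ℝ} (hc : Measurable c)
    {w : (Fin n → ℝ) → ℝ}
    (hw : ∀ᵐ x ∂(iid n P), ∀ (Φ : Fin m → Fin n → ℝ) (y : Fin m → ℝ),
      ENNReal.ofReal (w x * prodDens Δ PA φ (c x) τ Φ y)
        ≤ ∫⁻ x', ENNReal.ofReal (prodDens Δ PA φ (c x') τ Φ y) ∂(iid n P)) :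
    ∫⁻ x, ∫⁻ ω, ENNReal.ofReal (w x * prodDens Δ PA φ (c x) τ (fun μ => (ω μ).1)
        (sysOut Δ φ (scaled k x) ω) / margDens Δ PA φ P k (fun μ => (ω μ).1)
        (sysOut Δ φ (scaled k x) ω)) ∂(sysLaw PA n m) ∂(iid n P) ≤ 1 := by
  have hp0 := h.isProbabilityMeasure_rowObs (PA := PA) (0 : Fin n → ℝ)
  have : IsProbabilityMeasure (nullLaw Δ PA φ n m) := by unfold nullLaw; infer_instance
  refine (lintegral_mono_ae (hw.mono fun x hx => h.lintegral_weighted_div_le k τ hx)).trans ?_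
  have hG := (h.measurable_margDens (PA := PA) (P := P) (k := k)
    (measurable_fst_rows (measurable_id (α := Fin m → (Fin n → ℝ) × ℝ)))
    (measurable_snd_rows measurable_id)).ennreal_ofReal
  have hR := (h.measurable_prodDens (PA := PA) (measurable_const (a := (0 : Fin n → ℝ)))
    (measurable_const (a := (0 : ℝ)))
    (measurable_fst_rows (measurable_id (α := Fin m → (Fin n → ℝ) × ℝ)))
    (measurable_snd_rows measurable_id)).ennreal_ofReal
  have e := lintegral_mixture_div (μ := iid n P) (ν := nullLaw Δ PA φ n m)
    (h.measurable_prodDens_rows (PA := PA) hc τ)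
    (h.measurable_prodDens_rows (PA := PA) (measurable_scaled k) 0) hR
    (fun η => (h.ofReal_margDens k _ _).symm) hG
    (fun η => (ENNReal.ofReal_pos.2 (h.margDens_pos _ _ _)).ne') fun η => ENNReal.ofReal_ne_top
  refine e.le.trans ?_
  have e1 (x : Fin n → ℝ) := h.lintegral_nullLaw (PA := PA) (m := m) (c x) τ
  simp only [ENNReal.ofReal_div_of_pos (h.prodDens_pos _ _ _ _)] at e1
  refine (lintegral_congr e1).le.trans ?_
  simp

end

lemma emp_add_compl {n : ℕ} {k : ℝ} {U : Set ℝ} (f : ℝ → ℝ) (x : Fin n → ℝ) :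
    emp k (Uᶜ.indicator f) x = emp k f x - emp k (U.indicator f) x := by
  simp only [emp, ← sub_div, ← Finset.sum_sub_distrib]
  congr 1
  refine Finset.sum_congr rfl fun i _ => ?_
  by_cases hi : x i ∈ U <;> simp [hi]

lemma sum_scaled_indicator_sq {n : ℕ} {k : ℝ} (hk : 0 < k) (U : Set ℝ) (x : Fin n → ℝ) :
    ∑ i, scaled k (fun i => U.indicator id (x i)) i ^ 2
      = emp k (U.indicator fun t => t ^ 2) x := by
  simp only [emp, scaled, div_pow, sq_sqrt hk.le, ← Finset.sum_div]
  congr 1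
  refine Finset.sum_congr rfl fun i _ => ?_
  by_cases hi : x i ∈ U <;> simp [hi]

section
variable {Δ : ℝ} {kA : ℕ} {PA : Measure (Fin kA → ℝ)} {φ : ℝ → (Fin kA → ℝ) → ℝ} {n m : ℕ}
  {P : Measure ℝ} [IsProbabilityMeasure P]

lemma le_lintegral_prodDens_of_le_measure {w : ℝ → ℝ} (hw0 : ∀ t, 0 ≤ w t) {g : ℝ → ℝ}
    (hg : Measurable g)
    (hw : ∀ᵐ t ∂P, ENNReal.ofReal (w t) ≤ P {t' | g t' = g t}) (k τ : ℝ) :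
    ∀ᵐ x ∂(iid n P), ∀ (Φ : Fin m → Fin n → ℝ) (y : Fin m → ℝ),
      ENNReal.ofReal ((∏ i, w (x i)) * prodDens Δ PA φ (scaled k fun i => g (x i)) τ Φ y)
        ≤ ∫⁻ x', ENNReal.ofReal (prodDens Δ PA φ (scaled k fun i => g (x' i)) τ Φ y)
          ∂(iid n P) := by
  filter_upwards [ae_iid hw n] with x hx Φ y
  have hE : MeasurableSet (Set.univ.pi fun i => {t' | g t' = g (x i)}) :=
    .univ_pi fun i => measurableSet_eq_fun hg measurable_const
  calc _ = ENNReal.ofReal (∏ i, w (x i))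
        * ENNReal.ofReal (prodDens Δ PA φ (scaled k fun i => g (x i)) τ Φ y) :=
        ENNReal.ofReal_mul (Finset.prod_nonneg fun i _ => hw0 _)
    _ ≤ iid n P (Set.univ.pi fun i => {t' | g t' = g (x i)})
        * ENNReal.ofReal (prodDens Δ PA φ (scaled k fun i => g (x i)) τ Φ y) := by
        refine mul_le_mul_left ?_ _
        rw [iid, Measure.pi_pi, ENNReal.ofReal_prod_of_nonneg fun i _ => hw0 _]
        exact Finset.prod_le_prod' fun i _ => hx i
    _ = ∫⁻ x' in Set.univ.pi fun i => {t' | g t' = g (x i)},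
          ENNReal.ofReal (prodDens Δ PA φ (scaled k fun i => g (x' i)) τ Φ y) ∂(iid n P) := by
        rw [setLIntegral_congr_fun hE (g := fun _ => ENNReal.ofReal
          (prodDens Δ PA φ (scaled k fun i => g (x i)) τ Φ y)) fun x' hx' => ?_]
        · rw [setLIntegral_const, mul_comm]
        · have : (fun i => g (x' i)) = fun i => g (x i) := funext fun i => hx' i trivial
          simp only [this]
    _ ≤ _ := setLIntegral_le_lintegral _ _

end

section
variable {Δ : ℝ} {kA : ℕ} {PA : Measure (Fin kA → ℝ)} [IsProbabilityMeasure PA]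
  {φ : ℝ → (Fin kA → ℝ) → ℝ} {B : ℝ} {n m : ℕ} {P : Measure ℝ} [IsProbabilityMeasure P]

lemma Regular.integrable_log_prodDens_prod (h : Regular Δ φ B) (k τ : ℝ)
    {c : (Fin n → ℝ) → Fin n → ℝ} (hc : Measurable c) :
    Integrable (fun p : (Fin n → ℝ) × (Fin m → (Fin n → ℝ) × ((Fin kA → ℝ) × ℝ)) =>
      log (prodDens Δ PA φ (c p.1) τ (fun μ => (p.2 μ).1) (sysOut Δ φ (scaled k p.1) p.2)))
      ((iid n P).prod (sysLaw PA n m)) := by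
  refine ((integrable_sum_bound (PA := PA) (n := n) (m := m) (logBound Δ B)).comp_snd
    (iid n P)).mono' (Measurable.aestronglyMeasurable ?_) (.of_forall fun p => ?_)
  · exact (h.measurable_prodDens (hc.comp measurable_fst) measurable_const
      (measurable_rows.comp measurable_snd)
      (h.measurable_sysOut ((measurable_scaled k).comp measurable_fst) measurable_snd)).log
  · exact h.abs_log_prodDens_le _ _ _ _

lemma Regular.integrable_log_margDens_prod (h : Regular Δ φ B) (k : ℝ) :
    Integrable (fun p : (Fin n → ℝ) × (Fin m → (Fin n → ℝ) × ((Fin kA → ℝ) × ℝ)) =>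
      log (margDens Δ PA φ P k (fun μ => (p.2 μ).1) (sysOut Δ φ (scaled k p.1) p.2)))
      ((iid n P).prod (sysLaw PA n m)) := by
  refine ((integrable_sum_bound (PA := PA) (n := n) (m := m) (logBound Δ B)).comp_snd
    (iid n P)).mono' (Measurable.aestronglyMeasurable ?_) (.of_forall fun p => ?_)
  · exact (h.measurable_margDens (measurable_rows.comp measurable_snd)
      (h.measurable_sysOut ((measurable_scaled k).comp measurable_fst) measurable_snd)).log
  · exact h.abs_log_margDens_le _ _ _

/-- The free entropy is at least that of a weighted component of the mixture. -/
lemma Regular.integral_weighted_sub_nonpos (h : Regular Δ φ B) (k τ : ℝ)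
    {c : (Fin n → ℝ) → Fin n → ℝ} (hc : Measurable c) {w : (Fin n → ℝ) → ℝ} (hw0 : ∀ x, 0 < w x)
    (hwi : Integrable (fun x => log (w x)) (iid n P))
    (hw : ∀ᵐ x ∂(iid n P), ∀ (Φ : Fin m → Fin n → ℝ) (y : Fin m → ℝ),
      ENNReal.ofReal (w x * prodDens Δ PA φ (c x) τ Φ y)
        ≤ ∫⁻ x', ENNReal.ofReal (prodDens Δ PA φ (c x') τ Φ y) ∂(iid n P)) :
    ∫ x, (log (w x)
      + ∫ ω, log (prodDens Δ PA φ (c x) τ (fun μ => (ω μ).1) (sysOut Δ φ (scaled k x) ω))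
        ∂(sysLaw PA n m)
      - ∫ ω, log (margDens Δ PA φ P k (fun μ => (ω μ).1) (sysOut Δ φ (scaled k x) ω))
        ∂(sysLaw PA n m)) ∂(iid n P) ≤ 0 := by
  have i1 := h.integrable_log_prodDens_prod (PA := PA) (P := P) (m := m) k τ hc
  have i2 := h.integrable_log_margDens_prod (PA := PA) (P := P) (n := n) (m := m) k
  let L : (Fin n → ℝ) × (Fin m → (Fin n → ℝ) × ((Fin kA → ℝ) × ℝ)) → ℝ := fun p => log (w p.1)
    + log (prodDens Δ PA φ (c p.1) τ (fun μ => (p.2 μ).1) (sysOut Δ φ (scaled k p.1) p.2))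
    - log (margDens Δ PA φ P k (fun μ => (p.2 μ).1) (sysOut Δ φ (scaled k p.1) p.2))
  have i3 : Integrable L ((iid n P).prod (sysLaw PA n m)) :=
    ((hwi.comp_fst (sysLaw PA n m)).add i1).sub i2
  have hle : ∫⁻ p, ENNReal.ofReal (exp (L p)) ∂((iid n P).prod (sysLaw PA n m))
      ≤ ENNReal.ofReal 1 := by
    have hm := (continuous_exp.measurable.comp_aemeasurable i3.1.aemeasurable).ennreal_ofReal
    rw [ENNReal.ofReal_one]
    refine (lintegral_prod _ hm).trans_le ?_
    refine le_trans (le_of_eq ?_) (h.lintegral_weighted_div_le_one k τ hc hw)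
    refine lintegral_congr fun x => lintegral_congr fun ω => ?_
    simp only [Function.comp_apply, L]
    rw [exp_sub, exp_add, exp_log (hw0 x), exp_log (h.prodDens_pos _ _ _ _),
      exp_log (h.margDens_pos _ _ _)]
  have hj := integral_le_log_of_lintegral_exp_le i3 one_pos hle
  rw [log_one, integral_prod _ i3] at hj
  refine le_trans (le_of_eq (integral_congr_ae (.of_forall fun x => ?_))) hj
  have j1 := h.integrable_log_prodDens (PA := PA) (m := m) (c x) (scaled k x) τ
  have j2 := h.integrable_log_margDens (PA := PA) (m := m) (P := P) k (scaled k x)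
  have j0 : Integrable (fun _ => log (w x)) (sysLaw PA n m) := integrable_const _
  have e1 := integral_sub (j0.add j1) j2
  have e2 := integral_add j0 j1
  simp only [Pi.add_apply, integral_const, probReal_univ, one_smul] at e1 e2
  simp only [L]
  rw [e1, e2]

lemma Regular.integral_log_prodDens_indicator (h : Regular Δ φ B) {k : ℝ} (hk : 0 < k) (τ : ℝ)
    (U : Set ℝ) (x : Fin n → ℝ) :
    ∫ ω, log (prodDens Δ PA φ (scaled k fun i => U.indicator id (x i)) τ (fun μ => (ω μ).1)
      (sysOut Δ φ (scaled k x) ω)) ∂(sysLaw PA n m)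
      = m * expLog Δ PA φ (emp k (U.indicator fun t => t ^ 2) x)
        (emp k (fun t => t ^ 2) x - emp k (U.indicator fun t => t ^ 2) x) τ := by
  classical
  have e := h.integral_log_prodDens (PA := PA) (m := m) (Finset.univ.filter fun i => x i ∈ U)
    (c := scaled k fun i => U.indicator id (x i)) (b := scaled k fun i => Uᶜ.indicator id (x i))
    (fun i hi => by
      have : x i ∉ U := by simpa using hi
      simp [scaled, this])
    (fun i hi => by
      have : x i ∈ U := by simpa using hi
      simp [scaled, this]) τ
  rw [sum_scaled_indicator_sq hk, sum_scaled_indicator_sq hk, emp_add_compl] at e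
  have hx : scaled k (fun i => U.indicator id (x i)) + scaled k (fun i => Uᶜ.indicator id (x i))
      = scaled k x := by
    ext i
    by_cases hi : x i ∈ U <;> simp [scaled, hi]
  rwa [hx] at e

end

lemma exists_le_measure_singleton {P : Measure ℝ} [IsProbabilityMeasure P] {F : Finset ℝ}
    (hF : ∀ᵐ t ∂P, t ∈ F) : ∃ c : ℝ, 0 < c ∧ ∀ᵐ t ∂P, ENNReal.ofReal c ≤ P {t} := by
  have h1 : ∀ᶠ c in nhdsWithin (0 : ℝ) (Set.Ioi 0), ∀ t ∈ F, P {t} ≠ 0 → ENNReal.ofReal c ≤ P {t} := by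
    rw [Filter.eventually_all_finset]
    intro t _
    by_cases ht : P {t} = 0
    · simp [ht]
    · have hpos : 0 < P.real {t} := ENNReal.toReal_pos ht (measure_ne_top _ _)
      filter_upwards [Ioc_mem_nhdsGT hpos] with c hc _
      exact ENNReal.ofReal_le_of_le_toReal hc.2
  obtain ⟨c, hc, hc0⟩ := (h1.and self_mem_nhdsWithin).exists
  refine ⟨c, hc0, ?_⟩
  have h2 : ∀ᵐ t ∂P, P {t} ≠ 0 ∨ t ∉ F := by
    have hnull : P (⋃ t ∈ F.filter fun t => P {t} = 0, {t}) = 0 :=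
      (measure_biUnion_null_iff (Finset.countable_toSet _)).2 fun t ht => (Finset.mem_filter.1 ht).2
    filter_upwards [measure_eq_zero_iff_ae_notMem.1 hnull] with t ht
    by_contra hcon
    simp only [not_or, not_not] at hcon
    exact ht (Set.mem_biUnion (Finset.mem_coe.2 (Finset.mem_filter.2 ⟨hcon.2, hcon.1⟩)) rfl)
  filter_upwards [hF, h2] with t ht ht2
  exact hc t ht (ht2.resolve_right (not_not.2 ht))

section
variable {ρ : ℝ} {P0 : Measure ℝ}

lemma ae_le_sparsePrior_fiber {c : ℝ} (h0 : 0 < ρ) {U : Set ℝ}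
    (hU : MeasurableSet U) (hU0 : (0 : ℝ) ∉ U) (hc : ∀ᵐ t ∂P0, ENNReal.ofReal c ≤ P0 {t}) :
    ∀ᵐ t ∂(sparsePrior ρ P0), ENNReal.ofReal (Uᶜ.indicator (fun _ => 1 - ρ) t
      + U.indicator (fun _ => ρ * c) t)
      ≤ sparsePrior ρ P0 {t' | U.indicator id t' = U.indicator id t} := by
  have key (t : ℝ) (ht : t ∉ U) : ENNReal.ofReal (1 - ρ)
      ≤ sparsePrior ρ P0 {t' | U.indicator id t' = U.indicator id t} := by
    have hm : MeasurableSet {t' | U.indicator id t' = U.indicator id t} :=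
      measurableSet_eq_fun (measurable_id.indicator hU) measurable_const
    refine le_trans ?_ (Measure.le_add_right le_rfl _)
    rw [Measure.smul_apply, Measure.dirac_apply' _ hm, Set.indicator_of_mem]
    · simp
    · simp [hU0, ht]
  refine ae_sparsePrior ?_ ?_
  · simpa [hU0] using key 0 hU0
  · filter_upwards [hc] with t ht
    by_cases htU : t ∈ U
    · simp only [htU, Set.indicator_of_mem, Set.mem_compl_iff, not_true_eq_false,
        not_false_eq_true, Set.indicator_of_notMem, zero_add]
      refine le_trans ?_ (Measure.le_add_left le_rfl _)
      rw [ENNReal.ofReal_mul h0.le, Measure.smul_apply, smul_eq_mul]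
      refine mul_le_mul_right (ht.trans (measure_mono ?_)) _
      rintro t' rfl
      simp [htU]
    · simpa [htU] using key t htU

end

section
variable {ρ : ℝ} {P0 : Measure ℝ} [IsProbabilityMeasure P0]

lemma integral_sum_iid {P : Measure ℝ} [IsProbabilityMeasure P] (n : ℕ) {f : ℝ → ℝ}
    (hf : Integrable f P) : Integrable (fun x : Fin n → ℝ => ∑ i, f (x i)) (iid n P) ∧
    ∫ x : Fin n → ℝ, ∑ i, f (x i) ∂(iid n P) = n * ∫ t, f t ∂P := by
  have hi (i : Fin n) : Integrable (fun x : Fin n → ℝ => f (x i)) (iid n P) :=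
    integrable_comp_eval (μ := fun _ : Fin n => P) hf
  refine ⟨integrable_finsetSum _ fun i _ => hi i, ?_⟩
  rw [integral_finsetSum _ fun i _ => hi i]
  have (i : Fin n) : ∫ x : Fin n → ℝ, f (x i) ∂(iid n P) = ∫ t, f t ∂P :=
    integral_comp_eval (μ := fun _ : Fin n => P) hf.1
  simp [this]

variable {Δ : ℝ} {kA : ℕ} {PA : Measure (Fin kA → ℝ)} [IsProbabilityMeasure PA]
  {φ : ℝ → (Fin kA → ℝ) → ℝ} {B : ℝ} {n m : ℕ}

lemma Regular.integrable_expLog (h : Regular Δ φ B) {α : Type*} [MeasurableSpace α] {μ : Measure α}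
    [IsFiniteMeasure μ] {a b c : α → ℝ} (ha : Measurable a) (hb : Measurable b)
    (hc : Measurable c) : Integrable (fun x => expLog Δ PA φ (a x) (b x) (c x)) μ := by
  refine Integrable.of_bound (C := logBound Δ B + 1) ?_ (.of_forall fun x => ?_)
  · have h1 := h.continuous_expLog (PA := PA) |>.measurable.comp (ha.prodMk (hb.prodMk hc))
    exact h1.aestronglyMeasurable
  · exact h.abs_expLog_le _ _ _

lemma measurable_emp {k : ℝ} {f : ℝ → ℝ} (hf : Measurable f) :
    Measurable (emp k f : (Fin n → ℝ) → ℝ) := by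
  unfold emp
  exact (Finset.measurable_sum _ fun i _ => hf.comp (measurable_pi_apply i)).div_const k

lemma integral_log_weight {a b : ℝ} (h0 : 0 < ρ) (h1 : ρ < 1) {U : Set ℝ}
    (hU : MeasurableSet U) (hU0 : (0 : ℝ) ∉ U) :
    Integrable (fun t => log (Uᶜ.indicator (fun _ => b) t + U.indicator (fun _ => a) t))
      (sparsePrior ρ P0) ∧
    ∫ t, log (Uᶜ.indicator (fun _ => b) t + U.indicator (fun _ => a) t) ∂(sparsePrior ρ P0)
      = (1 - ρ) * log b + ρ * ((1 - P0.real U) * log b + P0.real U * log a) := by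
  have e (t : ℝ) : log (Uᶜ.indicator (fun _ => b) t + U.indicator (fun _ => a) t)
      = log b + U.indicator (fun _ => log a - log b) t := by
    by_cases ht : t ∈ U <;> simp [ht]
  have hi : Integrable (U.indicator fun _ => log a - log b) P0 :=
    (integrable_const _).indicator hU
  have hi' : Integrable (fun t => log b + U.indicator (fun _ => log a - log b) t) P0 :=
    (integrable_const _).add hi
  simp only [e]
  refine ⟨integrable_sparsePrior hi', ?_⟩
  rw [integral_sparsePrior h0 h1 hi', integral_add (integrable_const _) hi,
    integral_indicator_const _ hU, Set.indicator_of_notMem hU0]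
  simp only [integral_const, probReal_univ, smul_eq_mul, add_zero]
  ring

/-- The upper bound on the mutual information when the part of the signal in `U` is revealed. -/
lemma Regular.MI_le (h : Regular Δ φ B) (h0 : 0 < ρ) (h1 : ρ < 1) (hn : 0 < n) {U : Set ℝ}
    (hU : MeasurableSet U) (hU0 : (0 : ℝ) ∉ U) {c : ℝ} (hc0 : 0 < c)
    (hc : ∀ᵐ t ∂P0, ENNReal.ofReal c ≤ P0 {t}) (τ : ℝ) :
    MI Δ PA φ P0 ρ n m ≤ m * ∫ x : Fin n → ℝ, (expLog Δ PA φ (emp (n * ρ) (fun t => t ^ 2) x) 0 0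
      - expLog Δ PA φ (emp (n * ρ) (U.indicator fun t => t ^ 2) x)
        (emp (n * ρ) (fun t => t ^ 2) x - emp (n * ρ) (U.indicator fun t => t ^ 2) x) τ)
        ∂(iid n (sparsePrior ρ P0))
      - n * ((1 - ρ) * log (1 - ρ)
        + ρ * ((1 - P0.real U) * log (1 - ρ) + P0.real U * log (ρ * c))) := by
  have := isProbabilityMeasure_sparsePrior (P0 := P0) h0 h1
  have hk : 0 < n * ρ := by positivity
  rw [h.MI_eq]
  set k := n * ρ
  let w0 : ℝ → ℝ := fun t => Uᶜ.indicator (fun _ => 1 - ρ) t + U.indicator (fun _ => ρ * c) t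
  have hw0 (t : ℝ) : 0 < w0 t := by
    by_cases ht : t ∈ U
    · simp [w0, ht, h0, hc0]
    · simp [w0, ht, h1]
  have hlogw := integral_log_weight (P0 := P0) (a := ρ * c) (b := 1 - ρ) h0 h1 hU hU0
  have hS := integral_sum_iid n hlogw.1
  rw [hlogw.2] at hS
  have elog (x : Fin n → ℝ) : log (∏ i, w0 (x i)) = ∑ i, log (w0 (x i)) :=
    log_prod fun i _ => (hw0 _).ne'
  have hg : Measurable (U.indicator (id : ℝ → ℝ)) := measurable_id.indicator hU
  have hgx : Measurable fun x : Fin n → ℝ => scaled k fun i => U.indicator id (x i) :=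
    (measurable_scaled k).comp (measurable_pi_lambda _ fun i => hg.comp (measurable_pi_apply i))
  have hwi : Integrable (fun x : Fin n → ℝ => log (∏ i, w0 (x i))) (iid n (sparsePrior ρ P0)) := by
    simp only [elog]; exact hS.1
  have key := h.integral_weighted_sub_nonpos (PA := PA) (m := m) k τ hgx
    (w := fun x => ∏ i, w0 (x i)) (fun x => Finset.prod_pos fun i _ => hw0 _) hwi
    (le_lintegral_prodDens_of_le_measure (fun t => (hw0 t).le) hg
      (ae_le_sparsePrior_fiber h0 hU hU0 hc) k τ)
  simp only [h.integral_log_prodDens_indicator hk] at key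
  have hsum (x : Fin n → ℝ) : ∑ i, scaled k x i ^ 2 = emp k (fun t => t ^ 2) x := by
    have := sum_scaled_indicator_sq hk Set.univ x
    simpa using this
  simp only [hsum]
  have m1 : Measurable (emp k (fun t => t ^ 2) : (Fin n → ℝ) → ℝ) := measurable_emp (by fun_prop)
  have m2 : Measurable (emp k (U.indicator fun t => t ^ 2) : (Fin n → ℝ) → ℝ) :=
    measurable_emp (Measurable.indicator (by fun_prop) hU)
  have i1 : Integrable (fun x : Fin n → ℝ => expLog Δ PA φ (emp k (fun t => t ^ 2) x) 0 0)
      (iid n (sparsePrior ρ P0)) := h.integrable_expLog m1 measurable_const measurable_const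
  have i2 : Integrable (fun x : Fin n → ℝ => expLog Δ PA φ (emp k (U.indicator fun t => t ^ 2) x)
      (emp k (fun t => t ^ 2) x - emp k (U.indicator fun t => t ^ 2) x) τ)
      (iid n (sparsePrior ρ P0)) := h.integrable_expLog m2 (m1.sub m2) measurable_const
  have i3 := (h.integrable_log_margDens_prod (PA := PA) (P := sparsePrior ρ P0) (n := n) (m := m)
    k).integral_prod_left
  have e1 := integral_sub (i1.const_mul (m : ℝ)) i3
  have e2 := integral_sub (hwi.add (i2.const_mul (m : ℝ))) i3
  have e3 := integral_add hwi (i2.const_mul (m : ℝ))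
  have e4 := integral_sub i1 i2
  have hlw : ∫ x : Fin n → ℝ, log (∏ i, w0 (x i)) ∂(iid n (sparsePrior ρ P0))
      = n * ((1 - ρ) * log (1 - ρ)
        + ρ * ((1 - P0.real U) * log (1 - ρ) + P0.real U * log (ρ * c))) := by
    simp only [elog]; exact hS.2
  simp only [Pi.add_apply, integral_const_mul] at e1 e2 e3
  rw [hlw] at e3
  rw [e2, e3] at key
  rw [e4]
  refine e1.le.trans ?_
  linarith

end

lemma exists_abs_sub_le_add_mul_dist_sq {E : Type*} [PseudoMetricSpace E] {F : E → ℝ} {M : ℝ}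
    (hM : ∀ z, |F z| ≤ M) {z0 : E} (hF : ContinuousAt F z0) {ε : ℝ} (hε : 0 < ε) :
    ∃ C, 0 ≤ C ∧ ∀ z, |F z - F z0| ≤ ε + C * dist z z0 ^ 2 := by
  obtain ⟨δ, hδ, h⟩ := Metric.continuousAt_iff.1 hF ε hε
  have hM0 : 0 ≤ M := (abs_nonneg _).trans (hM z0)
  refine ⟨2 * M / δ ^ 2, by positivity, fun z => ?_⟩
  by_cases hz : dist z z0 < δ
  · have h1 := (h hz).le
    rw [Real.dist_eq] at h1
    have : 0 ≤ 2 * M / δ ^ 2 * dist z z0 ^ 2 := by positivity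
    linarith
  · have h1 : |F z - F z0| ≤ 2 * M := by
      have := abs_sub (F z) (F z0)
      linarith [hM z, hM z0]
    have h2 : 2 * M ≤ 2 * M / δ ^ 2 * dist z z0 ^ 2 := by
      rw [div_mul_eq_mul_div, le_div_iff₀ (by positivity)]
      have : δ ^ 2 ≤ dist z z0 ^ 2 := pow_le_pow_left₀ hδ.le (not_lt.1 hz) 2
      nlinarith
    linarith

lemma dist_prod_sq_le (a b c d : ℝ) : dist (a, b) (c, d) ^ 2 ≤ (a - c) ^ 2 + (b - d) ^ 2 := by
  rw [Prod.dist_eq, Real.dist_eq, Real.dist_eq]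
  rcases max_choice |a - c| |b - d| with h | h <;> simp only [h, sq_abs] <;>
    nlinarith [sq_nonneg (a - c), sq_nonneg (b - d)]

/-- The total squared deviation of the empirical statistics of a signal from their limits. -/
def deviation (P0 : Measure ℝ) (U : Set ℝ) {n : ℕ} (k : ℝ) (x : Fin n → ℝ) : ℝ :=
  (emp k (fun t => t ^ 2) x - secondMoment P0) ^ 2
    + (emp k (U.indicator fun t => t ^ 2) x - ∫ t, U.indicator (fun t => t ^ 2) t ∂P0) ^ 2
    + (emp k (U.indicator fun _ => 1) x - P0.real U) ^ 2

/-- The constant in the bound on the expected `deviation`. -/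
def deviationBound (P0 : Measure ℝ) (U : Set ℝ) : ℝ :=
  (∫ t, (t ^ 2) ^ 2 ∂P0) + (∫ t, U.indicator (fun t => t ^ 2) t ^ 2 ∂P0)
    + ∫ t, U.indicator (fun _ => (1 : ℝ)) t ^ 2 ∂P0

section
variable {ρ : ℝ} {P0 : Measure ℝ} [IsProbabilityMeasure P0] {n : ℕ}

lemma integrable_deviation (h0 : 0 < ρ) (h1 : ρ < 1) (hM : MemLp (fun t : ℝ => t ^ 2) 2 P0)
    {U : Set ℝ} (hU : MeasurableSet U) (k : ℝ) :
    Integrable (deviation P0 U k : (Fin n → ℝ) → ℝ) (iid n (sparsePrior ρ P0)) := by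
  have := isProbabilityMeasure_sparsePrior (P0 := P0) h0 h1
  exact ((integrable_emp_sub_sq hM n _ _).add (integrable_emp_sub_sq (hM.indicator hU) n _ _)).add
    (integrable_emp_sub_sq ((memLp_const (1 : ℝ)).indicator hU) n _ _)

lemma integral_deviation_le (h0 : 0 < ρ) (h1 : ρ < 1) (hM : MemLp (fun t : ℝ => t ^ 2) 2 P0)
    {U : Set ℝ} (hU : MeasurableSet U) (hU0 : (0 : ℝ) ∉ U) (hn : 0 < n) :
    ∫ x : Fin n → ℝ, deviation P0 U (n * ρ) x ∂(iid n (sparsePrior ρ P0))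
      ≤ deviationBound P0 U / (n * ρ) := by
  have := isProbabilityMeasure_sparsePrior (P0 := P0) h0 h1
  have hM1 : MemLp (U.indicator fun _ => (1 : ℝ)) 2 P0 := (memLp_const (1 : ℝ)).indicator hU
  have b1 := integral_emp_sub_sq_le h0 h1 (by simp) hM hn
  have b2 := integral_emp_sub_sq_le h0 h1 (by simp) (hM.indicator hU) hn
  have b3 := integral_emp_sub_sq_le h0 h1 (by simp [hU0]) hM1 hn
  have i1 := integrable_emp_sub_sq (ρ := ρ) hM n (n * ρ) (secondMoment P0)
  have i2 := integrable_emp_sub_sq (ρ := ρ) (hM.indicator hU) n (n * ρ)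
    (∫ t, U.indicator (fun t => t ^ 2) t ∂P0)
  have i3 := integrable_emp_sub_sq (ρ := ρ) hM1 n (n * ρ) (P0.real U)
  have e1 := integral_add (i1.add i2) i3
  have e2 := integral_add i1 i2
  simp only [Pi.add_apply] at e1 e2
  unfold deviation deviationBound
  rw [e1, e2, add_div, add_div]
  rw [integral_indicator_const _ hU, smul_eq_mul, mul_one] at b3
  exact add_le_add (add_le_add b1 b2) b3

end

section
variable {P0 : Measure ℝ} {Δ : ℝ} {kA : ℕ} {PA : Measure (Fin kA → ℝ)} [IsProbabilityMeasure PA]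
  {φ : ℝ → (Fin kA → ℝ) → ℝ} {B : ℝ}

lemma Regular.continuous_expLog_comp (h : Regular Δ φ B) {α : Type*} [TopologicalSpace α]
    {a b c : α → ℝ} (ha : Continuous a) (hb : Continuous b) (hc : Continuous c) :
    Continuous fun x => expLog Δ PA φ (a x) (b x) (c x) := by
  have h1 := (h.continuous_expLog (PA := PA)).comp (ha.prodMk (hb.prodMk hc))
  exact h1

lemma Regular.exists_IPout_le (h : Regular Δ φ B) {γ : ℝ} (hγ : 0 < γ) (U : Set ℝ) {ε : ℝ}
    (hε : 0 < ε) : ∃ C, 0 ≤ C ∧ ∀ (n : ℕ) (k : ℝ) (x : Fin n → ℝ),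
    IPout Δ PA φ (∫ t, U.indicator (fun t => t ^ 2) t ∂P0) (secondMoment P0) + P0.real U / γ - ε
      ≤ expLog Δ PA φ (emp k (fun t => t ^ 2) x) 0 0
        - expLog Δ PA φ (emp k (U.indicator fun t => t ^ 2) x)
          (emp k (fun t => t ^ 2) x - emp k (U.indicator fun t => t ^ 2) x)
          (emp k (fun t => t ^ 2) x - emp k (U.indicator fun t => t ^ 2) x)
        + emp k (U.indicator fun _ => 1) x / γ + C * deviation P0 U k x := by
  let F : ℝ × ℝ → ℝ := fun p =>
    expLog Δ PA φ p.1 0 0 - expLog Δ PA φ p.2 (p.1 - p.2) (p.1 - p.2)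
  have hF : Continuous F :=
    (h.continuous_expLog_comp continuous_fst continuous_const continuous_const).sub
      (h.continuous_expLog_comp continuous_snd (continuous_fst.sub continuous_snd)
        (continuous_fst.sub continuous_snd))
  have hM (p : ℝ × ℝ) : |F p| ≤ (logBound Δ B + 1) + (logBound Δ B + 1) :=
    (abs_sub _ _).trans (add_le_add (h.abs_expLog_le _ _ _) (h.abs_expLog_le _ _ _))
  obtain ⟨C, hC, hCF⟩ := exists_abs_sub_le_add_mul_dist_sq hM (hF.continuousAt
    (x := (secondMoment P0, ∫ t, U.indicator (fun t => t ^ 2) t ∂P0))) (half_pos hε)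
  refine ⟨C + 1 / (2 * ε * γ ^ 2), by positivity, fun n k x => ?_⟩
  have h1 := (abs_le.1 (hCF (emp k (fun t => t ^ 2) x, emp k (U.indicator fun t => t ^ 2) x))).1
  have h2 := mul_le_mul_of_nonneg_left (dist_prod_sq_le (emp k (fun t => t ^ 2) x)
    (emp k (U.indicator fun t => t ^ 2) x) (secondMoment P0)
    (∫ t, U.indicator (fun t => t ^ 2) t ∂P0)) hC
  rw [IPout_eq h]
  simp only [F] at h1
  unfold deviation
  set S := emp k (fun t => t ^ 2) x
  set Q := emp k (U.indicator fun t => t ^ 2) x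
  set N := emp k (U.indicator fun _ => 1) x
  set q := ∫ t, U.indicator (fun t => t ^ 2) t ∂P0
  set s := secondMoment P0
  set p := P0.real U
  have h3 : p / γ - ε / 2 ≤ N / γ + 1 / (2 * ε * γ ^ 2) * (N - p) ^ 2 := by
    have : N / γ + 1 / (2 * ε * γ ^ 2) * (N - p) ^ 2 - (p / γ - ε / 2)
        = ((N - p) / γ + ε) ^ 2 / (2 * ε) := by
      field_simp
      ring
    have h4 : 0 ≤ ((N - p) / γ + ε) ^ 2 / (2 * ε) := by positivity
    linarith
  have h5 : 0 ≤ C * (N - p) ^ 2 := by positivity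
  have h6 : 0 ≤ 1 / (2 * ε * γ ^ 2) * ((S - s) ^ 2 + (Q - q) ^ 2) := by positivity
  linarith

lemma Regular.exists_le_IPout (h : Regular Δ φ B) (U : Set ℝ) {ε : ℝ}
    (hε : 0 < ε) : ∃ C, 0 ≤ C ∧ ∀ (n : ℕ) (k : ℝ) (x : Fin n → ℝ),
    expLog Δ PA φ (emp k (fun t => t ^ 2) x) 0 0
        - expLog Δ PA φ (emp k (U.indicator fun t => t ^ 2) x)
          (emp k (fun t => t ^ 2) x - emp k (U.indicator fun t => t ^ 2) x)
          (secondMoment P0 - ∫ t, U.indicator (fun t => t ^ 2) t ∂P0)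
      ≤ IPout Δ PA φ (∫ t, U.indicator (fun t => t ^ 2) t ∂P0) (secondMoment P0) + ε
        + C * deviation P0 U k x := by
  let F : ℝ × ℝ → ℝ := fun p => expLog Δ PA φ p.1 0 0 - expLog Δ PA φ p.2 (p.1 - p.2)
    (secondMoment P0 - ∫ t, U.indicator (fun t => t ^ 2) t ∂P0)
  have hF : Continuous F :=
    (h.continuous_expLog_comp continuous_fst continuous_const continuous_const).sub
      (h.continuous_expLog_comp continuous_snd (continuous_fst.sub continuous_snd)
        continuous_const)
  have hM (p : ℝ × ℝ) : |F p| ≤ (logBound Δ B + 1) + (logBound Δ B + 1) :=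
    (abs_sub _ _).trans (add_le_add (h.abs_expLog_le _ _ _) (h.abs_expLog_le _ _ _))
  obtain ⟨C, hC, hCF⟩ := exists_abs_sub_le_add_mul_dist_sq hM (hF.continuousAt
    (x := (secondMoment P0, ∫ t, U.indicator (fun t => t ^ 2) t ∂P0))) hε
  refine ⟨C, hC, fun n k x => ?_⟩
  have h1 := (abs_le.1 (hCF (emp k (fun t => t ^ 2) x, emp k (U.indicator fun t => t ^ 2) x))).2
  have h2 := mul_le_mul_of_nonneg_left (dist_prod_sq_le (emp k (fun t => t ^ 2) x)
    (emp k (U.indicator fun t => t ^ 2) x) (secondMoment P0)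
    (∫ t, U.indicator (fun t => t ^ 2) t ∂P0)) hC
  rw [IPout_eq h]
  simp only [F] at h1
  unfold deviation
  have h3 : 0 ≤ C * (emp k (U.indicator fun _ => 1) x - P0.real U) ^ 2 := by positivity
  linarith

end

lemma emp_indicator_mul {n : ℕ} {k : ℝ} (hk : 0 < k) (U : Set ℝ) [DecidablePred (· ∈ U)]
    (x : Fin n → ℝ) : k * emp k (U.indicator fun _ => 1) x
      = (Finset.univ.filter fun i => x i ∈ U).card := by
  rw [emp, mul_div_cancel₀ _ hk.ne']
  simp [Set.indicator_apply]

lemma sum_filter_scaled_sq {n : ℕ} {k : ℝ} (hk : 0 < k) (U : Set ℝ) [DecidablePred (· ∈ U)]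
    (x : Fin n → ℝ) :
    ∑ i with x i ∈ U, scaled k x i ^ 2 = emp k (U.indicator fun t => t ^ 2) x := by
  rw [sum_scaled_sq hk, emp, Finset.sum_filter]
  simp [Set.indicator_apply]

lemma sum_univ_scaled_sq {n : ℕ} {k : ℝ} (hk : 0 < k) (x : Fin n → ℝ) :
    ∑ i, scaled k x i ^ 2 = emp k (fun t => t ^ 2) x :=
  sum_scaled_sq hk Finset.univ

section
variable {ρ : ℝ} {P0 : Measure ℝ} [IsProbabilityMeasure P0] {n : ℕ}

lemma integral_card_ne_zero_le (h0 : 0 < ρ) (h1 : ρ < 1) :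
    Integrable (fun x : Fin n → ℝ => ((Finset.univ.filter fun i => x i ≠ 0).card : ℝ))
      (iid n (sparsePrior ρ P0)) ∧
    ∫ x : Fin n → ℝ, ((Finset.univ.filter fun i => x i ≠ 0).card : ℝ)
      ∂(iid n (sparsePrior ρ P0)) ≤ n * ρ := by
  have := isProbabilityMeasure_sparsePrior (P0 := P0) h0 h1
  have hm : MeasurableSet ({0}ᶜ : Set ℝ) := (measurableSet_singleton 0).compl
  have e (x : Fin n → ℝ) : ((Finset.univ.filter fun i => x i ≠ 0).card : ℝ)
      = ∑ i, ({0}ᶜ : Set ℝ).indicator (fun _ => (1 : ℝ)) (x i) := by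
    rw [Finset.card_filter]
    push_cast
    simp [Set.indicator_apply]
  have hi : Integrable (({0}ᶜ : Set ℝ).indicator fun _ => (1 : ℝ)) P0 :=
    (integrable_const _).indicator hm
  have hs := integral_sum_iid n (integrable_sparsePrior (ρ := ρ) hi)
  simp only [e]
  refine ⟨hs.1, ?_⟩
  rw [hs.2, integral_sparsePrior h0 h1 hi, integral_indicator_const _ hm]
  have : P0.real {0}ᶜ ≤ 1 := measureReal_le_one
  simp only [Set.mem_compl_iff, Set.mem_singleton_iff, not_true_eq_false, not_false_eq_true,
    Set.indicator_of_notMem, mul_zero, zero_add, smul_eq_mul, mul_one]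
  gcongr
  nlinarith

variable {Δ : ℝ} {kA : ℕ} {PA : Measure (Fin kA → ℝ)} [IsProbabilityMeasure PA]
  {φ : ℝ → (Fin kA → ℝ) → ℝ} {B : ℝ} {m K : ℕ} {v : Fin K → ℝ} {γ : ℝ}

/-- The pointwise lower bound behind `Regular.le_MI`. -/
lemma Regular.le_sub_integral_log_margDens (h : Regular Δ φ B) (hK : 0 < K)
    (hv0 : ∀ j, 0 < v j) (hv : StrictMono v) {k : ℝ} (hk : 0 < k) (h0 : 0 < ρ) (h1 : ρ < 1)
    (hγ : 0 < γ) (hm : (m : ℝ) = γ * k * |log ρ|) {s : ℝ} (hs : 0 < s)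
    (hs1 : s * (2 * logBound Δ B + 1) ≤ 1) {J C : ℝ} (hC : 0 ≤ C) {x : Fin n → ℝ}
    (hx : ∀ i, x i = 0 ∨ ∃ j, |x i| = v j)
    (hJ : ∀ j ≤ K, J ≤ expLog Δ PA φ (emp k (fun t => t ^ 2) x) 0 0
      - expLog Δ PA φ (emp k ((lvl v j).indicator fun t => t ^ 2) x)
        (emp k (fun t => t ^ 2) x - emp k ((lvl v j).indicator fun t => t ^ 2) x)
        (emp k (fun t => t ^ 2) x - emp k ((lvl v j).indicator fun t => t ^ 2) x)
      + emp k ((lvl v j).indicator fun _ => 1) x / γ + C * deviation P0 (lvl v j) k x) :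
    m * (J - C * ∑ j ∈ Finset.range (K + 1), deviation P0 (lvl v j) k x)
      - (Finset.univ.filter fun i => x i ≠ 0).card * log 2 - (1 + s) / s *
        ((Finset.univ.filter fun i => x i ≠ 0).card * log 2
          + m * (s ^ 2 * ∫ z, (2 * logBound Δ B + 1 + z ^ 2) ^ 2 ∂stdG))
      ≤ m * expLog Δ PA φ (∑ i, scaled k x i ^ 2) 0 0
        - ∫ ω, log (margDens Δ PA φ (sparsePrior ρ P0) k (fun μ => (ω μ).1)
          (sysOut Δ φ (scaled k x) ω)) ∂(sysLaw PA n m) := by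
  have := isProbabilityMeasure_sparsePrior (P0 := P0) h0 h1
  have key := h.integral_log_margDens_le_of_levels (PA := PA) (m := m) hK hv0 hv hx hk h0 h1
    (sparsePrior_ne_zero_le (P0 := P0)) hs hs1
    (D := m * (expLog Δ PA φ (emp k (fun t => t ^ 2) x) 0 0
      - (J - C * ∑ j ∈ Finset.range (K + 1), deviation P0 (lvl v j) k x))) fun j hj => by
    rw [sum_filter_scaled_sq hk, sum_univ_scaled_sq hk, ← emp_indicator_mul hk]
    have hd : deviation P0 (lvl v j) k x
        ≤ ∑ j ∈ Finset.range (K + 1), deviation P0 (lvl v j) k x :=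
      Finset.single_le_sum (f := fun j => deviation P0 (lvl v j) k x)
        (fun i _ => by unfold deviation; positivity) (Finset.mem_range.2 (by omega))
    have e : k * emp k ((lvl v j).indicator fun _ => 1) x * log ρ
        = -(m * (emp k ((lvl v j).indicator fun _ => 1) x / γ)) := by
      rw [hm, abs_of_neg (log_neg h0 h1)]
      field_simp
    rw [e]
    have h2 := mul_le_mul_of_nonneg_left hd hC
    have h3 : (0 : ℝ) ≤ m := m.cast_nonneg
    have h4 := mul_le_mul_of_nonneg_left ((hJ j hj).trans (add_le_add_right h2 _)) h3
    linarith
  rw [sum_univ_scaled_sq hk]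
  linarith

/-- The lower bound on the mutual information. -/
lemma Regular.le_MI (h : Regular Δ φ B) (hK : 0 < K)
    (hv0 : ∀ j, 0 < v j) (hv : StrictMono v) (hM : MemLp (fun t : ℝ => t ^ 2) 2 P0)
    (hP0 : ∀ᵐ t ∂P0, ∃ j, |t| = v j) (hn : 0 < n) (h0 : 0 < ρ) (h1 : ρ < 1)
    (hγ : 0 < γ) (hm : (m : ℝ) = γ * (n * ρ) * |log ρ|) {s : ℝ} (hs : 0 < s)
    (hs1 : s * (2 * logBound Δ B + 1) ≤ 1) {J C : ℝ} (hC : 0 ≤ C)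
    (hJ : ∀ j ≤ K, ∀ x : Fin n → ℝ, J ≤ expLog Δ PA φ (emp (n * ρ) (fun t => t ^ 2) x) 0 0
      - expLog Δ PA φ (emp (n * ρ) ((lvl v j).indicator fun t => t ^ 2) x)
        (emp (n * ρ) (fun t => t ^ 2) x - emp (n * ρ) ((lvl v j).indicator fun t => t ^ 2) x)
        (emp (n * ρ) (fun t => t ^ 2) x - emp (n * ρ) ((lvl v j).indicator fun t => t ^ 2) x)
      + emp (n * ρ) ((lvl v j).indicator fun _ => 1) x / γ
      + C * deviation P0 (lvl v j) (n * ρ) x) :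
    m * (J - C * ∑ j ∈ Finset.range (K + 1), deviationBound P0 (lvl v j) / (n * ρ))
      - n * ρ * log 2 - (1 + s) / s *
        (n * ρ * log 2 + m * (s ^ 2 * ∫ z, (2 * logBound Δ B + 1 + z ^ 2) ^ 2 ∂stdG))
      ≤ MI Δ PA φ P0 ρ n m := by
  have := isProbabilityMeasure_sparsePrior (P0 := P0) h0 h1
  have hk : 0 < n * ρ := by positivity
  rw [h.MI_eq]
  set k := n * ρ
  set c2 := ∫ z, (2 * logBound Δ B + 1 + z ^ 2) ^ 2 ∂stdG
  have hx := ae_iid (ae_sparsePrior (ρ := ρ) (p := fun t => t = 0 ∨ ∃ j, |t| = v j) (Or.inl rfl)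
    (hP0.mono fun t ht => Or.inr ht)) n
  have hmono := hx.mono fun x hx => h.le_sub_integral_log_margDens hK hv0 hv hk h0 h1 hγ hm hs hs1
    hC hx fun j hj => hJ j hj x
  have hT := integral_card_ne_zero_le (P0 := P0) (n := n) h0 h1
  set T : (Fin n → ℝ) → ℝ := fun x => ((Finset.univ.filter fun i => x i ≠ 0).card : ℝ) with hTdef
  set V : (Fin n → ℝ) → ℝ := fun x => ∑ j ∈ Finset.range (K + 1), deviation P0 (lvl v j) k x
    with hVdef
  have hVi : Integrable V (iid n (sparsePrior ρ P0)) :=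
    integrable_finsetSum _ fun j _ => integrable_deviation h0 h1 hM (measurableSet_lvl v j) k
  have hV : ∫ x, V x ∂(iid n (sparsePrior ρ P0))
      ≤ ∑ j ∈ Finset.range (K + 1), deviationBound P0 (lvl v j) / k := by
    rw [hVdef, integral_finsetSum _ fun j _ =>
      integrable_deviation h0 h1 hM (measurableSet_lvl v j) k]
    exact Finset.sum_le_sum fun j _ =>
      integral_deviation_le h0 h1 hM (measurableSet_lvl v j) (zero_notMem_lvl hv0 j) hn
  have e (x : Fin n → ℝ) : m * (J - C * V x) - T x * log 2 - (1 + s) / s *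
      (T x * log 2 + m * (s ^ 2 * c2)) = (m * J - (1 + s) / s * (m * (s ^ 2 * c2)))
        + ((-(m * C)) * V x + (-(log 2 + (1 + s) / s * log 2)) * T x) := by ring
  have iL : Integrable (fun x => (m * J - (1 + s) / s * (m * (s ^ 2 * c2)))
        + ((-(m * C)) * V x + (-(log 2 + (1 + s) / s * log 2)) * T x))
      (iid n (sparsePrior ρ P0)) :=
    (integrable_const _).add ((hVi.const_mul _).add (hT.1.const_mul _))
  have m1 : Measurable (fun x : Fin n → ℝ => ∑ i, scaled k x i ^ 2) := by
    simp only [sum_univ_scaled_sq hk]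
    exact measurable_emp (by fun_prop)
  have i1 : Integrable (fun x : Fin n → ℝ => m * expLog Δ PA φ (∑ i, scaled k x i ^ 2) 0 0)
      (iid n (sparsePrior ρ P0)) :=
    (h.integrable_expLog m1 measurable_const measurable_const).const_mul _
  have i3 := (h.integrable_log_margDens_prod (PA := PA) (P := sparsePrior ρ P0) (n := n) (m := m)
    k).integral_prod_left
  refine le_trans ?_ (integral_mono_ae (iL.congr (.of_forall fun x => (e x).symm)) (i1.sub i3)
    hmono)
  simp only [e]
  have e1 := integral_add (integrable_const (μ := iid n (sparsePrior ρ P0))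
    (m * J - (1 + s) / s * (m * (s ^ 2 * c2)))) ((hVi.const_mul (-(m * C))).add
      (hT.1.const_mul (-(log 2 + (1 + s) / s * log 2))))
  have e2 := integral_add (hVi.const_mul (-(m * C)))
    (hT.1.const_mul (-(log 2 + (1 + s) / s * log 2)))
  simp only [Pi.add_apply] at e1 e2
  rw [e1, e2, integral_const_mul, integral_const_mul, integral_const, probReal_univ, one_smul]
  have hmC : 0 ≤ m * C := by positivity
  have hl : 0 ≤ log 2 + (1 + s) / s * log 2 := by
    have := log_pos one_lt_two
    positivity
  have b1 := mul_le_mul_of_nonneg_left hV hmC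
  have b2 := mul_le_mul_of_nonneg_left hT.2 hl
  linarith

end

/-- The candidate limit value attached to the `j`-th level of the prior. -/
def levelValue (Δ : ℝ) {kA : ℕ} (PA : Measure (Fin kA → ℝ)) (φ : ℝ → (Fin kA → ℝ) → ℝ)
    (P0 : Measure ℝ) (γ : ℝ) {K : ℕ} (v : Fin K → ℝ) (j : ℕ) : ℝ :=
  IPout Δ PA φ (∫ t, (lvl v j).indicator (fun t => t ^ 2) t ∂P0) (secondMoment P0)
    + P0.real (lvl v j) / γ

section
variable {P0 : Measure ℝ} [IsProbabilityMeasure P0]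
  {Δ : ℝ} {kA : ℕ} {PA : Measure (Fin kA → ℝ)} [IsProbabilityMeasure PA]
  {φ : ℝ → (Fin kA → ℝ) → ℝ} {B : ℝ} {K : ℕ} {v : Fin K → ℝ} {γ : ℝ}
  {ρ : ℕ → ℝ} {m : ℕ → ℕ}

lemma Regular.eventually_lt_MI_div (h : Regular Δ φ B) (hK : 0 < K)
    (hv0 : ∀ j, 0 < v j) (hv : StrictMono v) (hM : MemLp (fun t : ℝ => t ^ 2) 2 P0)
    (hP0 : ∀ᵐ t ∂P0, ∃ j, |t| = v j) (hρ : ∀ n, 0 < ρ n ∧ ρ n < 1) (hγ : 0 < γ)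
    (hm : ∀ n, (m n : ℝ) = γ * (n * ρ n) * |log (ρ n)|)
    (ha : Filter.Tendsto (fun n => n * ρ n) Filter.atTop Filter.atTop)
    (hL : Filter.Tendsto (fun n => |log (ρ n)|) Filter.atTop Filter.atTop)
    {J b : ℝ} (hJ : ∀ j ≤ K, J ≤ levelValue Δ PA φ P0 γ v j) (hb : b < J) :
    ∀ᶠ n in Filter.atTop, b < MI Δ PA φ P0 (ρ n) n (m n) / m n := by
  set ε := (J - b) / 2 with hε
  have hε0 : 0 < ε := by simp only [ε]; linarith
  choose C hC0 hC using fun j => h.exists_IPout_le (PA := PA) (P0 := P0) hγ (lvl v j) hε0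
  set C' := ∑ j ∈ Finset.range (K + 1), C j
  have hC' : 0 ≤ C' := Finset.sum_nonneg fun j _ => hC0 j
  set c2 := ∫ z, (2 * logBound Δ B + 1 + z ^ 2) ^ 2 ∂stdG
  have hs : ∀ᶠ s in nhdsWithin (0 : ℝ) (Set.Ioi 0),
      s * (2 * logBound Δ B + 1) < 1 ∧ (1 + s) * s * c2 < ε := by
    refine Filter.Eventually.filter_mono nhdsWithin_le_nhds (Filter.Eventually.and ?_ ?_)
    · exact ContinuousAt.eventually_lt (by fun_prop) continuousAt_const (by simp)
    · exact ContinuousAt.eventually_lt (by fun_prop) continuousAt_const (by simpa using hε0)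
  obtain ⟨s, ⟨hs1, hs2⟩, hs0⟩ := (hs.and self_mem_nhdsWithin).exists
  replace hs0 : 0 < s := hs0
  have hlim : Filter.Tendsto (fun n : ℕ => (J - ε - C' * ∑ j ∈ Finset.range (K + 1),
      deviationBound P0 (lvl v j) / (n * ρ n)) - log 2 / (γ * |log (ρ n)|)
      - (1 + s) / s * (log 2 / (γ * |log (ρ n)|) + s ^ 2 * c2)) Filter.atTop
      (nhds ((J - ε - C' * ∑ j ∈ Finset.range (K + 1), 0) - 0
        - (1 + s) / s * (0 + s ^ 2 * c2))) := by
    have l1 : Filter.Tendsto (fun n => log 2 / (γ * |log (ρ n)|)) Filter.atTop (nhds 0) :=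
      (hL.const_mul_atTop hγ).const_div_atTop _
    exact ((tendsto_const_nhds.sub ((tendsto_finsetSum _ fun j _ =>
      ha.const_div_atTop _).const_mul _)).sub l1).sub ((l1.add_const _).const_mul _)
  have hlt : b < (J - ε - C' * ∑ j ∈ Finset.range (K + 1), (0 : ℝ)) - 0
        - (1 + s) / s * (0 + s ^ 2 * c2) := by
    have : (1 + s) / s * (0 + s ^ 2 * c2) = (1 + s) * s * c2 := by field_simp; ring
    rw [this, Finset.sum_const_zero]
    linarith
  filter_upwards [hlim.eventually_const_lt hlt, ha.eventually_gt_atTop 0,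
    hL.eventually_gt_atTop 0, Filter.eventually_gt_atTop 0] with n hn han hLn hn0
  have hmn : (0 : ℝ) < m n := by rw [hm]; positivity
  refine hn.trans_le ?_
  rw [le_div_iff₀ hmn]
  have key := h.le_MI (PA := PA) hK hv0 hv hM hP0 hn0 (hρ n).1 (hρ n).2 hγ (hm n) hs0 hs1.le
    (J := J - ε) hC' fun j hj x => by
      have h1 := hC j n (n * ρ n) x
      have h2 : C j * deviation P0 (lvl v j) (n * ρ n) x
          ≤ C' * deviation P0 (lvl v j) (n * ρ n) x :=
        mul_le_mul_of_nonneg_right (Finset.single_le_sum (fun j _ => hC0 j)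
          (Finset.mem_range.2 (by omega))) (by unfold deviation; positivity)
      have h3 := hJ j hj
      unfold levelValue at h3
      linarith
  refine le_of_eq_of_le ?_ key
  have e : log 2 / (γ * |log (ρ n)|) * m n = n * ρ n * log 2 := by
    rw [hm]
    field_simp
  rw [sub_mul, sub_mul, e, mul_assoc ((1 + s) / s), add_mul, e]
  ring

/-- The upper bound on the mutual information. -/
lemma Regular.MI_le_IPout (h : Regular Δ φ B) {n m : ℕ} {ρ : ℝ} (h0 : 0 < ρ) (h1 : ρ ≤ 1 / 2)
    (hn : 0 < n) (hγ : 0 < γ) (hm : (m : ℝ) = γ * (n * ρ) * |log ρ|)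
    (hM : MemLp (fun t : ℝ => t ^ 2) 2 P0) {U : Set ℝ} (hU : MeasurableSet U)
    (hU0 : (0 : ℝ) ∉ U) {c : ℝ} (hc0 : 0 < c) (hc : ∀ᵐ t ∂P0, ENNReal.ofReal c ≤ P0 {t})
    {ε C : ℝ} (hC0 : 0 ≤ C) (hC : ∀ x : Fin n → ℝ,
      expLog Δ PA φ (emp (n * ρ) (fun t => t ^ 2) x) 0 0
        - expLog Δ PA φ (emp (n * ρ) (U.indicator fun t => t ^ 2) x)
          (emp (n * ρ) (fun t => t ^ 2) x - emp (n * ρ) (U.indicator fun t => t ^ 2) x)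
          (secondMoment P0 - ∫ t, U.indicator (fun t => t ^ 2) t ∂P0)
      ≤ IPout Δ PA φ (∫ t, U.indicator (fun t => t ^ 2) t ∂P0) (secondMoment P0) + ε
        + C * deviation P0 U (n * ρ) x) :
    MI Δ PA φ P0 ρ n m ≤ m * (IPout Δ PA φ (∫ t, U.indicator (fun t => t ^ 2) t ∂P0)
      (secondMoment P0) + P0.real U / γ + ε + C * (deviationBound P0 U / (n * ρ)))
      + n * ρ * (2 + |log c|) := by
  have h1' : ρ < 1 := by linarith
  have := isProbabilityMeasure_sparsePrior (P0 := P0) h0 h1'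
  refine (h.MI_le h0 h1' hn hU hU0 hc0 hc
    (secondMoment P0 - ∫ t, U.indicator (fun t => t ^ 2) t ∂P0)).trans ?_
  have m1 : Measurable (emp (n * ρ) (fun t => t ^ 2) : (Fin n → ℝ) → ℝ) :=
    measurable_emp (by fun_prop)
  have m2 : Measurable (emp (n * ρ) (U.indicator fun t => t ^ 2) : (Fin n → ℝ) → ℝ) :=
    measurable_emp (Measurable.indicator (by fun_prop) hU)
  have iL := (h.integrable_expLog (PA := PA) (μ := iid n (sparsePrior ρ P0)) m1
    (measurable_const (a := 0)) (measurable_const (a := 0))).sub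
    (h.integrable_expLog (PA := PA) m2 (m1.sub m2) (measurable_const
      (a := secondMoment P0 - ∫ t, U.indicator (fun t => t ^ 2) t ∂P0)))
  set I := IPout Δ PA φ (∫ t, U.indicator (fun t => t ^ 2) t ∂P0) (secondMoment P0)
  have hd := integrable_deviation (n := n) h0 h1' hM hU (n * ρ)
  have b1 := integral_mono iL ((integrable_const (I + ε)).add (hd.const_mul C)) hC
  have e1 := integral_add (integrable_const (μ := iid n (sparsePrior ρ P0)) (I + ε))
    (hd.const_mul C)
  simp only [Pi.add_apply, Pi.sub_apply] at b1 e1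
  rw [e1, integral_const_mul, integral_const, probReal_univ, one_smul] at b1
  have b2 := mul_le_mul_of_nonneg_left (integral_deviation_le (n := n) h0 h1' hM hU hU0 hn) hC0
  have b3 := mul_le_mul_of_nonneg_left (b1.trans (add_le_add_right b2 _)) (m.cast_nonneg (α := ℝ))
  set p := P0.real U
  have hp0 : 0 ≤ p := measureReal_nonneg
  have hp1 : p ≤ 1 := measureReal_le_one
  have hl : -(2 * ρ) ≤ log (1 - ρ) := by
    refine le_trans ?_ (one_sub_inv_le_log_of_pos (by linarith))
    rw [neg_le_sub_iff_le_add, inv_le_iff_one_le_mul₀ (by linarith)]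
    nlinarith
  have hl0 : log (1 - ρ) ≤ 0 := log_nonpos (by linarith) (by linarith)
  have hw : -(2 * ρ) ≤ (1 - ρ) * log (1 - ρ) + ρ * ((1 - p) * log (1 - ρ)) := by
    have : 0 ≤ (ρ * p) * -log (1 - ρ) :=
      mul_nonneg (by positivity) (by linarith)
    linarith
  have hlc : -(p * |log c|) ≤ p * log c := by
    rw [← mul_neg]
    exact mul_le_mul_of_nonneg_left (neg_abs_le _) hp0
  have hpc : p * |log c| ≤ |log c| := mul_le_of_le_one_left (abs_nonneg _) hp1
  have hfin : -(2 * ρ) + (ρ * p * log ρ - ρ * |log c|)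
      ≤ (1 - ρ) * log (1 - ρ) + ρ * ((1 - p) * log (1 - ρ) + p * log (ρ * c)) := by
    rw [log_mul h0.ne' hc0.ne']
    have := mul_le_mul_of_nonneg_left (show -|log c| ≤ p * log c by linarith) h0.le
    linarith
  have hfin' := mul_le_mul_of_nonneg_left hfin (n.cast_nonneg (α := ℝ))
  have e : (m : ℝ) * (p / γ) = -(n * (ρ * p * log ρ)) := by
    rw [hm, abs_of_neg (log_neg h0 h1')]
    field_simp
  linarith

lemma Regular.eventually_MI_div_lt (h : Regular Δ φ B)
    (hv0 : ∀ j, 0 < v j) (hM : MemLp (fun t : ℝ => t ^ 2) 2 P0)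
    {c : ℝ} (hc0 : 0 < c) (hc : ∀ᵐ t ∂P0, ENNReal.ofReal c ≤ P0 {t})
    (hρ : ∀ n, 0 < ρ n ∧ ρ n < 1) (hγ : 0 < γ)
    (hm : ∀ n, (m n : ℝ) = γ * (n * ρ n) * |log (ρ n)|)
    (hρ0 : Filter.Tendsto ρ Filter.atTop (nhds 0))
    (ha : Filter.Tendsto (fun n => n * ρ n) Filter.atTop Filter.atTop)
    (hL : Filter.Tendsto (fun n => |log (ρ n)|) Filter.atTop Filter.atTop)
    (j : ℕ) {b : ℝ} (hb : levelValue Δ PA φ P0 γ v j < b) :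
    ∀ᶠ n in Filter.atTop, MI Δ PA φ P0 (ρ n) n (m n) / m n < b := by
  set J := levelValue Δ PA φ P0 γ v j with hJ
  set ε := (b - J) / 2 with hε
  have hε0 : 0 < ε := by simp only [ε]; linarith
  obtain ⟨C, hC0, hC⟩ := h.exists_le_IPout (PA := PA) (P0 := P0) (lvl v j) hε0
  have hlim : Filter.Tendsto (fun n : ℕ => J + ε + C * (deviationBound P0 (lvl v j) / (n * ρ n))
      + (2 + |log c|) / (γ * |log (ρ n)|)) Filter.atTop (nhds (J + ε + C * 0 + 0)) :=
    (tendsto_const_nhds.add ((ha.const_div_atTop _).const_mul _)).add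
      ((hL.const_mul_atTop hγ).const_div_atTop _)
  filter_upwards [hlim.eventually_lt_const (show J + ε + C * 0 + 0 < b by linarith),
    ha.eventually_gt_atTop 0, hL.eventually_gt_atTop 0, Filter.eventually_gt_atTop 0,
    hρ0.eventually_le_const (show (0 : ℝ) < 1 / 2 by norm_num)] with n hn han hLn hn0 hρn
  have hmn : (0 : ℝ) < m n := by rw [hm]; positivity
  refine lt_of_le_of_lt ?_ hn
  rw [div_le_iff₀ hmn]
  refine (h.MI_le_IPout (PA := PA) (hρ n).1 hρn hn0 hγ (hm n) hM (measurableSet_lvl v j)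
    (zero_notMem_lvl hv0 j) hc0 hc hC0 fun x => hC n _ x).trans (le_of_eq ?_)
  have e : (2 + |log c|) / (γ * |log (ρ n)|) * m n = n * ρ n * (2 + |log c|) := by
    rw [hm]
    field_simp
  rw [add_mul _ _ (m n : ℝ), e, hJ, levelValue]
  ring

end

lemma levelValue_eq (Δ : ℝ) {kA : ℕ} (PA : Measure (Fin kA → ℝ)) (φ : ℝ → (Fin kA → ℝ) → ℝ)
    (P0 : Measure ℝ) (γ : ℝ) {K : ℕ} (v : Fin K → ℝ) (j : ℕ) :
    levelValue Δ PA φ P0 γ v j = if h : j < K then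
        IPout Δ PA φ (truncSMge P0 (v ⟨j, h⟩)) (secondMoment P0) + tailProb P0 (v ⟨j, h⟩) / γ
      else IPout Δ PA φ 0 (secondMoment P0) := by
  unfold levelValue
  split_ifs with h
  · have e : lvl v j = {t | v ⟨j, h⟩ ≤ |t|} := by ext; simp [lvl, h]
    simp only [e, truncSMge, tailProb, Set.indicator_apply, Set.mem_ofPred_eq, Measure.real]
  · have e : lvl v j = ∅ := by ext; simp [lvl, h]
    simp [e]

section
variable {ρ : ℕ → ℝ} {lam c : ℝ}

lemma tendsto_zero_of_le_rpow (hlam : 0 < lam) (h0 : ∀ n, 0 < ρ n)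
    (h : ∀ n : ℕ, 1 ≤ n → ρ n ≤ c * (n : ℝ) ^ (-lam)) :
    Filter.Tendsto ρ Filter.atTop (nhds 0) := by
  have h1 : Filter.Tendsto (fun n : ℕ => c * (n : ℝ) ^ (-lam)) Filter.atTop (nhds 0) := by
    simpa using ((tendsto_rpow_neg_atTop hlam).comp tendsto_natCast_atTop_atTop).const_mul c
  exact tendsto_of_tendsto_of_tendsto_of_le_of_le' tendsto_const_nhds h1
    (.of_forall fun n => (h0 n).le) ((Filter.eventually_ge_atTop 1).mono h)

lemma tendsto_mul_atTop_of_rpow_le (hlam : lam < 1) (hc : 0 < c)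
    (h : ∀ n : ℕ, 1 ≤ n → c * (n : ℝ) ^ (-lam) ≤ ρ n) :
    Filter.Tendsto (fun n : ℕ => n * ρ n) Filter.atTop Filter.atTop := by
  have h1 : Filter.Tendsto (fun n : ℕ => c * (n : ℝ) ^ (1 - lam)) Filter.atTop Filter.atTop :=
    ((tendsto_rpow_atTop (by linarith)).comp tendsto_natCast_atTop_atTop).const_mul_atTop hc
  refine Filter.tendsto_atTop_mono' _ ?_ h1
  filter_upwards [Filter.eventually_ge_atTop 1] with n hn
  have hn0 : (0 : ℝ) < n := by exact_mod_cast hn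
  have e : c * (n : ℝ) ^ (1 - lam) = n * (c * (n : ℝ) ^ (-lam)) := by
    rw [sub_eq_add_neg, rpow_add hn0, rpow_one]
    ring
  rw [e]
  exact mul_le_mul_of_nonneg_left (h n hn) hn0.le

lemma tendsto_abs_log_atTop (h0 : ∀ n, 0 < ρ n) (h : Filter.Tendsto ρ Filter.atTop (nhds 0)) :
    Filter.Tendsto (fun n => |log (ρ n)|) Filter.atTop Filter.atTop :=
  Filter.tendsto_abs_atBot_atTop.comp (tendsto_log_nhdsGT_zero.comp
    (tendsto_nhdsWithin_iff.2 ⟨h, .of_forall h0⟩))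

end

/-- Theorem 2 of the paper: the limit of the mutual information per sample
for a discrete prior with finite support. The minimum runs over k in {1,...,K+1}, the term
k = K+1 (index K below) being I_Pout(0, E X^2). -/
theorem limit_MI_discrete_prior
    (Δ : ℝ) (hΔ : 0 < Δ)
    (kA : ℕ) (PA : Measure (Fin kA → ℝ)) [IsProbabilityMeasure PA]
    (φ φ' φ'' : ℝ → (Fin kA → ℝ) → ℝ)
    -- (H2)
    (hφmeas : Measurable fun p : ℝ × (Fin kA → ℝ) => φ p.1 p.2)
    (hφbd : ∃ B, ∀ x a, |φ x a| ≤ B)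
    (hd1 : ∀ a x, HasDerivAt (fun t => φ t a) (φ' x a) x)
    (hd2 : ∀ a x, HasDerivAt (fun t => φ' t a) (φ'' x a) x)
    (hφ'bd : ∃ B, ∀ x a, |φ' x a| ≤ B)
    (hφ''bd : ∃ B, ∀ x a, |φ'' x a| ≤ B)
    (hφ'cont : ∀ a, Continuous fun x => φ' x a)
    (hφ''cont : ∀ a, Continuous fun x => φ'' x a)
    -- discrete prior with finite support, 0 < v 0 < ... < v (K-1)
    (K : ℕ) (hK : 0 < K) (v : Fin K → ℝ) (hvpos : 0 < v ⟨0, hK⟩) (hvmono : StrictMono v)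
    (P0 : Measure ℝ) [IsProbabilityMeasure P0]
    (hsupp : ∀ᵐ x ∂P0, ∃ k : Fin K, x = v k ∨ x = -(v k))
    -- sparsity and sampling rate
    (lam : ℝ) (hlam0 : 0 < lam) (hlam1 : lam < 1 / 9)
    (ρ : ℕ → ℝ) (hρ : ∀ n, 0 < ρ n ∧ ρ n < 1)
    (c1 c2 : ℝ) (hc1 : 0 < c1) (hc12 : c1 ≤ c2)
    (hΘ : ∀ n : ℕ, 1 ≤ n →
      c1 * (n : ℝ) ^ (-lam) ≤ ρ n ∧ ρ n ≤ c2 * (n : ℝ) ^ (-lam))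
    (γ : ℝ) (hγ : 0 < γ)
    (α : ℕ → ℝ) (hα : ∀ n, α n = γ * ρ n * |Real.log (ρ n)|)
    (m : ℕ → ℕ) (hm : ∀ n, (m n : ℝ) = α n * n) :
    Filter.Tendsto (fun n : ℕ => MI Δ PA φ P0 (ρ n) n (m n) / (m n : ℝ)) Filter.atTop
      (nhds (⨅ k : Fin (K + 1),
        if h : (k : ℕ) < K then
          IPout Δ PA φ (truncSMge P0 (v ⟨k, h⟩)) (secondMoment P0)
            + tailProb P0 (v ⟨k, h⟩) / γ
        else IPout Δ PA φ 0 (secondMoment P0))) := by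
  obtain ⟨B, hB⟩ := hφbd
  have hreg : Regular Δ φ B :=
    ⟨hΔ, hφmeas, hB, fun a => continuous_iff_continuousAt.2 fun x => (hd1 a x).continuousAt⟩
  have hv0 (j : Fin K) : 0 < v j := hvpos.trans_le (hvmono.monotone (Fin.mk_le_of_le_val (by simp)))
  have hP0 : ∀ᵐ t ∂P0, ∃ j, |t| = v j := by
    filter_upwards [hsupp] with t ⟨j, hj⟩
    exact ⟨j, by rcases hj with rfl | rfl <;> simp [abs_of_pos (hv0 j)]⟩
  have hM : MemLp (fun t : ℝ => t ^ 2) 2 P0 := by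
    refine MemLp.of_bound (by fun_prop) (∑ j, v j ^ 2) ?_
    filter_upwards [hP0] with t ⟨j, hj⟩
    rw [Real.norm_of_nonneg (sq_nonneg t), ← sq_abs, hj]
    exact Finset.single_le_sum (f := fun j => v j ^ 2) (fun i _ => sq_nonneg _)
      (Finset.mem_univ j)
  obtain ⟨c, hc0, hc⟩ := exists_le_measure_singleton (P := P0)
    (F := Finset.univ.image v ∪ Finset.univ.image (-v)) (by
      filter_upwards [hsupp] with t ⟨j, hj⟩
      simp only [Finset.mem_union, Finset.mem_image, Finset.mem_univ, true_and, Pi.neg_apply]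
      exact hj.imp (fun h => ⟨j, h.symm⟩) fun h => ⟨j, h.symm⟩)
  have hρ0 := tendsto_zero_of_le_rpow hlam0 (fun n => (hρ n).1) fun n hn => (hΘ n hn).2
  have ha := tendsto_mul_atTop_of_rpow_le (by linarith) hc1 fun n hn => (hΘ n hn).1
  have hL := tendsto_abs_log_atTop (fun n => (hρ n).1) hρ0
  have hm' (n : ℕ) : (m n : ℝ) = γ * (n * ρ n) * |log (ρ n)| := by
    rw [hm, hα]
    ring
  simp only [← levelValue_eq Δ PA φ P0 γ v]
  refine tendsto_order.2 ⟨fun b hb => ?_, fun b hb => ?_⟩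
  · refine hreg.eventually_lt_MI_div hK hv0 hvmono hM hP0 hρ hγ hm' ha hL (fun j hj => ?_) hb
    exact ciInf_le (f := fun k : Fin (K + 1) => levelValue Δ PA φ P0 γ v k)
      (Set.finite_range _).bddBelow ⟨j, by omega⟩
  · obtain ⟨k, hk⟩ := exists_lt_of_ciInf_lt hb
    exact hreg.eventually_MI_div_lt hv0 hM hc0 hc hρ hγ hm' hρ0 ha hL k hk

end GLM
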